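/- arXiv:1902.02818 — 2 statements merged into one kernel-verified Lean document; each statement's English description precedes it below -/
import Mathlib

section
/- Let α ∈ (0,1). There is a constant c > 0, depending only on α, such that for every pair (u,w) in the graph of the operator A = (d/dx)D^α one has c⁻¹ N_{(1+α)/2}(u) ≤ ‖I^{(1+α)/2}w‖_{L²(0,1)} ≤ c N_{(1+α)/2}(u); that is, on the domain of A the quantities ‖D^{(1+α)/2}u‖_{L²(0,1)} and the H^{(1+α)/2}(0,1)-norm of u are equivalent norms. -/
open MeasureTheory Set Filter

/-- Riemann–Liouville fractional integral `I^γ f` on `(0,1)` (complex-valued),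
with the convention `I⁰ f = f`. -/
noncomputable def fracInt (γ : ℝ) (f : ℝ → ℂ) (x : ℝ) : ℂ :=
  if γ = 0 then f x
  else ((Real.Gamma γ)⁻¹ : ℝ) • ∫ p in (0:ℝ)..x, (((x - p) ^ (γ - 1) : ℝ) : ℂ) * f p

/-- `f` is square integrable (and a.e. strongly measurable) on `(0,1)`: `f ∈ L²(0,1)`. -/
def SqIntOn (f : ℝ → ℂ) : Prop :=
  MeasureTheory.AEStronglyMeasurable f (MeasureTheory.volume.restrict (Set.Ioc (0:ℝ) 1)) ∧
  MeasureTheory.IntegrableOn (fun x => ‖f x‖ ^ 2) (Set.Ioc (0:ℝ) 1)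

/-- `(u, w)` lies in the graph of `A = (d/dx) D^α`:  `u` is absolutely continuous on `[0,1]`
with `u' = I^α w` a.e., `u(1) = 0`, and `w ∈ L²(0,1)`; then `A u = w`. -/
def InGraphA (α : ℝ) (u w : ℝ → ℂ) : Prop :=
  u 1 = 0 ∧ SqIntOn w ∧
  IntervalIntegrable (fracInt α w) MeasureTheory.volume 0 1 ∧
  ∀ x ∈ Set.Icc (0:ℝ) 1, u x = u 0 + ∫ t in (0:ℝ)..x, fracInt α w t

/-- Square of the `L²(0,1)` norm. -/
noncomputable def L2normSq (f : ℝ → ℂ) : ℝ := ∫ x in (0:ℝ)..1, ‖f x‖ ^ 2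

/-- Square of the Gagliardo seminorm of order `s` on `(0,1)`. -/
noncomputable def sobSeminormSq (s : ℝ) (u : ℝ → ℂ) : ℝ :=
  ∫ x in (0:ℝ)..1, ∫ y in (0:ℝ)..1, ‖u x - u y‖ ^ 2 / |x - y| ^ (1 + 2 * s)

/-- Square of the fractional Sobolev `H^s(0,1)` norm `N_s(u)`. -/
noncomputable def sobNormSq (s : ℝ) (u : ℝ → ℂ) : ℝ :=
  L2normSq u + sobSeminormSq s u

/-!
Write `s = (1 + α) / 2 ∈ (1/2, 1)` and let `k_a` be the gamma density
`x ^ (a - 1) * exp (-x) / Γ(a)` on `x > 0`. The densities form a semigroup under convolution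
(`ker_conv`), and the Fourier transform of `k_a` has modulus `|1 + 2πiξ| ^ (-a)`
(`norm_fourier_ker`). On `(0, 1]` the function `exp (-x) * (I^a w) x` is the convolution of
`exp (-·) * w * 1_{(0,1]}` with `k_a` (`fracInt_eq`); the exponential damping makes every kernel
integrable on the whole line, and since the kernels live on `x > 0` the values on `(0, 1]` depend
only on data in `(0, 1]` (`cv_truncate`). If `(u, w)` is in the graph, then `u - u 0` is the
primitive `v` of `I^α w`, and `exp (-x) * v x` is the convolution with `k_{α+1} = k_s * k_s`
(`prim_eq_cv`). Both inequalities therefore compare `v` with `g = I^s w`.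

All squared norms are handled as `ℝ≥0∞`-valued integrals. By Plancherel's theorem the squared
Gagliardo seminorm over `ℝ × ℝ` is a constant times `∫ |ξ| ^ (2s) |𝓕 V ξ|²` (`gag_eq`).

*Bound of `v` by `g`* (`direct_estimate`). On `(0, 1]`, `exp (-x) * v` is the convolution of
`exp (-·) * g * 1_{(0,1]}` with `k_s`, and this convolution gains `s` derivatives on the Fourier
side (`smoothing_gag`). Multiplication by the Lipschitz function `exp` is bounded for the seminorm
plus the `L²` norm (`gagOn_mul_le`).

*Bound of `g` by `v`* (`inverse_estimate`). The function `v x - v 1 * x` vanishes at both ends. As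
`s > 1/2`, the fractional Hardy inequality (`hardy`) controls `v 1`, the `L²` norm and the
seminorm over the line of the extension by zero, all by the seminorm of `v` on `(0, 1)`
(`gag_correct`). The damped extension is `F * k_1` for an explicit `F`, and `F * k_{1-s}` is bounded
in `L²` by the `H^s` norm of `F * k_1` (`unsmoothing`). On `(0, 1]` this gives `exp (-x) * g` up to
an explicit multiple of `v 1`.

Hardy's inequality is proved by absorbing a fraction of the weighted norm into itself, which
requires that norm to be finite; this is supplied by the Hölder continuity of exponent `1/2` of `v`
(`prim_holder`), a consequence of `I^α w ∈ L²`. Since `u` differs from `v` by the constant `v 1`,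
the `L²` norm of `u` is controlled by the seminorm as well.
-/

open scoped FourierTransform ENNReal Convolution

/-! ### Plancherel and the Gagliardo seminorm on the line -/

theorem lintegral_sq_eq_eLpNorm (f : ℝ → ℂ) :
    ∫⁻ x, ‖f x‖ₑ ^ 2 = eLpNorm f 2 volume ^ 2 := by
  rw [eLpNorm_eq_lintegral_rpow_enorm_toReal (by norm_num) (by norm_num)]
  simp only [ENNReal.toReal_ofNat, ENNReal.rpow_ofNat, one_div]
  rw [← ENNReal.rpow_natCast, ← ENNReal.rpow_mul]
  norm_num

/-- Plancherel's theorem for the Fourier integral of a function in `L¹ ∩ L²`. The `L²` Fourier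
transform agrees with the integral because both have the same pairing with test functions. -/
theorem plancherel {f : ℝ → ℂ} (h1 : Integrable f) (h2 : MemLp f 2) :
    ∫⁻ ξ, ‖𝓕 f ξ‖ₑ ^ 2 = ∫⁻ x, ‖f x‖ₑ ^ 2 := by
  have key : (𝓕 (h2.toLp f) : Lp ℂ 2 (volume : Measure ℝ)) =ᵐ[volume] 𝓕 f := by
    apply ae_eq_of_integral_contDiff_smul_eq
    · exact (Lp.memLp _).locallyIntegrable (by norm_num)
    · exact (VectorFourier.fourierIntegral_continuous Real.continuous_fourierChar
        (by fun_prop) h1).locallyIntegrable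
    · intro g hg hgc
      have hgc' : HasCompactSupport (fun x => (g x : ℂ)) := hgc.comp_left (g := fun x : ℝ => (x : ℂ)) rfl
      let φ : SchwartzMap ℝ ℂ := hgc'.toSchwartzMap (Complex.ofRealCLM.contDiff.comp hg)
      have e1 := congrArg (fun T => T φ) (Lp.fourier_toTemperedDistribution_eq (h2.toLp f))
      simp only [TemperedDistribution.fourier_apply, Lp.toTemperedDistribution_apply] at e1
      have e2 : ∫ x, (g x : ℝ) • (𝓕 (h2.toLp f) : Lp ℂ 2 (volume : Measure ℝ)) x =
          ∫ x, φ x • (𝓕 (h2.toLp f) : Lp ℂ 2 (volume : Measure ℝ)) x := rfl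
      have e3 : ∫ x, (g x : ℝ) • 𝓕 f x = ∫ x, φ x • 𝓕 f x := rfl
      rw [e2, e3, ← e1]
      have e4 : ∫ x, (𝓕 φ) x • (h2.toLp f : ℝ → ℂ) x = ∫ x, (𝓕 φ) x • f x := by
        apply integral_congr_ae
        filter_upwards [h2.coeFn_toLp] with x hx
        rw [hx]
      rw [e4]
      have e5 := VectorFourier.integral_fourierIntegral_smul_eq_flip (L := innerₗ ℝ)
        Real.continuous_fourierChar (by fun_prop) (φ.integrable (μ := volume)) h1
      rw [flip_innerₗ] at e5
      rw [SchwartzMap.fourier_coe]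
      exact e5
  rw [lintegral_sq_eq_eLpNorm, lintegral_sq_eq_eLpNorm, ← eLpNorm_congr_ae key]
  congr 1
  have h := Lp.norm_fourier_eq (h2.toLp f)
  have a := Lp.enorm_def (𝓕 (h2.toLp f) : Lp ℂ 2 (volume : Measure ℝ))
  have b := Lp.enorm_def (h2.toLp f)
  rw [← a, ← eLpNorm_congr_ae h2.coeFn_toLp, ← b]
  rw [← ofReal_norm, ← ofReal_norm, h]

/-- Square of the Gagliardo seminorm of order `s` over `A × B`, as an extended nonnegative number.
On the diagonal the numerator vanishes, so the value of the kernel there is irrelevant. -/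
noncomputable def gagOn (s : ℝ) (A B : Set ℝ) (f : ℝ → ℂ) : ℝ≥0∞ :=
  ∫⁻ x in A, ∫⁻ y in B, ‖f x - f y‖ₑ ^ 2 * ENNReal.ofReal (|x - y| ^ (-(1 + 2 * s)))

/-- The character `h ↦ exp (2πih)` of the real line. -/
noncomputable def ech (h : ℝ) : ℂ := Complex.exp ((2 * Real.pi * h : ℝ) * Complex.I)

theorem continuous_ech : Continuous ech := by unfold ech; fun_prop

theorem norm_ech (h : ℝ) : ‖ech h‖ = 1 := Complex.norm_exp_ofReal_mul_I _

/-- The constant `∫ |exp (2πih) - 1|² |h| ^ (-(1 + 2s)) dh` relating the Gagliardo seminorm of order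
`s` to the Fourier multiplier `|ξ| ^ s`. -/
noncomputable def gagConst (s : ℝ) : ℝ≥0∞ :=
  ∫⁻ h : ℝ, ENNReal.ofReal (|h| ^ (-(1 + 2 * s))) * ‖ech h - 1‖ₑ ^ 2

theorem fourier_comp_add (V : ℝ → ℂ) (h ξ : ℝ) :
    𝓕 (fun x => V (x + h)) ξ = ech (h * ξ) * 𝓕 V ξ := by
  have := congrFun (Fourier.fourierIntegral_comp_add_right Real.fourierChar volume V h) ξ
  simp only [Circle.smul_def, smul_eq_mul] at this
  have e : ∀ f : ℝ → ℂ, 𝓕 f ξ = Fourier.fourierIntegral Real.fourierChar volume f ξ := by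
    intro f
    rw [Real.fourier_eq]
    simp [Fourier.fourierIntegral, VectorFourier.fourierIntegral, mul_comm]
  rw [e, e, ech, ← Real.fourierChar_apply, ← this]
  rfl

/-- A translation by `h` multiplies the Fourier transform by a character, so Plancherel's theorem
evaluates the `L²` norm of a first difference. -/
theorem plancherel_diff {V : ℝ → ℂ} (h1 : Integrable V) (h2 : MemLp V 2) (h : ℝ) :
    ∫⁻ x, ‖V x - V (x + h)‖ₑ ^ 2 =
      ∫⁻ ξ, ‖ech (h * ξ) - 1‖ₑ ^ 2 * ‖𝓕 V ξ‖ₑ ^ 2 := by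
  have h1' : Integrable (fun x => V (x + h)) := h1.comp_add_right h
  have h2' : MemLp (fun x => V (x + h)) 2 :=
    h2.comp_measurePreserving (measurePreserving_add_right volume h)
  have := plancherel (h1.sub h1') (h2.sub h2')
  simp only [Pi.sub_apply] at this
  rw [← this]
  apply lintegral_congr
  intro ξ
  have e : 𝓕 (V - fun x => V (x + h)) ξ = 𝓕 V ξ - 𝓕 (fun x => V (x + h)) ξ := by
    simp only [Real.fourier_eq, Pi.sub_apply, smul_sub]
    exact integral_sub ((Real.fourierIntegral_convergent_iff ξ).2 h1)
      ((Real.fourierIntegral_convergent_iff ξ).2 h1')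
  rw [e, fourier_comp_add, ← mul_pow, ← enorm_mul, ← enorm_neg]
  congr 3
  ring

theorem lintegral_comp_mul (G : ℝ → ℝ≥0∞) {a : ℝ} (ha : a ≠ 0) :
    ∫⁻ h, G (a * h) = ENNReal.ofReal |a|⁻¹ * ∫⁻ h, G h := by
  have e : MeasurableEmbedding (fun h : ℝ => a * h) :=
    (Homeomorph.mulLeft₀ a ha).measurableEmbedding
  rw [← e.lintegral_map, Real.map_volume_mul_left ha, lintegral_smul_measure, abs_inv, smul_eq_mul]

/-- Fourier expression of the squared Gagliardo seminorm on the line: integrate `plancherel_diff`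
over `h` and scale `h` by `ξ`. -/
theorem gag_eq {s : ℝ} {V : ℝ → ℂ} (h1 : Integrable V) (h2 : MemLp V 2) :
    gagOn s univ univ V = gagConst s * ∫⁻ ξ, ENNReal.ofReal (|ξ| ^ (2 * s)) * ‖𝓕 V ξ‖ₑ ^ 2 := by
  have hVc : Continuous (𝓕 V) := VectorFourier.fourierIntegral_continuous
    Real.continuous_fourierChar (by fun_prop) h1
  have hm : AEMeasurable V volume := h1.aestronglyMeasurable.aemeasurable
  unfold gagOn
  simp only [Measure.restrict_univ]
  calc ∫⁻ x, ∫⁻ y, ‖V x - V y‖ₑ ^ 2 * ENNReal.ofReal (|x - y| ^ (-(1 + 2 * s)))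
      = ∫⁻ x, ∫⁻ h, ‖V x - V (x + h)‖ₑ ^ 2 * ENNReal.ofReal (|h| ^ (-(1 + 2 * s))) := by
        apply lintegral_congr
        intro x
        rw [← lintegral_add_left_eq_self _ x]
        simp
    _ = ∫⁻ h, ∫⁻ x, ‖V x - V (x + h)‖ₑ ^ 2 * ENNReal.ofReal (|h| ^ (-(1 + 2 * s))) := by
        apply lintegral_lintegral_swap
        simp only [Function.uncurry_def]
        apply AEMeasurable.fun_mul
        · apply AEMeasurable.pow_const
          apply AEMeasurable.enorm
          apply AEMeasurable.sub
          · exact hm.comp_fst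
          · exact hm.comp_quasiMeasurePreserving (quasiMeasurePreserving_add volume volume)
        · apply Measurable.aemeasurable
          fun_prop
    _ = ∫⁻ h, ∫⁻ ξ, ‖ech (h * ξ) - 1‖ₑ ^ 2 * ‖𝓕 V ξ‖ₑ ^ 2
          * ENNReal.ofReal (|h| ^ (-(1 + 2 * s))) := by
        apply lintegral_congr
        intro h
        rw [lintegral_mul_const' _ _ ENNReal.ofReal_ne_top, plancherel_diff h1 h2,
          lintegral_mul_const' _ _ ENNReal.ofReal_ne_top]
    _ = ∫⁻ ξ, ∫⁻ h, ‖ech (h * ξ) - 1‖ₑ ^ 2 * ‖𝓕 V ξ‖ₑ ^ 2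
          * ENNReal.ofReal (|h| ^ (-(1 + 2 * s))) := by
        apply lintegral_lintegral_swap
        apply Measurable.aemeasurable
        simp only [Function.uncurry_def]
        have := continuous_ech.measurable
        have := hVc.measurable
        fun_prop
    _ = _ := by
        rw [← lintegral_const_mul _ (by have := hVc.measurable; fun_prop)]
        apply lintegral_congr_ae
        filter_upwards [Measure.ae_ne volume (0 : ℝ)] with ξ hξ
        have e : ∀ h : ℝ, ‖ech (h * ξ) - 1‖ₑ ^ 2 * ‖𝓕 V ξ‖ₑ ^ 2
          * ENNReal.ofReal (|h| ^ (-(1 + 2 * s))) = (‖𝓕 V ξ‖ₑ ^ 2 * ENNReal.ofReal (|ξ| ^ (1 + 2 * s)))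
            * (fun h : ℝ => ENNReal.ofReal (|h| ^ (-(1 + 2 * s))) *
              ‖ech h - 1‖ₑ ^ 2) (ξ * h) := by
          intro h
          have : |h| ^ (-(1 + 2 * s)) = |ξ| ^ (1 + 2 * s) * |ξ * h| ^ (-(1 + 2 * s)) := by
            rw [abs_mul, Real.mul_rpow (abs_nonneg _) (abs_nonneg _), ← mul_assoc,
              ← Real.rpow_add (abs_pos.2 hξ)]
            simp
          rw [this, ENNReal.ofReal_mul (by positivity), mul_comm h ξ]
          ring
        simp_rw [e]
        rw [lintegral_const_mul' _ _ (ENNReal.mul_ne_top (by simp) ENNReal.ofReal_ne_top),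
          lintegral_comp_mul (fun h : ℝ => ENNReal.ofReal (|h| ^ (-(1 + 2 * s))) *
              ‖ech h - 1‖ₑ ^ 2) hξ]
        have : |ξ| ^ (2 * s) = |ξ| ^ (1 + 2 * s) * |ξ|⁻¹ := by
          rw [← Real.rpow_neg_one, ← Real.rpow_add (abs_pos.2 hξ)]
          congr 1; ring
        rw [this, ENNReal.ofReal_mul (by positivity), gagConst]
        ring

theorem lintegral_rpow_Ioc {r : ℝ} (hr : -1 < r) {b : ℝ} (hb : 0 ≤ b) :
    ∫⁻ x in Ioc 0 b, ENNReal.ofReal (x ^ r) = ENNReal.ofReal (b ^ (r + 1) / (r + 1)) := by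
  rw [← ofReal_integral_eq_lintegral_ofReal]
  · rw [← intervalIntegral.integral_of_le hb, integral_rpow (Or.inl hr),
      Real.zero_rpow (by linarith), sub_zero]
  · exact (intervalIntegrable_iff_integrableOn_Ioc_of_le hb).1
      (intervalIntegral.intervalIntegrable_rpow' hr)
  · filter_upwards [ae_restrict_mem measurableSet_Ioc] with x hx
    exact Real.rpow_nonneg hx.1.le _

theorem lintegral_rpow_Ioi {r : ℝ} (hr : r < -1) {b : ℝ} (hb : 0 < b) :
    ∫⁻ x in Ioi b, ENNReal.ofReal (x ^ r) = ENNReal.ofReal (-b ^ (r + 1) / (r + 1)) := by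
  rw [← ofReal_integral_eq_lintegral_ofReal]
  · rw [integral_Ioi_rpow_of_lt hr hb]
  · exact integrableOn_Ioi_rpow_of_lt hr hb
  · filter_upwards [ae_restrict_mem measurableSet_Ioi] with x hx
    exact Real.rpow_nonneg (hb.trans hx).le _

theorem lintegral_even (G : ℝ → ℝ≥0∞) (hG : ∀ x, G (-x) = G x) :
    ∫⁻ x, G x = 2 * ∫⁻ x in Ioi 0, G x := by
  rw [← lintegral_add_compl _ (measurableSet_Ioi (a := (0:ℝ))), two_mul]
  congr 1
  rw [compl_Ioi, ← (Measure.measurePreserving_neg (volume : Measure ℝ)).setLIntegral_comp_preimage_emb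
    (Homeomorph.neg ℝ).measurableEmbedding]
  simp only [hG]
  simp only [neg_preimage, Set.neg_Iic, neg_zero]
  exact setLIntegral_congr Ioi_ae_eq_Ici.symm

theorem norm_fourierChar_sub_one_le (h : ℝ) :
    ‖ech h - 1‖ ≤ 2 * Real.pi * |h| := by
  rw [ech]
  have := Real.norm_exp_I_mul_ofReal_sub_one_le (x := 2 * Real.pi * h)
  rw [mul_comm Complex.I] at this
  refine this.trans ?_
  rw [norm_mul, Real.norm_eq_abs, Real.norm_eq_abs, abs_of_pos (by positivity)]

/-- The numerator is `O(h²)` near zero (use `s < 1`) and bounded at infinity (use `0 < s`). -/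
theorem gagConst_ne_top {s : ℝ} (h0 : 0 < s) (h1 : s < 1) : gagConst s ≠ ∞ := by
  unfold gagConst
  rw [lintegral_even]
  swap
  · intro x
    have : ech (-x) - 1 = (starRingEnd ℂ) (ech x - 1) := by
      unfold ech
      rw [map_sub, ← Complex.exp_conj, map_mul, Complex.conj_ofReal, Complex.conj_I, map_one]
      congr 2; push_cast; ring
    rw [abs_neg, this, ← ofReal_norm, RCLike.norm_conj, ofReal_norm]
  rw [← Ioc_union_Ioi_eq_Ioi (zero_le_one (α := ℝ)),
    lintegral_union measurableSet_Ioi (by simp)]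
  apply ENNReal.mul_ne_top (by simp)
  apply ENNReal.add_ne_top.2 ⟨?_, ?_⟩
  · refine ne_top_of_le_ne_top ?_ (setLIntegral_mono' (g := fun h =>
      ENNReal.ofReal ((2 * Real.pi) ^ 2) * ENNReal.ofReal (h ^ (1 - 2 * s))) measurableSet_Ioc ?_)
    · rw [lintegral_const_mul' _ _ ENNReal.ofReal_ne_top, lintegral_rpow_Ioc (by linarith) (by simp)]
      exact ENNReal.mul_ne_top ENNReal.ofReal_ne_top ENNReal.ofReal_ne_top
    · intro h hh
      rw [← ENNReal.ofReal_mul (by positivity), ← ofReal_norm, ← ENNReal.ofReal_pow (by positivity),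
        ← ENNReal.ofReal_mul (by positivity)]
      apply ENNReal.ofReal_le_ofReal
      have := norm_fourierChar_sub_one_le h
      rw [abs_of_pos hh.1] at *
      calc h ^ (-(1 + 2 * s)) * ‖ech h - 1‖ ^ 2
          ≤ h ^ (-(1 + 2 * s)) * (2 * Real.pi * h) ^ 2 := by
            have := Real.rpow_nonneg hh.1.le (-(1 + 2 * s))
            gcongr
        _ = (2 * Real.pi) ^ 2 * (h ^ (-(1 + 2 * s)) * h ^ (2:ℝ)) := by
            rw [Real.rpow_two]; ring
        _ = _ := by rw [← Real.rpow_add hh.1]; congr 2; ring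
  · refine ne_top_of_le_ne_top ?_ (setLIntegral_mono' (g := fun h =>
      ENNReal.ofReal 4 * ENNReal.ofReal (h ^ (-(1 + 2 * s)))) measurableSet_Ioi ?_)
    · rw [lintegral_const_mul' _ _ ENNReal.ofReal_ne_top, lintegral_rpow_Ioi (by linarith) (by simp)]
      exact ENNReal.mul_ne_top ENNReal.ofReal_ne_top ENNReal.ofReal_ne_top
    · intro h hh
      have hh' : 0 < h := zero_lt_one.trans hh
      rw [← ENNReal.ofReal_mul (by positivity), ← ofReal_norm, ← ENNReal.ofReal_pow (by positivity),
        ← ENNReal.ofReal_mul (by positivity)]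
      apply ENNReal.ofReal_le_ofReal
      have : ‖ech h - 1‖ ≤ 2 := by
        refine (norm_sub_le _ _).trans ?_
        rw [norm_ech, norm_one]; norm_num
      rw [abs_of_pos hh']
      rw [mul_comm 4]
      gcongr
      nlinarith [norm_nonneg (ech h - 1)]

theorem gagConst_ne_zero (s : ℝ) : gagConst s ≠ 0 := by
  unfold gagConst
  have hm : Measurable (fun h : ℝ => ENNReal.ofReal (|h| ^ (-(1 + 2 * s))) *
      ‖ech h - 1‖ₑ ^ 2) := by
    have := continuous_ech.measurable
    fun_prop
  rw [Ne, lintegral_eq_zero_iff hm]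
  intro h
  have : volume (Ioo (0:ℝ) 1) = 0 := by
    refine measure_mono_null ?_ h
    intro x hx
    simp only [mem_compl_iff, Set.mem_ofPred_eq, Pi.zero_apply, mul_eq_zero, not_or]
    refine ⟨?_, ?_⟩
    · rw [ENNReal.ofReal_eq_zero, not_le]
      exact Real.rpow_pos_of_pos (abs_pos.2 hx.1.ne') _
    · rw [pow_eq_zero_iff two_ne_zero, enorm_eq_zero, sub_eq_zero, ech,
        Complex.exp_eq_one_iff]
      rintro ⟨n, hn⟩
      have h2 : (x : ℂ) = n := by
        have : (2 * Real.pi * Complex.I : ℂ) ≠ 0 := Complex.two_pi_I_ne_zero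
        apply mul_left_cancel₀ this
        push_cast at hn
        rw [mul_comm _ (n : ℂ), ← hn]; ring
      have h3 : x = n := by exact_mod_cast h2
      have a1 := hx.1; have a2 := hx.2
      rw [h3] at a1 a2
      have b1 : 0 < n := by exact_mod_cast a1
      have b2 : n < 1 := by exact_mod_cast a2
      omega
  simp at this

/-! ### Gamma densities and their Fourier transforms -/

/-- The gamma density `x ^ (a - 1) * exp (-x) / Γ(a)` on `x > 0`, extended by zero. -/
noncomputable def kerR (a x : ℝ) : ℝ :=
  if 0 < x then x ^ (a - 1) * Real.exp (-x) / Real.Gamma a else 0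

/-- The gamma density `kerR a` as a complex-valued function. -/
noncomputable def gker (a x : ℝ) : ℂ := (kerR a x : ℂ)

/-- Convolution of complex-valued functions on the line with respect to Lebesgue measure. -/
noncomputable def cv (f k : ℝ → ℂ) : ℝ → ℂ := f ⋆[ContinuousLinearMap.mul ℂ ℂ, volume] k

theorem cv_apply (f k : ℝ → ℂ) (x : ℝ) : cv f k x = ∫ t, f t * k (x - t) := rfl

theorem kerR_nonneg {a : ℝ} (ha : 0 < a) (x : ℝ) : 0 ≤ kerR a x := by
  unfold kerR
  split_ifs with h
  · have := Real.Gamma_pos_of_pos ha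
    positivity
  · rfl

theorem norm_ker {a : ℝ} (ha : 0 < a) (x : ℝ) : ‖gker a x‖ = kerR a x := by
  rw [gker, Complex.norm_real, Real.norm_of_nonneg (kerR_nonneg ha x)]

theorem kerR_measurable (a : ℝ) : Measurable (kerR a) := by
  unfold kerR
  exact Measurable.ite measurableSet_Ioi (by fun_prop) measurable_const

theorem ker_measurable (a : ℝ) : Measurable (gker a) :=
  Complex.measurable_ofReal.comp (kerR_measurable a)

theorem kerR_eq_indicator (a : ℝ) :
    kerR a = (Ioi 0).indicator fun x => x ^ (a - 1) * Real.exp (-x) / Real.Gamma a := by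
  ext x
  simp [kerR, indicator]

theorem kerR_integrable {a : ℝ} (ha : 0 < a) : Integrable (kerR a) := by
  rw [kerR_eq_indicator, integrable_indicator_iff measurableSet_Ioi]
  have h := (Real.GammaIntegral_convergent ha).div_const (Real.Gamma a)
  refine h.congr (ae_of_all _ fun x => ?_)
  simp only [mul_comm]

theorem ker_integrable {a : ℝ} (ha : 0 < a) : Integrable (gker a) := (kerR_integrable ha).ofReal

theorem integral_kerR {a : ℝ} (ha : 0 < a) : ∫ x, kerR a x = 1 := by
  rw [kerR_eq_indicator, integral_indicator measurableSet_Ioi]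
  simp_rw [mul_comm _ (Real.exp _)]
  rw [integral_div, ← Real.Gamma_eq_integral ha, div_self (Real.Gamma_pos_of_pos ha).ne']

/-- The singularity `x ^ (a - 1)` at zero is square integrable exactly when `a > 1/2`. -/
theorem ker_memLp {a : ℝ} (ha : 1 / 2 < a) : MemLp (gker a) 2 := by
  rw [memLp_two_iff_integrable_sq_norm (ker_measurable a).aestronglyMeasurable]
  have e : (fun x => ‖gker a x‖ ^ 2) = (Ioi 0).indicator fun x =>
      x ^ (a - 1) * Real.exp (-x) / Real.Gamma a * (x ^ (a - 1) * Real.exp (-x) / Real.Gamma a) := by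
    ext x
    rw [norm_ker (by linarith), kerR, indicator]
    simp only [mem_Ioi]
    split_ifs <;> ring
  rw [e, integrable_indicator_iff measurableSet_Ioi]
  have h1 := (Real.GammaIntegral_convergent (s := 2 * a - 1) (by linarith)).div_const
    (Real.Gamma a ^ 2)
  refine Integrable.mono' h1 (by fun_prop) ?_
  filter_upwards [ae_restrict_mem measurableSet_Ioi] with x hx
  have hx : 0 < x := hx
  have hG := Real.Gamma_pos_of_pos (show 0 < a by linarith)
  rw [Real.norm_of_nonneg (by positivity)]
  have e2 : x ^ (2 * a - 1 - 1) = x ^ (a - 1) * x ^ (a - 1) := by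
    rw [← Real.rpow_add hx]; congr 1; ring
  rw [e2]
  have : Real.exp (-x) ≤ 1 := Real.exp_le_one_iff.2 (by linarith)
  rw [div_mul_div_comm, ← pow_two (Real.Gamma a)]
  refine div_le_div_of_nonneg_right ?_ (by positivity)
  have hE := Real.exp_pos (-x)
  have hX := Real.rpow_pos_of_pos hx (a - 1)
  calc x ^ (a - 1) * Real.exp (-x) * (x ^ (a - 1) * Real.exp (-x))
      = Real.exp (-x) * (x ^ (a - 1) * x ^ (a - 1)) * Real.exp (-x) := by ring
    _ ≤ Real.exp (-x) * (x ^ (a - 1) * x ^ (a - 1)) * 1 := by gcongr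
    _ = _ := by ring

/-- The Beta integral over `(0, x)` with real exponents. -/
theorem beta_real {a b x : ℝ} (ha : 0 < a) (hb : 0 < b) (hx : 0 < x) :
    ∫ t in (0:ℝ)..x, t ^ (a - 1) * (x - t) ^ (b - 1) =
      x ^ (a + b - 1) * (Real.Gamma a * Real.Gamma b / Real.Gamma (a + b)) := by
  have h1 := Complex.betaIntegral_scaled a b hx
  have h2 := Complex.Gamma_mul_Gamma_eq_betaIntegral (s := a) (t := b) (by simpa) (by simpa)
  have h3 : Complex.betaIntegral a b =
      ((Real.Gamma a * Real.Gamma b / Real.Gamma (a + b) : ℝ) : ℂ) := by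
    have : Complex.Gamma (a + b) ≠ 0 := by
      have := (Real.Gamma_pos_of_pos (add_pos ha hb)).ne'
      rw [← Complex.ofReal_add, Complex.Gamma_ofReal]
      exact_mod_cast this
    push_cast
    rw [← Complex.Gamma_ofReal, ← Complex.Gamma_ofReal, ← Complex.Gamma_ofReal, h2]
    push_cast
    field_simp
  rw [h3] at h1
  apply Complex.ofReal_injective
  rw [← intervalIntegral.integral_ofReal]
  have e : ∫ t in (0:ℝ)..x, ((t ^ (a - 1) * (x - t) ^ (b - 1) : ℝ) : ℂ) =
      ∫ t in (0:ℝ)..x, (t : ℂ) ^ ((a : ℂ) - 1) * ((x : ℂ) - t) ^ ((b : ℂ) - 1) := by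
    apply intervalIntegral.integral_congr
    intro t ht
    rw [uIcc_of_le hx.le] at ht
    simp only
    rw [Complex.ofReal_mul, Complex.ofReal_cpow ht.1, Complex.ofReal_cpow (by linarith [ht.2])]
    push_cast; rfl
  rw [e, h1, Complex.ofReal_mul, Complex.ofReal_cpow hx.le]
  push_cast; rfl

/-- The semigroup law for gamma densities. -/
theorem kerR_conv {a b : ℝ} (ha : 0 < a) (hb : 0 < b) (x : ℝ) :
    ∫ t, kerR a t * kerR b (x - t) = kerR (a + b) x := by
  have z : ∀ t, t ∉ Ioo 0 x → kerR a t * kerR b (x - t) = 0 := by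
    intro t ht
    simp only [kerR]
    split_ifs with h1 h2
    · exact absurd ⟨h1, by linarith⟩ ht
    all_goals simp
  rw [← setIntegral_eq_integral_of_forall_compl_eq_zero (s := Ioo 0 x) z]
  by_cases hx : 0 < x
  · have e : ∀ t ∈ Ioo 0 x, kerR a t * kerR b (x - t) =
        Real.exp (-x) / (Real.Gamma a * Real.Gamma b) * (t ^ (a - 1) * (x - t) ^ (b - 1)) := by
      intro t ht
      rw [kerR, kerR, if_pos ht.1, if_pos (by linarith [ht.2])]
      have : Real.exp (-x) = Real.exp (-t) * Real.exp (-(x - t)) := by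
        rw [← Real.exp_add]; congr 1; ring
      rw [this, div_mul_div_comm]
      ring
    rw [setIntegral_congr_fun measurableSet_Ioo e, ← integral_Ioc_eq_integral_Ioo,
      ← intervalIntegral.integral_of_le hx.le, intervalIntegral.integral_const_mul,
      beta_real ha hb hx, kerR, if_pos hx]
    have := (Real.Gamma_pos_of_pos ha).ne'
    have := (Real.Gamma_pos_of_pos hb).ne'
    have := (Real.Gamma_pos_of_pos (add_pos ha hb)).ne'
    field_simp
  · rw [Ioo_eq_empty hx, kerR, if_neg hx]
    simp

theorem ker_conv {a b : ℝ} (ha : 0 < a) (hb : 0 < b) : cv (gker a) (gker b) = gker (a + b) := by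
  ext x
  rw [cv_apply, gker, ← kerR_conv ha hb, ← integral_complex_ofReal]
  simp [gker]

theorem cv_integrable {f k : ℝ → ℂ} (hf : Integrable f) (hk : Integrable k) :
    Integrable (cv f k) := hf.integrable_convolution _ hk

theorem fourier_cv {f k : ℝ → ℂ} (hf : Integrable f) (hk : Integrable k) (ξ : ℝ) :
    𝓕 (cv f k) ξ = 𝓕 f ξ * 𝓕 k ξ := Real.fourier_mul_convolution_eq hf hk ξ

/-- The convolution of two `L²` functions converges absolutely at every point, by Cauchy–Schwarz. -/
theorem mul_integrable_of_memLp {f k : ℝ → ℂ} (hf : MemLp f 2) (hk : MemLp k 2) (x : ℝ) :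
    Integrable (fun t => f t * k (x - t)) := by
  have : MemLp (fun t => k (x - t)) 2 :=
    hk.comp_measurePreserving (Measure.measurePreserving_sub_left volume x)
  exact hf.integrable_mul this

/-- Successive convolutions with gamma densities compose at every point. The hypothesis
`1/2 < a + b` makes `gker (a + b)` square integrable, so that associativity holds everywhere and not
only almost everywhere. -/
theorem cv_ker_ker {f : ℝ → ℂ} (h1 : Integrable f) (h2 : MemLp f 2) {a b : ℝ} (ha : 0 < a)
    (hb : 0 < b) (hab : 1 / 2 < a + b) : cv (cv f (gker a)) (gker b) = cv f (gker (a + b)) := by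
  rw [← ker_conv ha hb]
  ext x
  refine convolution_assoc _ _ _ _ (fun x y z => mul_assoc x y z) h1.aestronglyMeasurable
    (ker_measurable a).aestronglyMeasurable (ker_measurable b).aestronglyMeasurable
    (h1.ae_convolution_exists _ (ker_integrable ha))
    ((ker_integrable ha).norm.ae_convolution_exists _ (ker_integrable hb).norm) ?_
  have e : ((fun x => ‖gker a x‖) ⋆[ContinuousLinearMap.mul ℝ ℝ, volume] fun x => ‖gker b x‖) =
      fun x => ‖gker (a + b) x‖ := by
    ext y
    simp only [norm_ker ha, norm_ker hb, norm_ker (add_pos ha hb)]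
    exact kerR_conv ha hb y
  rw [e]
  have := (mul_integrable_of_memLp h2 (ker_memLp hab) x).norm
  simpa [ConvolutionExistsAt] using this

theorem fourier_ker_one_add {a : ℝ} (ha : 0 < a) (ξ : ℝ) :
    𝓕 (gker (a + 1)) ξ = 𝓕 (gker a) ξ * 𝓕 (gker 1) ξ := by
  rw [← ker_conv ha one_pos, fourier_cv (ker_integrable ha) (ker_integrable one_pos)]

theorem fourier_ker_one (ξ : ℝ) : 𝓕 (gker 1) ξ = (1 + 2 * Real.pi * ξ * Complex.I)⁻¹ := by
  rw [Real.fourier_real_eq_integral_exp_smul]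
  have e : (fun v : ℝ => Complex.exp (↑(-2 * Real.pi * v * ξ) * Complex.I) • gker 1 v) =
      (Ioi 0).indicator fun v : ℝ => Complex.exp (-(1 + 2 * Real.pi * ξ * Complex.I) * v) := by
    ext v
    simp only [gker, kerR, indicator, mem_Ioi]
    split_ifs with h
    · simp only [sub_self, Real.rpow_zero, Real.Gamma_one, one_mul, div_one, smul_eq_mul]
      rw [Complex.ofReal_exp, ← Complex.exp_add]
      congr 1; push_cast; ring
    · simp
  rw [e, integral_indicator measurableSet_Ioi, integral_exp_mul_complex_Ioi (by simp)]
  rw [Complex.ofReal_zero, mul_zero, Complex.exp_zero, neg_div_neg_eq, one_div]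

/-- The identity `x * k_a x = a * k_{a+1} x` turns into a first-order linear differential equation
for the Fourier transform of `k_a`. -/
theorem hasDerivAt_fourier_ker {a : ℝ} (ha : 0 < a) (ξ : ℝ) :
    HasDerivAt (𝓕 (gker a))
      (-(2 * Real.pi * Complex.I * a) * (𝓕 (gker a) ξ * (1 + 2 * Real.pi * ξ * Complex.I)⁻¹)) ξ := by
  have e : ∀ x : ℝ, (x : ℂ) * gker a x = a * gker (a + 1) x := by
    intro x
    simp only [gker, kerR]
    split_ifs with h
    · rw [← Complex.ofReal_mul, ← Complex.ofReal_mul]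
      congr 1
      rw [Real.Gamma_add_one ha.ne', add_sub_cancel_right]
      have : x ^ a = x * x ^ (a - 1) := by
        rw [Real.rpow_sub_one h.ne']; field_simp
      rw [this]
      have := (Real.Gamma_pos_of_pos ha).ne'
      field_simp
    · simp
  have hi : Integrable (fun x : ℝ => x • gker a x) := by
    simp only [Complex.real_smul, e]
    exact (ker_integrable (by linarith)).const_mul _
  have h := Real.hasDerivAt_fourier (ker_integrable ha) hi ξ
  refine h.congr_deriv (Eq.symm ?_)
  rw [← fourier_ker_one, ← fourier_ker_one_add ha, Real.fourier_eq, Real.fourier_eq,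
    ← integral_const_mul]
  congr 1
  ext x
  simp only [Circle.smul_def, smul_eq_mul]
  linear_combination (2 * Real.pi * Complex.I) * (Real.fourierChar (-inner ℝ x ξ) : ℂ) * e x

/-- The differential equation of `hasDerivAt_fourier_ker` shows that
`𝓕 (gker a) ξ * (1 + 2πiξ) ^ a` is constant; its value at zero is `1`. -/
theorem norm_fourier_ker {a : ℝ} (ha : 0 < a) (ξ : ℝ) :
    ‖𝓕 (gker a) ξ‖ = ‖1 + 2 * Real.pi * ξ * Complex.I‖ ^ (-a) := by
  let z : ℝ → ℂ := fun ξ => 1 + 2 * Real.pi * ξ * Complex.I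
  have hz : ∀ ξ, z ξ ∈ Complex.slitPlane := fun ξ => by left; simp [z]
  have hz0 : ∀ ξ, z ξ ≠ 0 := fun ξ => Complex.slitPlane_ne_zero (hz ξ)
  have hd : ∀ ξ, HasDerivAt z (2 * Real.pi * Complex.I) ξ := by
    intro ξ
    have := ((Complex.ofRealCLM.hasDerivAt (x := ξ)).const_mul (2 * Real.pi : ℂ)).mul_const
      Complex.I |>.const_add 1
    simpa [z] using this
  let H : ℝ → ℂ := fun ξ => 𝓕 (gker a) ξ * z ξ ^ (a : ℂ)
  have hH : ∀ ξ, HasDerivAt H 0 ξ := by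
    intro ξ
    have h2 : HasDerivAt (fun ξ => z ξ ^ (a : ℂ)) (a * z ξ ^ ((a : ℂ) - 1) * (2 * Real.pi * Complex.I)) ξ :=
      (Complex.hasStrictDerivAt_cpow_const (hz ξ)).hasDerivAt.comp ξ (hd ξ)
    have := (hasDerivAt_fourier_ker ha ξ).mul h2
    refine this.congr_deriv (Eq.symm ?_)
    rw [Complex.cpow_sub _ _ (hz0 ξ), Complex.cpow_one]
    change _ = -(2 * Real.pi * Complex.I * a) * (𝓕 (gker a) ξ * (z ξ)⁻¹) * _ + _
    field_simp
    ring
  have hc := is_const_of_deriv_eq_zero (fun ξ => (hH ξ).differentiableAt) (fun ξ => (hH ξ).deriv) ξ 0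
  have h0 : H 0 = 1 := by
    simp only [H, z]
    rw [Real.fourier_eq]
    simp [gker]
    rw [integral_complex_ofReal, integral_kerR ha]
    simp
  rw [h0] at hc
  have := congrArg norm hc
  simp only [H, norm_mul, norm_one] at this
  rw [Complex.norm_cpow_of_ne_zero (hz0 ξ)] at this
  simp only [Complex.ofReal_im, mul_zero, Real.exp_zero, div_one, Complex.ofReal_re] at this
  rw [Real.rpow_neg (norm_nonneg _)]
  exact eq_inv_of_mul_eq_one_left this

/-! ### Hardy inequality -/

theorem enorm_add_sq_le (a b : ℂ) : ‖a + b‖ₑ ^ 2 ≤ 2 * ‖a‖ₑ ^ 2 + 2 * ‖b‖ₑ ^ 2 := by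
  have h : ‖a + b‖₊ ^ 2 ≤ 2 * ‖a‖₊ ^ 2 + 2 * ‖b‖₊ ^ 2 := by
    rw [← NNReal.coe_le_coe]
    push_cast
    have := norm_add_le a b
    nlinarith [norm_nonneg (a + b), sq_nonneg (‖a‖ - ‖b‖)]
  simp only [enorm_eq_nnnorm]
  exact_mod_cast h

theorem enorm_sub_sq_le (a b : ℂ) : ‖a - b‖ₑ ^ 2 ≤ 2 * ‖a‖ₑ ^ 2 + 2 * ‖b‖ₑ ^ 2 := by
  simpa [sub_eq_add_neg] using enorm_add_sq_le a (-b)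

theorem setLIntegral_le_lintegral_of_le {A : Set ℝ} (hA : MeasurableSet A) {F G : ℝ → ℝ≥0∞}
    (h : ∀ x ∈ A, F x ≤ G x) : ∫⁻ x in A, F x ≤ ∫⁻ x, G x :=
  (setLIntegral_mono' hA h).trans (setLIntegral_le_lintegral _ _)

/-- Change of variables `y = a * x` in an upper bound of a set integral. -/
theorem setLIntegral_le_dilate {A B : Set ℝ} (hA : MeasurableSet A) (hB : MeasurableSet B)
    {F G : ℝ → ℝ≥0∞} {a : ℝ} (ha : 0 < a) {c : ℝ≥0∞} (hc : c ≠ ∞)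
    (h : ∀ x ∈ A, a * x ∈ B ∧ F x ≤ c * G (a * x)) :
    ∫⁻ x in A, F x ≤ ENNReal.ofReal a⁻¹ * c * ∫⁻ y in B, G y := by
  calc ∫⁻ x in A, F x ≤ ∫⁻ x, c * B.indicator G (a * x) := by
        refine setLIntegral_le_lintegral_of_le hA fun x hx => ?_
        rw [indicator_of_mem (h x hx).1]
        exact (h x hx).2
    _ = _ := by
        rw [lintegral_const_mul' _ _ hc, lintegral_comp_mul _ ha.ne', lintegral_indicator hB,
          abs_of_pos ha, ← mul_assoc, mul_comm c]

theorem lintegral_reflect (F : ℝ → ℝ≥0∞) :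
    ∫⁻ x in Ioc (0:ℝ) 1, F (1 - x) = ∫⁻ x in Ioc (0:ℝ) 1, F x := by
  rw [setLIntegral_congr (Ioo_ae_eq_Ioc (a := (0:ℝ)) (b := 1)).symm,
    setLIntegral_congr (Ioo_ae_eq_Ioc (a := (0:ℝ)) (b := 1)).symm,
    ← lintegral_indicator measurableSet_Ioo, ← lintegral_indicator measurableSet_Ioo,
    ← lintegral_sub_left_eq_self _ (1:ℝ)]
  congr 1
  ext x
  simp only [indicator, mem_Ioo]
  simp only [sub_pos, sub_lt_self_iff, sub_sub_cancel]
  congr 1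
  exact propext and_comm

theorem gagOn_reflect (s : ℝ) (f : ℝ → ℂ) :
    gagOn s (Ioc 0 1) (Ioc 0 1) (fun x => f (1 - x)) = gagOn s (Ioc 0 1) (Ioc 0 1) f := by
  unfold gagOn
  rw [← lintegral_reflect (fun x => ∫⁻ y in Ioc (0:ℝ) 1, ‖f x - f y‖ₑ ^ 2 * _)]
  congr 1
  ext x
  rw [← lintegral_reflect (fun y => ‖f (1 - x) - f y‖ₑ ^ 2 * _)]
  congr 1
  ext y
  rw [show (1 - x - (1 - y)) = -(x - y) by ring, abs_neg]

theorem gagOn_congr (s : ℝ) {A B : Set ℝ} (hA : MeasurableSet A) (hB : MeasurableSet B)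
    {f g : ℝ → ℂ} (h : ∀ x ∈ A, f x = g x) (h' : ∀ x ∈ B, f x = g x) :
    gagOn s A B f = gagOn s A B g := by
  unfold gagOn
  refine setLIntegral_congr_fun hA fun x hx => setLIntegral_congr_fun hB fun y hy => ?_
  simp only [h x hx, h' y hy]

/-- The kernel `|x - y| ^ (-(1 + 2s))` is integrable against the squared increment of a Lipschitz
function. -/
theorem lintegral_abs_rpow_le {s : ℝ} (hs : s < 1) {x : ℝ} (hx : x ∈ Ioc (0:ℝ) 1) :
    ∫⁻ y in Ioc (0:ℝ) 1, ENNReal.ofReal (|x - y| ^ (1 - 2 * s)) ≤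
      2 * ENNReal.ofReal (1 / (2 - 2 * s)) := by
  calc ∫⁻ y in Ioc (0:ℝ) 1, ENNReal.ofReal (|x - y| ^ (1 - 2 * s))
      ≤ ∫⁻ y, (Icc (-1) 1).indicator (fun h : ℝ => ENNReal.ofReal (|h| ^ (1 - 2 * s))) (x - y) := by
        refine setLIntegral_le_lintegral_of_le measurableSet_Ioc fun y hy => ?_
        rw [indicator_of_mem]
        exact ⟨by linarith [hy.2, hx.1], by linarith [hy.1, hx.2]⟩
    _ = 2 * ∫⁻ h in Ioi 0, (Icc (-1) 1).indicator
          (fun h : ℝ => ENNReal.ofReal (|h| ^ (1 - 2 * s))) h := by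
        rw [lintegral_sub_left_eq_self _ x, lintegral_even]
        intro h
        simp only [indicator, mem_Icc, abs_neg]
        congr 1
        rw [eq_iff_iff]
        constructor <;> rintro ⟨_, _⟩ <;> constructor <;> linarith
    _ ≤ 2 * ∫⁻ h in Ioc 0 1, ENNReal.ofReal (h ^ (1 - 2 * s)) := by
        refine mul_le_mul_right ?_ 2
        rw [setLIntegral_indicator measurableSet_Icc]
        refine (lintegral_mono_set (t := Ioc 0 1) fun h hh => ⟨hh.2, hh.1.2⟩).trans ?_
        refine setLIntegral_mono' measurableSet_Ioc fun h hh => ?_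
        rw [abs_of_pos hh.1]
    _ = 2 * ENNReal.ofReal (1 / (2 - 2 * s)) := by
        rw [lintegral_rpow_Ioc (by linarith) zero_le_one, Real.one_rpow]
        congr 3; ring

/-- Multiplication by a bounded Lipschitz function `φ`. -/
theorem gagOn_mul_le {s : ℝ} (hs : s < 1) {f φ : ℝ → ℂ} {M L : ℝ}
    (hf : AEMeasurable f (volume.restrict (Ioc 0 1)))
    (hM : ∀ x ∈ Ioc (0:ℝ) 1, ‖φ x‖ ≤ M)
    (hL : ∀ x ∈ Ioc (0:ℝ) 1, ∀ y ∈ Ioc (0:ℝ) 1, ‖φ x - φ y‖ ≤ L * |x - y|) :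
    gagOn s (Ioc 0 1) (Ioc 0 1) (fun x => φ x * f x) ≤
      2 * ENNReal.ofReal M ^ 2 * gagOn s (Ioc 0 1) (Ioc 0 1) f +
      2 * ENNReal.ofReal L ^ 2 * (2 * ENNReal.ofReal (1 / (2 - 2 * s))) *
        ∫⁻ x in Ioc (0:ℝ) 1, ‖f x‖ₑ ^ 2 := by
  unfold gagOn
  calc ∫⁻ x in Ioc (0:ℝ) 1, ∫⁻ y in Ioc (0:ℝ) 1,
        ‖φ x * f x - φ y * f y‖ₑ ^ 2 * ENNReal.ofReal (|x - y| ^ (-(1 + 2 * s)))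
      ≤ ∫⁻ x in Ioc (0:ℝ) 1, ∫⁻ y in Ioc (0:ℝ) 1,
        (2 * ENNReal.ofReal M ^ 2 * (‖f x - f y‖ₑ ^ 2 * ENNReal.ofReal (|x - y| ^ (-(1 + 2 * s))))
        + 2 * ENNReal.ofReal L ^ 2 * ‖f x‖ₑ ^ 2 * ENNReal.ofReal (|x - y| ^ (1 - 2 * s))) := by
        refine setLIntegral_mono' measurableSet_Ioc fun x hx =>
          setLIntegral_mono' measurableSet_Ioc fun y hy => ?_
        rw [show φ x * f x - φ y * f y = φ y * (f x - f y) + (φ x - φ y) * f x by ring]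
        by_cases hxy : x = y
        · subst hxy; simp
        have h1 : ‖φ y‖ₑ ≤ ENNReal.ofReal M := by
          rw [← ofReal_norm]; exact ENNReal.ofReal_le_ofReal (hM y hy)
        have h2 : ‖φ x - φ y‖ₑ ≤ ENNReal.ofReal L * ENNReal.ofReal |x - y| := by
          rw [← ofReal_norm, ← ENNReal.ofReal_mul' (abs_nonneg _)]
          exact ENNReal.ofReal_le_ofReal (hL x hx y hy)
        have hp : 0 < |x - y| := abs_pos.2 (sub_ne_zero.2 hxy)
        have h3 : ENNReal.ofReal (|x - y| ^ (1 - 2 * s)) =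
            ENNReal.ofReal |x - y| ^ 2 * ENNReal.ofReal (|x - y| ^ (-(1 + 2 * s))) := by
          rw [← ENNReal.ofReal_pow hp.le, ← ENNReal.ofReal_mul (by positivity),
            ← Real.rpow_natCast, ← Real.rpow_add hp]
          congr 2; push_cast; ring
        calc _ ≤ (2 * ‖φ y * (f x - f y)‖ₑ ^ 2 + 2 * ‖(φ x - φ y) * f x‖ₑ ^ 2) *
              ENNReal.ofReal (|x - y| ^ (-(1 + 2 * s))) := by
              gcongr; exact enorm_add_sq_le _ _
          _ ≤ (2 * (ENNReal.ofReal M * ‖f x - f y‖ₑ) ^ 2 +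
              2 * (ENNReal.ofReal L * ENNReal.ofReal |x - y| * ‖f x‖ₑ) ^ 2) *
              ENNReal.ofReal (|x - y| ^ (-(1 + 2 * s))) := by
              rw [enorm_mul, enorm_mul]; gcongr
          _ = _ := by rw [h3]; ring
    _ ≤ ∫⁻ x in Ioc (0:ℝ) 1, ((2 * ENNReal.ofReal M ^ 2 * ∫⁻ y in Ioc (0:ℝ) 1,
        (‖f x - f y‖ₑ ^ 2 * ENNReal.ofReal (|x - y| ^ (-(1 + 2 * s)))))
        + 2 * ENNReal.ofReal L ^ 2 * (2 * ENNReal.ofReal (1 / (2 - 2 * s))) * ‖f x‖ₑ ^ 2) := by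
        refine setLIntegral_mono' measurableSet_Ioc fun x hx => ?_
        rw [lintegral_add_right _ (by fun_prop), lintegral_const_mul' _ _ (by finiteness),
          lintegral_const_mul' _ _ (by finiteness)]
        refine add_le_add le_rfl ?_
        calc _ ≤ 2 * ENNReal.ofReal L ^ 2 * ‖f x‖ₑ ^ 2 * (2 * ENNReal.ofReal (1 / (2 - 2 * s))) := by
              gcongr; exact lintegral_abs_rpow_le hs hx
          _ = _ := by ring
    _ = _ := by
        rw [lintegral_add_right' _ ((hf.enorm.pow_const 2).const_mul _),
          lintegral_const_mul' _ _ (by finiteness), lintegral_const_mul' _ _ (by finiteness)]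

/-- Fractional Hardy inequality for functions vanishing at zero. For `l` small the weighted norm of
`f (l * ·)` is at most half that of `f`, so the norm of `f` is controlled by that of `f - f (l * ·)`.
Averaging over `l ∈ (0, l₀)` produces the Gagliardo seminorm. The Hölder bound serves only to make
the weighted norm finite, and the constant does not depend on it. -/
theorem hardy {s : ℝ} (h0 : 1 / 2 < s) (h1 : s < 1) : ∃ C : ℝ≥0∞, C ≠ ∞ ∧
    ∀ (f : ℝ → ℂ) (M : ℝ), Measurable f → (∀ x ∈ Ioc (0:ℝ) 1, ‖f x‖ ≤ M * x ^ (1 / 2 : ℝ)) →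
    ∫⁻ x in Ioc (0:ℝ) 1, ‖f x‖ₑ ^ 2 * ENNReal.ofReal (x ^ (-(2 * s))) ≤
      C * gagOn s (Ioc 0 1) (Ioc 0 1) f := by
  -- dilation factors below `l₀` contract the weighted norm by a factor at least four
  set l₀ : ℝ := (1 / 4 : ℝ) ^ (1 / (2 * s - 1)) with hl
  have hs : 0 < 2 * s - 1 := by linarith
  have l0 : 0 < l₀ := by positivity
  have l1 : l₀ < 1 := Real.rpow_lt_one (by norm_num) (by norm_num) (by positivity)
  have l4 : l₀ ^ (2 * s - 1) = 1 / 4 := by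
    rw [hl, ← Real.rpow_mul (by norm_num), one_div_mul_cancel hs.ne', Real.rpow_one]
  refine ⟨4 / ENNReal.ofReal l₀, ENNReal.div_ne_top (by norm_num) (by simpa using l0), ?_⟩
  intro f M hf hM
  set H := ∫⁻ x in Ioc (0:ℝ) 1, ‖f x‖ₑ ^ 2 * ENNReal.ofReal (x ^ (-(2 * s))) with hH
  have hfin : H ≠ ∞ := by
    refine ne_top_of_le_ne_top (b := ENNReal.ofReal (M ^ 2) * ∫⁻ x in Ioc (0:ℝ) 1,
      ENNReal.ofReal (x ^ (1 - 2 * s))) ?_ ?_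
    · rw [lintegral_rpow_Ioc (by linarith) zero_le_one]; finiteness
    · rw [← lintegral_const_mul' _ _ (by finiteness)]
      refine setLIntegral_mono' measurableSet_Ioc fun x hx => ?_
      have hx0 := hx.1
      rw [← ofReal_norm, ← ENNReal.ofReal_pow (norm_nonneg _),
        ← ENNReal.ofReal_mul (by positivity), ← ENNReal.ofReal_mul (by positivity)]
      apply ENNReal.ofReal_le_ofReal
      calc _ ≤ (M * x ^ (1 / 2 : ℝ)) ^ 2 * x ^ (-(2 * s)) := by gcongr; exact hM x hx
        _ = M ^ 2 * (x ^ (1 / 2 : ℝ) * x ^ (1 / 2 : ℝ) * x ^ (-(2 * s))) := by ring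
        _ = _ := by
          rw [← Real.rpow_add hx0, ← Real.rpow_add hx0]; congr 2; ring
  let D : ℝ → ℝ → ℝ≥0∞ := fun x l => ‖f x - f (l * x)‖ₑ ^ 2 * ENNReal.ofReal (x ^ (-(2 * s)))
  have hDm : Measurable (Function.uncurry D) := by unfold D Function.uncurry; fun_prop
  have step : ∀ l ∈ Ioc 0 l₀, H ≤ 4 * ∫⁻ x in Ioc (0:ℝ) 1, D x l := by
    intro l hl
    have hl1 : l < 1 := hl.2.trans_lt l1
    have A : ∫⁻ x in Ioc (0:ℝ) 1, ‖f (l * x)‖ₑ ^ 2 * ENNReal.ofReal (x ^ (-(2 * s))) ≤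
        ENNReal.ofReal (1 / 4) * H := by
      calc _ ≤ ENNReal.ofReal l⁻¹ * ENNReal.ofReal (l ^ (2 * s)) * H := by
            refine setLIntegral_le_dilate measurableSet_Ioc measurableSet_Ioc hl.1
              ENNReal.ofReal_ne_top fun x hx => ⟨⟨mul_pos hl.1 hx.1, ?_⟩, le_of_eq ?_⟩
            · nlinarith [hx.1, hx.2, hl.1]
            · rw [mul_left_comm, ← ENNReal.ofReal_mul (Real.rpow_nonneg hl.1.le _),
                Real.mul_rpow hl.1.le hx.1.le, ← mul_assoc, ← Real.rpow_add hl.1,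
                add_neg_cancel, Real.rpow_zero, one_mul]
        _ = ENNReal.ofReal (l ^ (2 * s - 1)) * H := by
            rw [← ENNReal.ofReal_mul (inv_nonneg.2 hl.1.le), Real.rpow_sub_one hl.1.ne',
              div_eq_inv_mul]
        _ ≤ _ := by
            rw [← l4]
            exact mul_le_mul_left (ENNReal.ofReal_le_ofReal
              (Real.rpow_le_rpow hl.1.le hl.2 hs.le)) _
    have B : H ≤ 2 * (∫⁻ x in Ioc (0:ℝ) 1, D x l) + 2 * (ENNReal.ofReal (1 / 4) * H) := by
      calc H ≤ ∫⁻ x in Ioc (0:ℝ) 1, (2 * D x l +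
            2 * (‖f (l * x)‖ₑ ^ 2 * ENNReal.ofReal (x ^ (-(2 * s))))) := by
            refine lintegral_mono fun x => ?_
            have := enorm_add_sq_le (f x - f (l * x)) (f (l * x))
            rw [sub_add_cancel] at this
            calc _ ≤ (2 * ‖f x - f (l * x)‖ₑ ^ 2 + 2 * ‖f (l * x)‖ₑ ^ 2) *
                  ENNReal.ofReal (x ^ (-(2 * s))) := by gcongr
              _ = _ := by ring
        _ = 2 * (∫⁻ x in Ioc (0:ℝ) 1, D x l) + 2 * ∫⁻ x in Ioc (0:ℝ) 1,
              ‖f (l * x)‖ₑ ^ 2 * ENNReal.ofReal (x ^ (-(2 * s))) := by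
            rw [lintegral_add_right _ (by fun_prop), lintegral_const_mul' _ _ (by finiteness),
              lintegral_const_mul' _ _ (by finiteness)]
        _ ≤ _ := by gcongr
    by_cases hI : ∫⁻ x in Ioc (0:ℝ) 1, D x l = ∞
    · rw [hI]; simp
    rw [← ENNReal.toReal_le_toReal hfin (by finiteness)] at B ⊢
    rw [ENNReal.toReal_add (by finiteness) (by finiteness)] at B
    simp only [ENNReal.toReal_mul, ENNReal.toReal_ofNat] at B ⊢
    rw [ENNReal.toReal_ofReal (by norm_num)] at B
    linarith
  have key : ENNReal.ofReal l₀ * H ≤ 4 * gagOn s (Ioc 0 1) (Ioc 0 1) f := by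
    calc ENNReal.ofReal l₀ * H = ∫⁻ l in Ioc 0 l₀, H := by
          rw [setLIntegral_const, Real.volume_Ioc, sub_zero, mul_comm]
      _ ≤ ∫⁻ l in Ioc 0 l₀, 4 * ∫⁻ x in Ioc (0:ℝ) 1, D x l :=
          setLIntegral_mono' measurableSet_Ioc step
      _ = 4 * ∫⁻ l in Ioc 0 l₀, ∫⁻ x in Ioc (0:ℝ) 1, D x l :=
          lintegral_const_mul' _ _ (by finiteness)
      _ = 4 * ∫⁻ x in Ioc (0:ℝ) 1, ∫⁻ l in Ioc 0 l₀, D x l := by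
          rw [lintegral_lintegral_swap]
          exact (hDm.comp measurable_swap).aemeasurable
      _ ≤ _ := by
          unfold gagOn
          gcongr 4 * ?_
          refine setLIntegral_mono' measurableSet_Ioc fun x hx => ?_
          have hx0 : 0 < x := hx.1
          calc ∫⁻ l in Ioc 0 l₀, D x l
              ≤ ENNReal.ofReal x⁻¹ * ENNReal.ofReal x * ∫⁻ y in Ioc (0:ℝ) 1,
                ‖f x - f y‖ₑ ^ 2 * ENNReal.ofReal (|x - y| ^ (-(1 + 2 * s))) := by
                refine setLIntegral_le_dilate measurableSet_Ioc measurableSet_Ioc hx0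
                  ENNReal.ofReal_ne_top fun l hl => ?_
                have hl1 : l < 1 := hl.2.trans_lt l1
                refine ⟨⟨mul_pos hx0 hl.1, by nlinarith [hx.2, hl.1]⟩, ?_⟩
                simp only [D, mul_comm l x]
                rw [mul_left_comm, ← ENNReal.ofReal_mul hx0.le]
                refine mul_le_mul_right (ENNReal.ofReal_le_ofReal ?_) _
                have e : |x - x * l| = x * (1 - l) := by
                  rw [abs_of_nonneg (by nlinarith)]; ring
                rw [e]
                calc x ^ (-(2 * s)) = x * x ^ (-(1 + 2 * s)) := by
                      rw [show -(2 * s) = -(1 + 2 * s) + 1 by ring, Real.rpow_add_one hx0.ne',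
                        mul_comm]
                  _ ≤ _ := by
                      refine mul_le_mul_of_nonneg_left ?_ hx0.le
                      apply Real.rpow_le_rpow_of_nonpos
                      · exact mul_pos hx0 (by linarith)
                      · nlinarith [hl.1]
                      · linarith
            _ = _ := by
                rw [← ENNReal.ofReal_mul (inv_nonneg.2 hx0.le), inv_mul_cancel₀ hx0.ne',
                  ENNReal.ofReal_one, one_mul]
  rw [ENNReal.mul_div_right_comm.symm, ENNReal.le_div_iff_mul_le (by left; simpa using l0)
    (by left; finiteness), mul_comm]
  exact key

/-! ### Extension by zero -/

theorem one_le_ofReal_rpow_neg {r x : ℝ} (hr : 0 ≤ r) (h0 : 0 < x) (h1 : x ≤ 1) :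
    1 ≤ ENNReal.ofReal (x ^ (-r)) := by
  rw [← ENNReal.ofReal_one]
  exact ENNReal.ofReal_le_ofReal (Real.one_le_rpow_of_pos_of_le_one_of_nonpos h0 h1 (by linarith))

theorem abs_exp_sub_exp_le {b x y : ℝ} (hx : x ≤ b) (hy : y ≤ b) :
    |Real.exp x - Real.exp y| ≤ Real.exp b * |x - y| := by
  wlog h : y ≤ x generalizing x y
  · rw [abs_sub_comm, abs_sub_comm x]
    exact this hy hx (le_of_not_ge h)
  rw [abs_of_nonneg (sub_nonneg.2 (Real.exp_le_exp.2 h)), abs_of_nonneg (sub_nonneg.2 h)]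
  have h1 : Real.exp y = Real.exp x * Real.exp (y - x) := by
    rw [← Real.exp_add]; congr 1; ring
  have h2 := Real.add_one_le_exp (y - x)
  have h3 := Real.exp_le_exp.2 hx
  have h4 := Real.exp_pos x
  nlinarith

/-- Hardy's inequality at both end points of the interval; comparing them bounds `f 1 - f 0`. -/
theorem hardy_ends {s : ℝ} (h0 : 1 / 2 < s) (h1 : s < 1) : ∃ C : ℝ≥0∞, C ≠ ∞ ∧
    ∀ (f : ℝ → ℂ) (M : ℝ), Continuous f →
    (∀ x ∈ Icc (0:ℝ) 1, ∀ y ∈ Icc (0:ℝ) 1, ‖f x - f y‖ ≤ M * |x - y| ^ (1 / 2 : ℝ)) →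
    ∫⁻ x in Ioc (0:ℝ) 1, ‖f x - f 0‖ₑ ^ 2 * ENNReal.ofReal (x ^ (-(2 * s))) ≤
      C * gagOn s (Ioc 0 1) (Ioc 0 1) f ∧
    ∫⁻ x in Ioc (0:ℝ) 1, ‖f x - f 1‖ₑ ^ 2 * ENNReal.ofReal ((1 - x) ^ (-(2 * s))) ≤
      C * gagOn s (Ioc 0 1) (Ioc 0 1) f ∧
    ‖f 1 - f 0‖ₑ ^ 2 ≤ 4 * C * gagOn s (Ioc 0 1) (Ioc 0 1) f := by
  obtain ⟨C, hC, h⟩ := hardy h0 h1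
  refine ⟨C, hC, fun f M hf hM => ?_⟩
  have A : ∫⁻ x in Ioc (0:ℝ) 1, ‖f x - f 0‖ₑ ^ 2 * ENNReal.ofReal (x ^ (-(2 * s))) ≤
      C * gagOn s (Ioc 0 1) (Ioc 0 1) f := by
    have := h (fun x => f x - f 0) M (by fun_prop) fun x hx => by
      have := hM x ⟨hx.1.le, hx.2⟩ 0 (by simp)
      rwa [sub_zero, abs_of_pos hx.1] at this
    simpa [gagOn] using this
  have B : ∫⁻ x in Ioc (0:ℝ) 1, ‖f x - f 1‖ₑ ^ 2 * ENNReal.ofReal ((1 - x) ^ (-(2 * s))) ≤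
      C * gagOn s (Ioc 0 1) (Ioc 0 1) f := by
    have := h (fun x => f (1 - x) - f 1) M (by fun_prop) fun x hx => by
      have := hM (1 - x) ⟨by linarith [hx.2], by linarith [hx.1]⟩ 1 (by simp)
      rwa [show |1 - x - 1| = x by rw [sub_sub_cancel_left, abs_neg, abs_of_pos hx.1]] at this
    rw [← lintegral_reflect, ← gagOn_reflect]
    simpa [gagOn] using this
  refine ⟨A, B, ?_⟩
  calc ‖f 1 - f 0‖ₑ ^ 2 = ∫⁻ x in Ioc (0:ℝ) 1, ‖f 1 - f 0‖ₑ ^ 2 := by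
        rw [setLIntegral_const, Real.volume_Ioc]; simp
    _ = ∫⁻ x in Ioo (0:ℝ) 1, ‖f 1 - f 0‖ₑ ^ 2 := setLIntegral_congr Ioo_ae_eq_Ioc.symm
    _ ≤ ∫⁻ x in Ioo (0:ℝ) 1, (2 * (‖f x - f 0‖ₑ ^ 2 * ENNReal.ofReal (x ^ (-(2 * s)))) +
        2 * (‖f x - f 1‖ₑ ^ 2 * ENNReal.ofReal ((1 - x) ^ (-(2 * s))))) := by
        refine setLIntegral_mono' measurableSet_Ioo fun x hx => ?_
        have := enorm_sub_sq_le (f x - f 0) (f x - f 1)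
        rw [sub_sub_sub_cancel_left] at this
        refine this.trans ?_
        gcongr
        · exact le_mul_of_one_le_right zero_le
            (one_le_ofReal_rpow_neg (by linarith) hx.1 hx.2.le)
        · exact le_mul_of_one_le_right zero_le
            (one_le_ofReal_rpow_neg (by linarith) (by linarith [hx.2]) (by linarith [hx.1]))
    _ = 2 * (∫⁻ x in Ioc (0:ℝ) 1, ‖f x - f 0‖ₑ ^ 2 * ENNReal.ofReal (x ^ (-(2 * s)))) +
        2 * ∫⁻ x in Ioc (0:ℝ) 1, ‖f x - f 1‖ₑ ^ 2 * ENNReal.ofReal ((1 - x) ^ (-(2 * s))) := by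
        rw [setLIntegral_congr Ioo_ae_eq_Ioc, lintegral_add_right _ (by fun_prop),
          lintegral_const_mul' _ _ (by finiteness), lintegral_const_mul' _ _ (by finiteness)]
    _ ≤ 2 * (C * gagOn s (Ioc 0 1) (Ioc 0 1) f) + 2 * (C * gagOn s (Ioc 0 1) (Ioc 0 1) f) := by
        gcongr
    _ = _ := by ring

theorem tail_left {s : ℝ} (hs : 0 < s) {x : ℝ} (hx : 0 < x) :
    ∫⁻ y in Iic (0:ℝ), ENNReal.ofReal (|x - y| ^ (-(1 + 2 * s))) ≤
      ENNReal.ofReal (1 / (2 * s)) * ENNReal.ofReal (x ^ (-(2 * s))) := by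
  calc _ ≤ ∫⁻ y, (Ici x).indicator (fun h => ENNReal.ofReal (h ^ (-(1 + 2 * s)))) (x - y) := by
        refine setLIntegral_le_lintegral_of_le measurableSet_Iic fun y hy => ?_
        have hy : y ≤ 0 := hy
        rw [indicator_of_mem (by simpa using hy), abs_of_nonneg (by linarith)]
    _ = _ := by
        rw [lintegral_sub_left_eq_self _ x, lintegral_indicator measurableSet_Ici,
          setLIntegral_congr Ioi_ae_eq_Ici.symm, lintegral_rpow_Ioi (by linarith) hx,
          ← ENNReal.ofReal_mul (by positivity)]
        congr 1
        rw [show -(1 + 2 * s) + 1 = -(2 * s) by ring]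
        field_simp

theorem tail_right {s : ℝ} (hs : 0 < s) {x : ℝ} (hx : x < 1) :
    ∫⁻ y in Ioi (1:ℝ), ENNReal.ofReal (|x - y| ^ (-(1 + 2 * s))) ≤
      ENNReal.ofReal (1 / (2 * s)) * ENNReal.ofReal ((1 - x) ^ (-(2 * s))) := by
  refine le_trans ?_ (tail_left hs (sub_pos.2 hx))
  calc _ ≤ ∫⁻ y, (Iic (0:ℝ)).indicator
        (fun z => ENNReal.ofReal (|(1 - x) - z| ^ (-(1 + 2 * s)))) (1 - y) := by
        refine setLIntegral_le_lintegral_of_le measurableSet_Ioi fun y hy => ?_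
        have hy : 1 < y := hy
        rw [indicator_of_mem (by simpa using hy.le), abs_sub_comm,
          show (1 - x) - (1 - y) = y - x by ring]
    _ = _ := by
        rw [lintegral_sub_left_eq_self _ (1:ℝ), lintegral_indicator measurableSet_Iic]

/-- The seminorm over the line of a function supported in `(0, 1]` is the seminorm over the interval
plus Hardy-type weights at the two end points. -/
theorem gag_tail {s : ℝ} (hs : 0 < s) {V : ℝ → ℂ} (hm : Measurable V)
    (hV : ∀ x, x ∉ Ioc (0:ℝ) 1 → V x = 0) :
    gagOn s univ univ V ≤ gagOn s (Ioc 0 1) (Ioc 0 1) V + 2 * (ENNReal.ofReal (1 / (2 * s)) *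
      ((∫⁻ x in Ioc (0:ℝ) 1, ‖V x‖ₑ ^ 2 * ENNReal.ofReal (x ^ (-(2 * s)))) +
      ∫⁻ x in Ioc (0:ℝ) 1, ‖V x‖ₑ ^ 2 * ENNReal.ofReal ((1 - x) ^ (-(2 * s))))) := by
  set I : Set ℝ := Ioc 0 1 with hI
  have mI : MeasurableSet I := measurableSet_Ioc
  let K : ℝ → ℝ → ℝ≥0∞ := fun x y =>
    ‖V x - V y‖ₑ ^ 2 * ENNReal.ofReal (|x - y| ^ (-(1 + 2 * s)))
  have mK : Measurable (Function.uncurry K) := by unfold K Function.uncurry; fun_prop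
  have sK : ∀ x y, K x y = K y x := fun x y => by
    simp only [K]; rw [abs_sub_comm, ← enorm_neg, neg_sub]
  have T : ∫⁻ x in I, ∫⁻ y in Iᶜ, K x y ≤ ENNReal.ofReal (1 / (2 * s)) *
      ((∫⁻ x in I, ‖V x‖ₑ ^ 2 * ENNReal.ofReal (x ^ (-(2 * s)))) +
      ∫⁻ x in I, ‖V x‖ₑ ^ 2 * ENNReal.ofReal ((1 - x) ^ (-(2 * s)))) := by
    have e : Iᶜ = Iic 0 ∪ Ioi 1 := by
      ext y; simp only [hI, mem_compl_iff, mem_Ioc, mem_union, mem_Iic, mem_Ioi, not_and_or,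
        not_lt, not_le]
    rw [← lintegral_add_right _ (by fun_prop), ← lintegral_const_mul' _ _ (by finiteness),
      hI, setLIntegral_congr Ioo_ae_eq_Ioc.symm, setLIntegral_congr Ioo_ae_eq_Ioc.symm, ← hI]
    refine setLIntegral_mono' measurableSet_Ioo fun x hx => ?_
    calc ∫⁻ y in Iᶜ, K x y = ∫⁻ y in Iᶜ, ‖V x‖ₑ ^ 2 *
          ENNReal.ofReal (|x - y| ^ (-(1 + 2 * s))) := by
          refine setLIntegral_congr_fun mI.compl fun y hy => ?_
          simp only [K, hV y hy, sub_zero]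
      _ = ‖V x‖ₑ ^ 2 * ∫⁻ y in Iᶜ, ENNReal.ofReal (|x - y| ^ (-(1 + 2 * s))) :=
          lintegral_const_mul' _ _ (by finiteness)
      _ ≤ ‖V x‖ₑ ^ 2 * (ENNReal.ofReal (1 / (2 * s)) * ENNReal.ofReal (x ^ (-(2 * s))) +
          ENNReal.ofReal (1 / (2 * s)) * ENNReal.ofReal ((1 - x) ^ (-(2 * s)))) := by
          rw [e]
          refine mul_le_mul_right ((lintegral_union_le _ _ _).trans ?_) _
          exact add_le_add (tail_left hs hx.1) (tail_right hs hx.2)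
      _ = _ := by ring
  have T' : ∫⁻ x in Iᶜ, ∫⁻ y in I, K x y = ∫⁻ x in I, ∫⁻ y in Iᶜ, K x y := by
    rw [lintegral_lintegral_swap mK.aemeasurable]
    simp only [sK]
  have T0 : ∫⁻ x in Iᶜ, ∫⁻ y in Iᶜ, K x y = 0 := by
    rw [setLIntegral_congr_fun (g := fun _ => 0) mI.compl]
    · simp
    intro x hx
    beta_reduce
    rw [setLIntegral_congr_fun (g := fun _ => 0) mI.compl]
    · simp
    intro y hy
    simp [K, hV y hy, hV x hx]
  have mi : ∀ A : Set ℝ, Measurable fun x => ∫⁻ y in A, K x y := fun A =>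
    Measurable.lintegral_prod_right' (f := Function.uncurry K) mK
  calc gagOn s univ univ V = ∫⁻ x, ∫⁻ y, K x y := by simp [gagOn, K]
    _ = ∫⁻ x, (∫⁻ y in I, K x y) + ∫⁻ y in Iᶜ, K x y := by
        simp only [lintegral_add_compl _ mI]
    _ = (∫⁻ x, ∫⁻ y in I, K x y) + ∫⁻ x, ∫⁻ y in Iᶜ, K x y := lintegral_add_left (mi _) _
    _ = (∫⁻ x in I, ∫⁻ y in I, K x y) + (∫⁻ x in Iᶜ, ∫⁻ y in I, K x y) +
        ((∫⁻ x in I, ∫⁻ y in Iᶜ, K x y) + ∫⁻ x in Iᶜ, ∫⁻ y in Iᶜ, K x y) := by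
        rw [lintegral_add_compl _ mI, lintegral_add_compl _ mI]
    _ = gagOn s I I V + 2 * ∫⁻ x in I, ∫⁻ y in Iᶜ, K x y := by
        rw [T0, T', add_zero, add_assoc, ← two_mul]; rfl
    _ ≤ _ := by gcongr

/-- Extension by zero, after damping by `exp (-x)`, of a function vanishing at both end points. -/
theorem gag_extend {s : ℝ} (h0 : 1 / 2 < s) (h1 : s < 1) : ∃ C : ℝ≥0∞, C ≠ ∞ ∧
    ∀ (f : ℝ → ℂ) (M : ℝ), Continuous f →
    (∀ x ∈ Icc (0:ℝ) 1, ∀ y ∈ Icc (0:ℝ) 1, ‖f x - f y‖ ≤ M * |x - y| ^ (1 / 2 : ℝ)) →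
    f 0 = 0 → f 1 = 0 →
    (∫⁻ x in Ioc (0:ℝ) 1, ‖f x‖ₑ ^ 2 ≤ C * gagOn s (Ioc 0 1) (Ioc 0 1) f) ∧
    gagOn s univ univ ((Ioc 0 1).indicator fun x => (Real.exp (-x) : ℂ) * f x) ≤
      C * gagOn s (Ioc 0 1) (Ioc 0 1) f := by
  obtain ⟨C, hC, h⟩ := hardy_ends h0 h1
  set R := ENNReal.ofReal (1 / (2 - 2 * s))
  set R' := ENNReal.ofReal (1 / (2 * s))
  refine ⟨C + (2 + 4 * R * C + 4 * R' * C), by finiteness, fun f M hf hM f0 f1 => ?_⟩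
  obtain ⟨H0, H1, -⟩ := h f M hf hM
  rw [f0] at H0
  rw [f1] at H1
  simp only [sub_zero] at H0 H1
  set S := gagOn s (Ioc 0 1) (Ioc 0 1) f
  have L : ∫⁻ x in Ioc (0:ℝ) 1, ‖f x‖ₑ ^ 2 ≤ C * S := by
    refine (setLIntegral_mono' measurableSet_Ioc fun x hx => ?_).trans H0
    exact le_mul_of_one_le_right zero_le (one_le_ofReal_rpow_neg (by linarith) hx.1 hx.2)
  refine ⟨L.trans (by gcongr; exact le_self_add), ?_⟩
  set V := (Ioc (0:ℝ) 1).indicator fun x => (Real.exp (-x) : ℂ) * f x with hV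
  have Vle : ∀ x ∈ Ioc (0:ℝ) 1, ‖V x‖ₑ ≤ ‖f x‖ₑ := by
    intro x hx
    rw [hV, indicator_of_mem hx, enorm_mul]
    refine mul_le_of_le_one_left zero_le ?_
    rw [← ofReal_norm, Complex.norm_real, Real.norm_of_nonneg (Real.exp_pos _).le]
    exact ENNReal.ofReal_le_one.2 (Real.exp_le_one_iff.2 (by linarith [hx.1]))
  have SV : gagOn s (Ioc 0 1) (Ioc 0 1) V ≤ 2 * S + 2 * (2 * R) * (C * S) := by
    rw [gagOn_congr s measurableSet_Ioc measurableSet_Ioc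
      (g := fun x => (Real.exp (-x) : ℂ) * f x)
      (fun x hx => indicator_of_mem hx _) (fun x hx => indicator_of_mem hx _)]
    refine (gagOn_mul_le (M := 1) (L := 1) h1 hf.measurable.aemeasurable ?_ ?_).trans ?_
    · intro x hx
      rw [Complex.norm_real, Real.norm_of_nonneg (Real.exp_pos _).le]
      exact Real.exp_le_one_iff.2 (by linarith [hx.1])
    · intro x hx y hy
      rw [← Complex.ofReal_sub, Complex.norm_real, Real.norm_eq_abs, one_mul]
      refine (abs_exp_sub_exp_le (b := 0) (by linarith [hx.1]) (by linarith [hy.1])).trans_eq ?_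
      rw [Real.exp_zero, one_mul, ← abs_neg]
      congr 1; ring
    · rw [ENNReal.ofReal_one, one_pow, mul_one]
      gcongr
  refine (gag_tail (by linarith) ?_ fun x hx => indicator_of_notMem hx _).trans ?_
  · exact Measurable.indicator (by fun_prop) measurableSet_Ioc
  have A : ∀ w : ℝ → ℝ≥0∞, ∫⁻ x in Ioc (0:ℝ) 1, ‖V x‖ₑ ^ 2 * w x ≤
      ∫⁻ x in Ioc (0:ℝ) 1, ‖f x‖ₑ ^ 2 * w x := fun w =>
    setLIntegral_mono' measurableSet_Ioc fun x hx => by gcongr; exact Vle x hx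
  calc _ ≤ (2 * S + 2 * (2 * R) * (C * S)) + 2 * (R' * (C * S + C * S)) := by
        refine add_le_add SV ?_
        gcongr
        · exact (A _).trans H0
        · exact (A _).trans H1
    _ = (2 + 4 * R * C + 4 * R' * C) * S := by ring
    _ ≤ _ := mul_le_mul_left le_add_self _

theorem gagOn_add_le (s : ℝ) {f g : ℝ → ℂ} (hg : Measurable g) (A B : Set ℝ) :
    gagOn s A B (fun x => f x + g x) ≤ 2 * gagOn s A B f + 2 * gagOn s A B g := by
  have m : Measurable fun p : ℝ × ℝ =>
      2 * (‖g p.1 - g p.2‖ₑ ^ 2 * ENNReal.ofReal (|p.1 - p.2| ^ (-(1 + 2 * s)))) := by fun_prop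
  unfold gagOn
  rw [← lintegral_const_mul' _ _ (by finiteness), ← lintegral_const_mul' _ _ (by finiteness)]
  simp only [← lintegral_const_mul' _ _ (show (2 : ℝ≥0∞) ≠ ∞ by finiteness)]
  rw [← lintegral_add_right _ (m.lintegral_prod_right')]
  refine lintegral_mono fun x => ?_
  rw [← lintegral_add_right _ (by fun_prop)]
  refine lintegral_mono fun y => ?_
  rw [add_sub_add_comm]
  calc _ ≤ (2 * ‖f x - f y‖ₑ ^ 2 + 2 * ‖g x - g y‖ₑ ^ 2) *
        ENNReal.ofReal (|x - y| ^ (-(1 + 2 * s))) := by gcongr; exact enorm_add_sq_le _ _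
    _ = _ := by ring

theorem gagOn_linear_le {s : ℝ} (h1 : s < 1) (c : ℂ) :
    gagOn s (Ioc 0 1) (Ioc 0 1) (fun x => c * x) ≤
      4 * ENNReal.ofReal (1 / (2 - 2 * s)) * ‖c‖ₑ ^ 2 := by
  have := gagOn_mul_le (f := fun _ => 1) (φ := fun x => c * x) (M := ‖c‖) (L := ‖c‖) h1
    aemeasurable_const ?_ ?_
  · refine le_trans (le_of_eq ?_) (this.trans (le_of_eq ?_))
    · simp
    · simp [gagOn]; ring
  · intro x hx
    rw [norm_mul, Complex.norm_real, Real.norm_of_nonneg hx.1.le]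
    exact mul_le_of_le_one_right (norm_nonneg _) hx.2
  · intro x hx y hy
    rw [← mul_sub, norm_mul, ← Complex.ofReal_sub, Complex.norm_real, Real.norm_eq_abs]

/-- A function vanishing at zero is corrected by a linear function so as to vanish at both ends. The
corrected function, its damped extension by zero and the size of the correction are all bounded by
the seminorm of the original function on the interval. -/
theorem gag_correct {s : ℝ} (h0 : 1 / 2 < s) (h1 : s < 1) : ∃ C : ℝ≥0∞, C ≠ ∞ ∧
    ∀ (f : ℝ → ℂ) (M : ℝ), Continuous f →
    (∀ x ∈ Icc (0:ℝ) 1, ∀ y ∈ Icc (0:ℝ) 1, ‖f x - f y‖ ≤ M * |x - y| ^ (1 / 2 : ℝ)) →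
    f 0 = 0 →
    (∫⁻ x in Ioc (0:ℝ) 1, ‖f x - f 1 * x‖ₑ ^ 2 ≤ C * gagOn s (Ioc 0 1) (Ioc 0 1) f) ∧
    gagOn s univ univ ((Ioc 0 1).indicator fun x => (Real.exp (-x) : ℂ) * (f x - f 1 * x)) ≤
      C * gagOn s (Ioc 0 1) (Ioc 0 1) f ∧
    ‖f 1‖ₑ ^ 2 ≤ C * gagOn s (Ioc 0 1) (Ioc 0 1) f := by
  obtain ⟨C, hC, h⟩ := gag_extend h0 h1
  obtain ⟨C', hC', h'⟩ := hardy_ends h0 h1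
  set R := ENNReal.ofReal (1 / (2 - 2 * s))
  refine ⟨4 * C' + C * (2 + 2 * (4 * R * (4 * C'))), by finiteness, fun f M hf hM f0 => ?_⟩
  obtain ⟨-, -, E⟩ := h' f M hf hM
  rw [f0, sub_zero] at E
  set S := gagOn s (Ioc 0 1) (Ioc 0 1) f
  have SF : gagOn s (Ioc 0 1) (Ioc 0 1) (fun x => f x - f 1 * x) ≤
      (2 + 2 * (4 * R * (4 * C'))) * S := by
    calc _ = gagOn s (Ioc 0 1) (Ioc 0 1) (fun x => f x + (-f 1) * x) := by
          simp only [neg_mul, sub_eq_add_neg]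
      _ ≤ 2 * S + 2 * (4 * R * (4 * C' * S)) := by
          refine (gagOn_add_le s (by fun_prop) _ _).trans ?_
          refine add_le_add le_rfl (mul_le_mul_right ((gagOn_linear_le h1 _).trans ?_) _)
          rw [enorm_neg]
          exact mul_le_mul_right E _
      _ = _ := by ring
  obtain ⟨A, B⟩ := h (fun x => f x - f 1 * x) (M + ‖f 1‖) (by fun_prop) (fun x hx y hy => by
    have hd : |x - y| ≤ 1 := abs_sub_le_iff.2 ⟨by linarith [hx.2, hy.1], by linarith [hx.1, hy.2]⟩
    calc ‖f x - f 1 * x - (f y - f 1 * y)‖ = ‖(f x - f y) - f 1 * ((x - y : ℝ) : ℂ)‖ := by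
          congr 1; push_cast; ring
      _ ≤ ‖f x - f y‖ + ‖f 1‖ * |x - y| := by
          refine (norm_sub_le _ _).trans ?_
          rw [norm_mul, Complex.norm_real, Real.norm_eq_abs]
      _ ≤ M * |x - y| ^ (1 / 2 : ℝ) + ‖f 1‖ * |x - y| ^ (1 / 2 : ℝ) := by
          refine add_le_add (hM x hx y hy) (mul_le_mul_of_nonneg_left ?_ (norm_nonneg _))
          rcases (abs_nonneg (x - y)).eq_or_lt with h | h
          · rw [← h]; positivity
          · calc |x - y| = |x - y| ^ (1:ℝ) := (Real.rpow_one _).symm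
              _ ≤ _ := Real.rpow_le_rpow_of_exponent_ge h hd (by norm_num)
      _ = _ := by ring) (by simp [f0]) (by simp)
  have key : C * gagOn s (Ioc 0 1) (Ioc 0 1) (fun x => f x - f 1 * x) ≤
      (4 * C' + C * (2 + 2 * (4 * R * (4 * C')))) * S := by
    calc _ ≤ C * ((2 + 2 * (4 * R * (4 * C'))) * S) := mul_le_mul_right SF _
      _ = (C * (2 + 2 * (4 * R * (4 * C')))) * S := by ring
      _ ≤ _ := mul_le_mul_left le_add_self _
  exact ⟨A.trans key, B.trans key, E.trans (mul_le_mul_left le_self_add _)⟩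

/-! ### Convolution estimates on the Fourier side -/

/-- Cauchy–Schwarz inequality with weight `k`. -/
theorem lintegral_mul_sq_le {μ : Measure ℝ} {F k : ℝ → ℝ≥0∞} (hF : AEMeasurable F μ)
    (hk : AEMeasurable k μ) :
    (∫⁻ t, F t * k t ∂μ) ^ 2 ≤ (∫⁻ t, F t ^ 2 * k t ∂μ) * ∫⁻ t, k t ∂μ := by
  have h := ENNReal.lintegral_mul_le_Lp_mul_Lq μ Real.HolderConjugate.two_two
    (f := fun t => F t * k t ^ (1 / 2 : ℝ)) (g := fun t => k t ^ (1 / 2 : ℝ))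
    (by fun_prop) (by fun_prop)
  have e1 : ∀ a : ℝ≥0∞, a ^ (1 / 2 : ℝ) * a ^ (1 / 2 : ℝ) = a := fun a => by
    rw [← ENNReal.rpow_add_of_nonneg _ _ (by norm_num) (by norm_num)]; norm_num
  have e2 : ∀ a : ℝ≥0∞, (a ^ (1 / 2 : ℝ)) ^ 2 = a := fun a => by rw [pow_two, e1]
  simp only [Pi.mul_apply, ENNReal.rpow_ofNat, mul_assoc, e1, mul_pow, e2] at h
  calc _ ≤ ((∫⁻ t, F t ^ 2 * k t ∂μ) ^ (1 / 2 : ℝ) * (∫⁻ t, k t ∂μ) ^ (1 / 2 : ℝ)) ^ 2 := by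
        gcongr
    _ = _ := by rw [mul_pow, e2, e2]

/-- Young's inequality `L² * L¹ ⊆ L²`, in qualitative form. -/
theorem cv_memLp {f k : ℝ → ℂ} (h1 : Integrable f) (h2 : MemLp f 2) (hk : Integrable k) :
    MemLp (cv f k) 2 := by
  have hm := (cv_integrable h1 hk).aestronglyMeasurable
  refine ⟨hm, ?_⟩
  have hf2 : ∫⁻ x, ‖f x‖ₑ ^ 2 < ∞ := by
    rw [lintegral_sq_eq_eLpNorm]; exact ENNReal.pow_lt_top h2.2
  have hk1 : ∫⁻ x, ‖k x‖ₑ < ∞ := hk.2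
  have hfm : AEMeasurable (fun x => ‖f x‖ₑ ^ 2) := (h1.aestronglyMeasurable.enorm).pow_const 2
  have key : ∫⁻ x, ‖cv f k x‖ₑ ^ 2 ≤ (∫⁻ x, ‖f x‖ₑ ^ 2) * (∫⁻ x, ‖k x‖ₑ) * ∫⁻ x, ‖k x‖ₑ := by
    calc ∫⁻ x, ‖cv f k x‖ₑ ^ 2 ≤ ∫⁻ x, (∫⁻ t, ‖f t‖ₑ ^ 2 * ‖k (x - t)‖ₑ) * ∫⁻ x, ‖k x‖ₑ := by
          refine lintegral_mono fun x => ?_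
          have hkx : AEMeasurable (fun t => ‖k (x - t)‖ₑ) :=
            (hk.comp_sub_left x).aestronglyMeasurable.enorm
          rw [← lintegral_sub_left_eq_self (fun y => ‖k y‖ₑ) x]
          refine le_trans ?_ (lintegral_mul_sq_le h1.aestronglyMeasurable.enorm hkx)
          gcongr
          rw [cv_apply]
          refine (enorm_integral_le_lintegral_enorm _).trans_eq ?_
          simp only [enorm_mul]
      _ = (∫⁻ x, ∫⁻ t, ‖f t‖ₑ ^ 2 * ‖k (x - t)‖ₑ) * ∫⁻ x, ‖k x‖ₑ := lintegral_mul_const' _ _ hk1.ne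
      _ = _ := by
          congr 1
          rw [lintegral_lintegral_swap]
          · rw [← lintegral_mul_const' _ _ hk1.ne]
            congr 1 with t
            rw [lintegral_const_mul' _ _ (by finiteness),
              lintegral_sub_right_eq_self (fun y => ‖k y‖ₑ)]
          · have : Measure.QuasiMeasurePreserving (fun p : ℝ × ℝ => p.1 - p.2) (volume.prod volume) volume :=
              quasiMeasurePreserving_sub volume volume
            exact (hfm.comp_quasiMeasurePreserving Measure.quasiMeasurePreserving_snd).mul
              (hk.aestronglyMeasurable.enorm.comp_quasiMeasurePreserving this)
  rw [lintegral_sq_eq_eLpNorm] at key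
  have : eLpNorm (cv f k) 2 volume ^ 2 < ∞ := key.trans_lt (by finiteness)
  exact (ENNReal.pow_lt_top_iff.1 this).resolve_right (by norm_num)

theorem enorm_fourier_gker_sq {a : ℝ} (ha : 0 < a) (ξ : ℝ) :
    ‖𝓕 (gker a) ξ‖ₑ ^ 2 =
      ENNReal.ofReal (‖1 + 2 * Real.pi * ξ * Complex.I‖ ^ (-(2 * a))) := by
  rw [← ofReal_norm, norm_fourier_ker ha, ← ENNReal.ofReal_pow (by positivity),
    ← Real.rpow_natCast, ← Real.rpow_mul (norm_nonneg _)]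
  congr 2; push_cast; ring

theorem symbol_ge_one (ξ : ℝ) : 1 ≤ ‖1 + 2 * Real.pi * ξ * Complex.I‖ := by
  have := Complex.abs_re_le_norm (1 + 2 * Real.pi * ξ * Complex.I)
  simpa using this

theorem symbol_ge_abs (ξ : ℝ) : |ξ| ≤ ‖1 + 2 * Real.pi * ξ * Complex.I‖ := by
  have := Complex.abs_im_le_norm (1 + 2 * Real.pi * ξ * Complex.I)
  simp [abs_mul] at this
  rw [abs_of_pos Real.pi_pos] at this
  have h := Real.pi_gt_three
  nlinarith [abs_nonneg ξ]

theorem symbol_le (ξ : ℝ) : ‖1 + 2 * Real.pi * ξ * Complex.I‖ ≤ 1 + 2 * Real.pi * |ξ| := by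
  refine (norm_add_le _ _).trans ?_
  simp [abs_of_pos Real.pi_pos]

/-- Convolution with `gker s` gains `s` derivatives, since `|ξ| ≤ |1 + 2πiξ|`. -/
theorem smoothing_gag {s : ℝ} (hs : 0 < s) {g : ℝ → ℂ} (h1 : Integrable g) (h2 : MemLp g 2) :
    gagOn s univ univ (cv g (gker s)) ≤ gagConst s * ∫⁻ x, ‖g x‖ₑ ^ 2 := by
  have hk := ker_integrable hs
  rw [gag_eq (cv_integrable h1 hk) (cv_memLp h1 h2 hk), ← plancherel h1 h2]
  gcongr with ξ
  rw [fourier_cv h1 hk, enorm_mul, mul_pow, mul_left_comm]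
  refine mul_le_of_le_one_right zero_le ?_
  rw [enorm_fourier_gker_sq hs, ← ENNReal.ofReal_mul (by positivity)]
  have h := symbol_ge_one ξ
  refine ENNReal.ofReal_le_one.2 ?_
  rw [Real.rpow_neg (norm_nonneg _), ← div_eq_mul_inv]
  refine div_le_one_of_le₀ ?_ (by positivity)
  exact Real.rpow_le_rpow (abs_nonneg _) (symbol_ge_abs ξ) (by positivity)

theorem smoothing_L2 {s : ℝ} (hs : 0 < s) {g : ℝ → ℂ} (h1 : Integrable g) (h2 : MemLp g 2) :
    ∫⁻ x, ‖cv g (gker s) x‖ₑ ^ 2 ≤ ∫⁻ x, ‖g x‖ₑ ^ 2 := by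
  have hk := ker_integrable hs
  rw [← plancherel (cv_integrable h1 hk) (cv_memLp h1 h2 hk), ← plancherel h1 h2]
  refine lintegral_mono fun ξ => ?_
  rw [fourier_cv h1 hk, enorm_mul, mul_pow]
  refine mul_le_of_le_one_right zero_le ?_
  rw [enorm_fourier_gker_sq hs]
  exact ENNReal.ofReal_le_one.2
    (Real.rpow_le_one_of_one_le_of_nonpos (symbol_ge_one ξ) (by linarith))

/-- A fractional derivative of order `s` of `cv F (gker 1)`, namely `cv F (gker (1 - s))`, is bounded
in `L²` by the full `H^s` norm. -/
theorem unsmoothing {s : ℝ} (h0 : 0 < s) (h1 : s < 1) : ∃ C : ℝ≥0∞, C ≠ ∞ ∧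
    ∀ F : ℝ → ℂ, Integrable F → MemLp F 2 →
    ∫⁻ x, ‖cv F (gker (1 - s)) x‖ₑ ^ 2 ≤
      C * ((∫⁻ x, ‖cv F (gker 1) x‖ₑ ^ 2) + gagOn s univ univ (cv F (gker 1))) := by
  set A := ENNReal.ofReal (2 ^ (2 * s))
  set B := ENNReal.ofReal ((2 * Real.pi) ^ (2 * s))
  refine ⟨A * (1 + B * (gagConst s)⁻¹), ?_, fun F hF1 hF2 => ?_⟩
  · have := ENNReal.inv_ne_top.2 (gagConst_ne_zero s)
    finiteness
  have k1 := ker_integrable one_pos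
  have k2 := ker_integrable (a := 1 - s) (by linarith)
  set V := cv F (gker 1)
  have hV1 : Integrable V := cv_integrable hF1 k1
  have hV2 : MemLp V 2 := cv_memLp hF1 hF2 k1
  have hVc : Continuous (𝓕 V) := VectorFourier.fourierIntegral_continuous
    Real.continuous_fourierChar (by fun_prop) hV1
  rw [← plancherel (cv_integrable hF1 k2) (cv_memLp hF1 hF2 k2), ← plancherel hV1 hV2]
  have E : ∫⁻ ξ, ENNReal.ofReal (|ξ| ^ (2 * s)) * ‖𝓕 V ξ‖ₑ ^ 2 =
      (gagConst s)⁻¹ * gagOn s univ univ V := by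
    rw [gag_eq hV1 hV2, ← mul_assoc,
      ENNReal.inv_mul_cancel (gagConst_ne_zero s) (gagConst_ne_top h0 h1), one_mul]
  calc ∫⁻ ξ, ‖𝓕 (cv F (gker (1 - s))) ξ‖ₑ ^ 2
      ≤ ∫⁻ ξ, A * (‖𝓕 V ξ‖ₑ ^ 2 + B * (ENNReal.ofReal (|ξ| ^ (2 * s)) * ‖𝓕 V ξ‖ₑ ^ 2)) := by
        refine lintegral_mono fun ξ => ?_
        simp only [V]
        rw [fourier_cv hF1 k2, fourier_cv hF1 k1, enorm_mul, enorm_mul, mul_pow, mul_pow,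
          enorm_fourier_gker_sq (by linarith), enorm_fourier_gker_sq one_pos]
        set z := ‖1 + 2 * Real.pi * ξ * Complex.I‖ with hz
        have z1 : 1 ≤ z := symbol_ge_one ξ
        have z2 : z ≤ 1 + 2 * Real.pi * |ξ| := symbol_le ξ
        have z3 : z ^ (-(2 * (1 - s))) ≤ 2 ^ (2 * s) *
            (z ^ (-(2 * 1 : ℝ)) + (2 * Real.pi) ^ (2 * s) * (|ξ| ^ (2 * s) * z ^ (-(2 * 1 : ℝ)))) := by
          have : z ^ (-(2 * (1 - s))) = z ^ (2 * s) * z ^ (-(2 * 1 : ℝ)) := by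
            rw [← Real.rpow_add (by linarith)]; congr 1; ring
          rw [this, show (2:ℝ) ^ (2 * s) * (z ^ (-(2 * 1 : ℝ)) +
            (2 * Real.pi) ^ (2 * s) * (|ξ| ^ (2 * s) * z ^ (-(2 * 1 : ℝ)))) =
            2 ^ (2 * s) * (1 + (2 * Real.pi) ^ (2 * s) * |ξ| ^ (2 * s)) * z ^ (-(2 * 1 : ℝ)) by ring]
          refine mul_le_mul_of_nonneg_right ?_ (by positivity)
          rw [← Real.mul_rpow (by positivity) (abs_nonneg _)]
          set t := 2 * Real.pi * |ξ|
          have t0 : 0 ≤ t := by positivity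
          rcases le_total t 1 with h | h
          · calc z ^ (2 * s) ≤ 2 ^ (2 * s) :=
                  Real.rpow_le_rpow (by linarith) (by linarith) (by linarith)
              _ ≤ _ := le_mul_of_one_le_right (by positivity)
                  (by linarith [Real.rpow_nonneg t0 (2 * s)])
          · calc z ^ (2 * s) ≤ (2 * t) ^ (2 * s) :=
                  Real.rpow_le_rpow (by linarith) (by linarith) (by linarith)
              _ = 2 ^ (2 * s) * t ^ (2 * s) := Real.mul_rpow (by norm_num) t0
              _ ≤ _ := by gcongr; linarith
        have z4 : ENNReal.ofReal (z ^ (-(2 * (1 - s)))) ≤ A * (ENNReal.ofReal (z ^ (-(2 * 1 : ℝ))) +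
            B * (ENNReal.ofReal (|ξ| ^ (2 * s)) * ENNReal.ofReal (z ^ (-(2 * 1 : ℝ))))) := by
          rw [← ENNReal.ofReal_mul (by positivity), ← ENNReal.ofReal_mul (by positivity),
            ← ENNReal.ofReal_add (by positivity) (by positivity),
            ← ENNReal.ofReal_mul (by positivity)]
          exact ENNReal.ofReal_le_ofReal z3
        calc _ ≤ ‖𝓕 F ξ‖ₑ ^ 2 * _ := mul_le_mul_right z4 _
          _ = _ := by ring
    _ = A * ((∫⁻ ξ, ‖𝓕 V ξ‖ₑ ^ 2) + B * ((gagConst s)⁻¹ * gagOn s univ univ V)) := by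
        rw [lintegral_const_mul' _ _ (by finiteness), lintegral_add_right _ (by fun_prop),
          lintegral_const_mul' _ _ (by finiteness), E]
    _ ≤ A * (1 + B * (gagConst s)⁻¹) *
        ((∫⁻ ξ, ‖𝓕 V ξ‖ₑ ^ 2) + gagOn s univ univ V) := by
        rw [mul_assoc]
        gcongr A * ?_
        rw [add_mul, mul_add, mul_add, one_mul, one_mul, mul_assoc B, mul_assoc B]
        refine add_le_add le_self_add le_add_self

/-! ### Riemann–Liouville integrals as convolutions -/

theorem gker_of_nonpos {a x : ℝ} (hx : x ≤ 0) : gker a x = 0 := by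
  simp [gker, kerR, not_lt.2 hx]

theorem gker_of_pos {a x : ℝ} (hx : 0 < x) :
    gker a x = ((x ^ (a - 1) * Real.exp (-x) / Real.Gamma a : ℝ) : ℂ) := by
  simp only [gker, kerR, if_pos hx]

theorem gker_one {x : ℝ} (hx : 0 < x) : gker 1 x = (Real.exp (-x) : ℂ) := by
  rw [gker_of_pos hx]; simp

theorem cv_of_nonpos {f : ℝ → ℂ} (hf : ∀ t ≤ 0, f t = 0) (a : ℝ) {x : ℝ} (hx : x ≤ 0) :
    cv f (gker a) x = 0 := by
  rw [cv_apply, ← integral_zero ℝ ℂ]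
  congr 1 with t
  rcases le_or_gt t 0 with h | h
  · rw [hf t h, zero_mul]
  · rw [gker_of_nonpos (by linarith), mul_zero]

/-- Causality: the convolution with a gamma density on `(0, 1]` sees only the values of `f` on
`(0, 1]`. -/
theorem cv_truncate {f : ℝ → ℂ} (hf : ∀ t ≤ 0, f t = 0) (a : ℝ) {x : ℝ} (hx : x ≤ 1) :
    cv ((Ioc 0 1).indicator f) (gker a) x = cv f (gker a) x := by
  rw [cv_apply, cv_apply]
  congr 1 with t
  by_cases h : t ∈ Ioc (0:ℝ) 1
  · rw [indicator_of_mem h]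
  · rw [indicator_of_notMem h]
    rcases le_or_gt t 0 with h' | h'
    · rw [hf t h']
    · have : 1 < t := by
        by_contra hh
        exact h ⟨h', not_lt.1 hh⟩
      rw [gker_of_nonpos (by linarith), mul_zero, mul_zero]

/-- Convolution with `gker 1` is integration, conjugated by the exponential weight. -/
theorem cv_gker_one (F : ℝ → ℂ) (x : ℝ) :
    cv F (gker 1) x = (Real.exp (-x) : ℂ) * ∫ t in Iio x, (Real.exp t : ℂ) * F t := by
  rw [cv_apply, ← integral_const_mul, ← integral_indicator measurableSet_Iio]
  congr 1 with t
  by_cases h : t < x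
  · rw [indicator_of_mem (show t ∈ Iio x from h), gker_one (by linarith), ← mul_assoc,
      ← Complex.ofReal_mul, ← Real.exp_add, mul_comm]
    congr 3; ring
  · rw [indicator_of_notMem (show t ∉ Iio x from h), gker_of_nonpos (by linarith), mul_zero]

theorem integral_Iio_eq {h : ℝ → ℂ} (h0 : ∀ t ≤ 0, h t = 0) {x : ℝ} (hx : 0 ≤ x) :
    ∫ t in Iio x, h t = ∫ t in (0:ℝ)..x, h t := by
  rw [intervalIntegral.integral_of_le hx, ← setIntegral_congr_set (Iio_ae_eq_Iic (a := x)).symm]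
  refine setIntegral_eq_of_subset_of_forall_sdiff_eq_zero measurableSet_Iic
    (fun t ht => ht.2) fun t ht => h0 t ?_
  by_contra hh
  exact ht.2 ⟨not_le.1 hh, ht.1⟩

/-- The weighted datum `exp (-x) * w x` on `(0, 1]`, extended by zero. -/
noncomputable def damp (w : ℝ → ℂ) : ℝ → ℂ :=
  (Ioc 0 1).indicator fun x => (Real.exp (-x) : ℂ) * w x

theorem damp_of_nonpos (w : ℝ → ℂ) : ∀ t ≤ 0, damp w t = 0 := fun _ ht =>
  indicator_of_notMem (fun h => absurd h.1 (not_lt.2 ht)) _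

theorem damp_apply (w : ℝ → ℂ) {x : ℝ} (hx : x ∈ Ioc (0:ℝ) 1) :
    damp w x = (Real.exp (-x) : ℂ) * w x := indicator_of_mem hx _

/-- The Riemann–Liouville integral as a convolution with a gamma density: the factor `exp (-x)`
splits as `exp (-t) * exp (-(x - t))`. -/
theorem fracInt_eq {a : ℝ} (ha : 0 < a) (w : ℝ → ℂ) {x : ℝ} (hx : x ∈ Ioc (0:ℝ) 1) :
    (Real.exp (-x) : ℂ) * fracInt a w x = cv (damp w) (gker a) x := by
  rw [fracInt, if_neg ha.ne', cv_apply, intervalIntegral.integral_of_le hx.1.le,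
    integral_Ioc_eq_integral_Ioo, Complex.real_smul, ← integral_const_mul, ← integral_const_mul,
    ← integral_indicator measurableSet_Ioo]
  congr 1 with t
  by_cases h : t ∈ Ioo 0 x
  · rw [indicator_of_mem h, damp_apply w ⟨h.1, h.2.le.trans hx.2⟩,
      gker_of_pos (by linarith [h.2])]
    have : Real.exp (-x) = Real.exp (-t) * Real.exp (-(x - t)) := by
      rw [← Real.exp_add]; congr 1; ring
    rw [this]
    push_cast
    ring
  · rw [indicator_of_notMem h]
    rcases le_or_gt t 0 with h' | h'
    · rw [damp_of_nonpos w t h', zero_mul]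
    · have : x ≤ t := by
        by_contra hh
        exact h ⟨h', not_le.1 hh⟩
      rw [gker_of_nonpos (by linarith), mul_zero]

theorem memLp_integrable_Ioc {f : ℝ → ℂ} (hf : MemLp f 2) (h0 : ∀ x ∉ Ioc (0:ℝ) 1, f x = 0) :
    Integrable f := by
  have : IntegrableOn f (Ioc 0 1) := (hf.restrict (Ioc 0 1)).integrable (by norm_num)
  rw [← integrable_indicator_iff measurableSet_Ioc] at this
  refine this.congr (ae_of_all _ fun x => ?_)
  by_cases h : x ∈ Ioc (0:ℝ) 1
  · exact indicator_of_mem h _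
  · rw [indicator_of_notMem h, h0 x h]

theorem memLp_indicator_mul {f φ : ℝ → ℂ} (hf : MemLp f 2 (volume.restrict (Ioc 0 1)))
    (hφ : Continuous φ) : MemLp ((Ioc (0:ℝ) 1).indicator fun x => φ x * f x) 2 := by
  rw [memLp_indicator_iff_restrict measurableSet_Ioc]
  obtain ⟨M, hM⟩ := isCompact_Icc.exists_bound_of_continuousOn (s := Icc (0:ℝ) 1) hφ.continuousOn
  refine MemLp.of_le_mul (c := M) hf (hφ.aestronglyMeasurable.mul hf.1) ?_
  filter_upwards [ae_restrict_mem measurableSet_Ioc] with x hx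
  rw [norm_mul]
  exact mul_le_mul_of_nonneg_right (hM x ⟨hx.1.le, hx.2⟩) (norm_nonneg _)

theorem SqIntOn.memLp {w : ℝ → ℂ} (hw : SqIntOn w) : MemLp w 2 (volume.restrict (Ioc 0 1)) :=
  (memLp_two_iff_integrable_sq_norm hw.1).2 hw.2

theorem damp_memLp {w : ℝ → ℂ} (hw : SqIntOn w) : MemLp (damp w) 2 :=
  memLp_indicator_mul hw.memLp (φ := fun x => (Real.exp (-x) : ℂ)) (by fun_prop)

theorem damp_integrable {w : ℝ → ℂ} (hw : SqIntOn w) : Integrable (damp w) :=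
  memLp_integrable_Ioc (damp_memLp hw) fun _ h => indicator_of_notMem h _

/-- The function `I^α w` on `(0, 1]`, extended by zero and written through the convolution of
`fracInt_eq` (see `derivExt_eq`); this makes its measurability and square integrability evident. -/
noncomputable def derivExt (α : ℝ) (w : ℝ → ℂ) : ℝ → ℂ :=
  (Ioc 0 1).indicator fun x => (Real.exp x : ℂ) * cv (damp w) (gker α) x

/-- The primitive `x ↦ ∫₀ˣ I^α w`. -/
noncomputable def prim (α : ℝ) (w : ℝ → ℂ) (x : ℝ) : ℂ := ∫ t in (0:ℝ)..x, derivExt α w t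

section prim

variable {α : ℝ} {w : ℝ → ℂ}

theorem derivExt_memLp (hα : 0 < α) (hw : SqIntOn w) : MemLp (derivExt α w) 2 :=
  memLp_indicator_mul ((cv_memLp (damp_integrable hw) (damp_memLp hw) (ker_integrable hα)).restrict _)
    (φ := fun x => (Real.exp x : ℂ)) (by fun_prop)

theorem derivExt_integrable (hα : 0 < α) (hw : SqIntOn w) : Integrable (derivExt α w) :=
  memLp_integrable_Ioc (derivExt_memLp hα hw) fun _ h => indicator_of_notMem h _

theorem prim_continuous (hα : 0 < α) (hw : SqIntOn w) : Continuous (prim α w) :=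
  intervalIntegral.continuous_primitive (fun _ _ => (derivExt_integrable hα hw).intervalIntegrable) 0

theorem prim_zero : prim α w 0 = 0 := intervalIntegral.integral_same

theorem derivExt_eq (hα : 0 < α) {x : ℝ} (hx : x ∈ Ioc (0:ℝ) 1) :
    derivExt α w x = fracInt α w x := by
  rw [derivExt, indicator_of_mem hx, ← fracInt_eq hα w hx, ← mul_assoc, ← Complex.ofReal_mul,
    ← Real.exp_add, add_neg_cancel, Real.exp_zero, Complex.ofReal_one, one_mul]

theorem InGraphA.eq_prim (hα : 0 < α) {u : ℝ → ℂ} (h : InGraphA α u w) {x : ℝ}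
    (hx : x ∈ Icc (0:ℝ) 1) : u x = u 0 + prim α w x := by
  rw [h.2.2.2 x hx, prim]
  congr 1
  rw [intervalIntegral.integral_of_le hx.1, intervalIntegral.integral_of_le hx.1]
  exact setIntegral_congr_fun measurableSet_Ioc fun t ht =>
    (derivExt_eq hα ⟨ht.1, ht.2.trans hx.2⟩).symm

/-- The primitive of an `L²` function is Hölder continuous of exponent `1/2`. -/
theorem prim_holder (hα : 0 < α) (hw : SqIntOn w) : ∃ M : ℝ, ∀ x ∈ Icc (0:ℝ) 1,
    ∀ y ∈ Icc (0:ℝ) 1, ‖prim α w x - prim α w y‖ ≤ M * |x - y| ^ (1 / 2 : ℝ) := by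
  have hL := derivExt_memLp hα hw
  have hI := derivExt_integrable hα hw
  set A := ∫⁻ t, ‖derivExt α w t‖ₑ ^ 2 with hA
  have hAf : A ≠ ∞ := by
    rw [hA, lintegral_sq_eq_eLpNorm]; exact (ENNReal.pow_lt_top hL.2).ne
  refine ⟨A.toReal ^ (1 / 2 : ℝ), ?_⟩
  intro x _ y _
  rw [prim, prim, intervalIntegral.integral_interval_sub_left hI.intervalIntegrable
    hI.intervalIntegrable, ← Real.mul_rpow ENNReal.toReal_nonneg (abs_nonneg _), ← Real.sqrt_eq_rpow]
  refine Real.le_sqrt_of_sq_le ?_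
  have h1 := lintegral_mul_sq_le (μ := volume.restrict (uIoc y x))
    (F := fun t => ‖derivExt α w t‖ₑ) (k := fun _ => 1) hI.aestronglyMeasurable.enorm.restrict
    aemeasurable_const
  simp only [mul_one, setLIntegral_one] at h1
  have hv : volume (uIoc y x) = ENNReal.ofReal |x - y| := by
    rw [uIoc, Real.volume_Ioc, max_sub_min_eq_abs]
  rw [hv] at h1
  have h2 : ‖∫ t in y..x, derivExt α w t‖ₑ ^ 2 ≤ A * ENNReal.ofReal |x - y| := by
    calc _ ≤ (∫⁻ t in uIoc y x, ‖derivExt α w t‖ₑ) ^ 2 := by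
          gcongr
          rw [← enorm_norm, intervalIntegral.norm_intervalIntegral_eq, enorm_norm]
          exact enorm_integral_le_lintegral_enorm _
      _ ≤ _ := h1.trans (by gcongr; exact setLIntegral_le_lintegral _ _)
  have h3 := ENNReal.toReal_mono (by finiteness) h2
  simpa [ENNReal.toReal_pow, ENNReal.toReal_mul, abs_nonneg] using h3

theorem exp_mul_derivExt {t : ℝ} :
    (Real.exp t : ℂ) * (Ioc (0:ℝ) 1).indicator (cv (damp w) (gker α)) t = derivExt α w t := by
  by_cases h : t ∈ Ioc (0:ℝ) 1 <;> simp [derivExt, h]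

/-- Damped primitive of `I^α w`, by the semigroup law `k_α * k_1 = k_{α+1}`. -/
theorem prim_eq_cv (hα : 0 < α) (hw : SqIntOn w) {x : ℝ} (hx : x ∈ Ioc (0:ℝ) 1) :
    (Real.exp (-x) : ℂ) * prim α w x = cv (damp w) (gker (α + 1)) x := by
  rw [← cv_ker_ker (damp_integrable hw) (damp_memLp hw) hα one_pos (by linarith),
    ← cv_truncate (fun t ht => cv_of_nonpos (damp_of_nonpos w) _ ht) _ hx.2, cv_gker_one,
    integral_Iio_eq _ hx.1.le]
  · simp only [exp_mul_derivExt]; rfl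
  · intro t ht
    rw [exp_mul_derivExt]
    exact indicator_of_notMem (fun h => absurd h.1 (not_lt.2 ht)) _

end prim

/-! ### The two estimates -/

theorem cv_damp_memLp {a : ℝ} (ha : 0 < a) {w : ℝ → ℂ} (hw : SqIntOn w) :
    MemLp (cv (damp w) (gker a)) 2 :=
  cv_memLp (damp_integrable hw) (damp_memLp hw) (ker_integrable ha)

theorem fracInt_eq' {a : ℝ} (ha : 0 < a) (w : ℝ → ℂ) {x : ℝ} (hx : x ∈ Ioc (0:ℝ) 1) :
    fracInt a w x = (Real.exp x : ℂ) * cv (damp w) (gker a) x := by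
  rw [← derivExt_eq ha hx, derivExt, indicator_of_mem hx]

theorem enorm_exp_le {b x : ℝ} (hx : x ≤ b) :
    ‖(Real.exp x : ℂ)‖ₑ ≤ ENNReal.ofReal (Real.exp b) := by
  rw [← ofReal_norm, Complex.norm_real, Real.norm_of_nonneg (Real.exp_pos _).le]
  exact ENNReal.ofReal_le_ofReal (Real.exp_le_exp.2 hx)

theorem lintegral_sq_indicator (f : ℝ → ℂ) :
    ∫⁻ x, ‖(Ioc (0:ℝ) 1).indicator f x‖ₑ ^ 2 = ∫⁻ x in Ioc (0:ℝ) 1, ‖f x‖ₑ ^ 2 := by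
  rw [← lintegral_indicator measurableSet_Ioc]
  congr 1 with x
  by_cases h : x ∈ Ioc (0:ℝ) 1 <;> simp [h]

/-- The seminorm of the primitive is bounded by the `L²` norm of `I^s w`: on `(0, 1]` the damped
primitive is the convolution of the damped `I^s w` with `gker s`. -/
theorem direct_estimate {α s : ℝ} (hα : 0 < α) (h1 : s < 1) (hs : s + s = α + 1) :
    ∃ C : ℝ≥0∞, C ≠ ∞ ∧ ∀ w : ℝ → ℂ, SqIntOn w →
      gagOn s (Ioc 0 1) (Ioc 0 1) (prim α w) ≤
        C * ∫⁻ x in Ioc (0:ℝ) 1, ‖fracInt s w x‖ₑ ^ 2 := by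
  have s0 : 0 < s := by linarith
  set E := ENNReal.ofReal (Real.exp 1)
  set R := ENNReal.ofReal (1 / (2 - 2 * s))
  have hc := gagConst_ne_top s0 h1
  refine ⟨2 * E ^ 2 * gagConst s + 2 * E ^ 2 * (2 * R), by finiteness, fun w hw => ?_⟩
  set g := cv (damp w) (gker s) with hg
  set G := (Ioc (0:ℝ) 1).indicator g with hG
  have G2 : MemLp G 2 := (cv_damp_memLp s0 hw).indicator measurableSet_Ioc
  have G1 : Integrable G := memLp_integrable_Ioc G2 fun _ h => indicator_of_notMem h _
  set V := cv G (gker s)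
  have hV : ∀ x ∈ Ioc (0:ℝ) 1, prim α w x = (Real.exp x : ℂ) * V x := by
    intro x hx
    have e : V x = (Real.exp (-x) : ℂ) * prim α w x := by
      rw [prim_eq_cv hα hw hx, ← hs,
        ← cv_ker_ker (damp_integrable hw) (damp_memLp hw) s0 s0 (by linarith)]
      exact cv_truncate (fun t ht => cv_of_nonpos (damp_of_nonpos w) _ ht) _ hx.2
    rw [e, ← mul_assoc, ← Complex.ofReal_mul, ← Real.exp_add, add_neg_cancel, Real.exp_zero,
      Complex.ofReal_one, one_mul]
  have hGle : ∫⁻ x, ‖G x‖ₑ ^ 2 ≤ ∫⁻ x in Ioc (0:ℝ) 1, ‖fracInt s w x‖ₑ ^ 2 := by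
    rw [hG, lintegral_sq_indicator]
    refine setLIntegral_mono' measurableSet_Ioc fun x hx => ?_
    rw [hg, ← fracInt_eq s0 w hx, enorm_mul]
    gcongr
    refine mul_le_of_le_one_left zero_le ?_
    have := enorm_exp_le (b := 0) (x := -x) (by linarith [hx.1])
    simpa using this
  rw [gagOn_congr s measurableSet_Ioc measurableSet_Ioc hV hV]
  calc _ ≤ 2 * E ^ 2 * gagOn s (Ioc 0 1) (Ioc 0 1) V +
        2 * E ^ 2 * (2 * R) * ∫⁻ x in Ioc (0:ℝ) 1, ‖V x‖ₑ ^ 2 := by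
        refine gagOn_mul_le h1 ?_ ?_ ?_
        · exact (cv_integrable G1 (ker_integrable s0)).aestronglyMeasurable.aemeasurable.restrict
        · intro x hx
          rw [Complex.norm_real, Real.norm_of_nonneg (Real.exp_pos _).le]
          exact Real.exp_le_exp.2 hx.2
        · intro x hx y hy
          rw [← Complex.ofReal_sub, Complex.norm_real, Real.norm_eq_abs]
          exact abs_exp_sub_exp_le hx.2 hy.2
    _ ≤ 2 * E ^ 2 * (gagConst s * ∫⁻ x in Ioc (0:ℝ) 1, ‖fracInt s w x‖ₑ ^ 2) +
        2 * E ^ 2 * (2 * R) * ∫⁻ x in Ioc (0:ℝ) 1, ‖fracInt s w x‖ₑ ^ 2 := by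
        gcongr 2 * E ^ 2 * ?_ + 2 * E ^ 2 * (2 * R) * ?_
        · calc gagOn s (Ioc 0 1) (Ioc 0 1) V ≤ gagOn s univ univ V := by
                unfold gagOn
                exact (lintegral_mono_set (subset_univ _)).trans
                  (lintegral_mono fun x => lintegral_mono_set (subset_univ _))
            _ ≤ gagConst s * ∫⁻ x, ‖G x‖ₑ ^ 2 := smoothing_gag s0 G1 G2
            _ ≤ _ := by gcongr
        · exact (setLIntegral_le_lintegral _ _).trans ((smoothing_L2 s0 G1 G2).trans hGle)
    _ = _ := by ring

/-- The `L²` norm of `I^s w` is bounded by the seminorm of the primitive `v`. The datum `F` is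
chosen so that `cv F (gker 1)` is the damped extension by zero of `v x - v 1 * x`, while
`cv F (gker (1 - s))` differs on `(0, 1]` from the damped `I^s w` by a multiple of `v 1`. -/
theorem inverse_estimate {α s : ℝ} (hα : 0 < α) (h1 : s < 1) (hs : s + s = α + 1) :
    ∃ C : ℝ≥0∞, C ≠ ∞ ∧ ∀ w : ℝ → ℂ, SqIntOn w →
      ∫⁻ x in Ioc (0:ℝ) 1, ‖fracInt s w x‖ₑ ^ 2 ≤
        C * gagOn s (Ioc 0 1) (Ioc 0 1) (prim α w) := by
  have s0 : 1 / 2 < s := by linarith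
  have s1 : 0 < 1 - s := by linarith
  obtain ⟨C₁, hC₁, h₁⟩ := gag_correct s0 h1
  obtain ⟨C₂, hC₂, h₂⟩ := unsmoothing (s := s) (by linarith) h1
  set E := ENNReal.ofReal (Real.exp 1)
  -- the contribution of the linear correction
  set e₁ : ℝ → ℂ := (Ioc (0:ℝ) 1).indicator fun x => (Real.exp (-x) : ℂ) * 1 with he₁
  have e2 : MemLp e₁ 2 := memLp_indicator_mul (f := fun _ => 1)
    (φ := fun x => (Real.exp (-x) : ℂ)) (memLp_const 1) (by fun_prop)
  have e1 : Integrable e₁ := memLp_integrable_Ioc e2 fun _ h => indicator_of_notMem h _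
  set Q := ∫⁻ x, ‖cv e₁ (gker (1 - s)) x‖ₑ ^ 2 with hQ
  have hQf : Q ≠ ∞ := by
    rw [hQ, lintegral_sq_eq_eLpNorm]
    exact (ENNReal.pow_lt_top (cv_memLp e1 e2 (ker_integrable s1)).2).ne
  refine ⟨E ^ 2 * (2 * (C₂ * (C₁ + C₁)) + 2 * (C₁ * Q)), by finiteness, fun w hw => ?_⟩
  obtain ⟨M, hM⟩ := prim_holder hα hw
  set v := prim α w with hv
  obtain ⟨HL, HS, Hv⟩ := h₁ v M (prim_continuous hα hw) hM prim_zero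
  set S := gagOn s (Ioc 0 1) (Ioc 0 1) v
  set p := cv (damp w) (gker α) with hp
  have p0 : ∀ t ≤ 0, p t = 0 := fun t ht => cv_of_nonpos (damp_of_nonpos w) _ ht
  set F : ℝ → ℂ := fun x => (Ioc (0:ℝ) 1).indicator p x - v 1 * e₁ x with hF
  have F2 : MemLp F 2 :=
    ((cv_damp_memLp hα hw).indicator measurableSet_Ioc).sub (e2.const_mul (v 1))
  have F1 : Integrable F := memLp_integrable_Ioc F2 fun x h => by simp [hF, he₁, h]
  have hV : cv F (gker 1) =
      (Ioc 0 1).indicator fun x => (Real.exp (-x) : ℂ) * (v x - v 1 * x) := by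
    have eF : ∀ t, (Real.exp t : ℂ) * F t =
        derivExt α w t - (Ioc (0:ℝ) 1).indicator (fun _ => v 1) t := by
      intro t
      rw [hF, mul_sub, hp, exp_mul_derivExt]
      congr 1
      by_cases h : t ∈ Ioc (0:ℝ) 1
      · rw [he₁, indicator_of_mem h, indicator_of_mem h, mul_one, mul_left_comm,
          ← Complex.ofReal_mul, ← Real.exp_add, add_neg_cancel, Real.exp_zero,
          Complex.ofReal_one, mul_one]
      · simp [he₁, h]
    have z : ∀ t ∉ Ioc (0:ℝ) 1, derivExt α w t - (Ioc (0:ℝ) 1).indicator (fun _ => v 1) t = 0 := by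
      intro t ht
      simp [derivExt, ht]
    have I1 : ∀ x ∈ Icc (0:ℝ) 1, ∫ t in (0:ℝ)..x,
        (derivExt α w t - (Ioc (0:ℝ) 1).indicator (fun _ => v 1) t) = v x - v 1 * x := by
      intro x hx
      rw [intervalIntegral.integral_sub (derivExt_integrable hα hw).intervalIntegrable]
      · congr 1
        rw [intervalIntegral.integral_of_le hx.1, setIntegral_congr_fun (g := fun _ => v 1)
          measurableSet_Ioc fun t ht => indicator_of_mem
            (show t ∈ Ioc (0:ℝ) 1 from ⟨ht.1, ht.2.trans hx.2⟩) _]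
        simp [hx.1, mul_comm]
      · exact ((integrable_indicator_iff measurableSet_Ioc).2
          (integrableOn_const (by simp))).intervalIntegrable
    ext x
    rw [cv_gker_one]
    simp only [eF]
    rcases le_or_gt x 0 with hx | hx
    · rw [setIntegral_congr_fun (g := fun _ => 0) measurableSet_Iio fun t ht =>
        z t fun h => absurd h.1 (by have : t < x := ht; linarith),
        indicator_of_notMem fun h => absurd h.1 (not_lt.2 hx)]
      simp
    rw [integral_Iio_eq (fun t ht => z t fun h => absurd h.1 (not_lt.2 ht)) hx.le]
    rcases le_or_gt x 1 with hx1 | hx1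
    · rw [I1 x ⟨hx.le, hx1⟩, indicator_of_mem (show x ∈ Ioc (0:ℝ) 1 from ⟨hx, hx1⟩)]
    · have : ∫ t in (0:ℝ)..x, (derivExt α w t - (Ioc (0:ℝ) 1).indicator (fun _ => v 1) t) =
          ∫ t in (0:ℝ)..1, (derivExt α w t - (Ioc (0:ℝ) 1).indicator (fun _ => v 1) t) := by
        rw [intervalIntegral.integral_of_le hx.le, intervalIntegral.integral_of_le zero_le_one]
        exact setIntegral_eq_of_subset_of_forall_sdiff_eq_zero measurableSet_Ioc
          (Ioc_subset_Ioc_right hx1.le) fun t ht => z t ht.2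
      rw [this, I1 1 (by simp), indicator_of_notMem fun h => absurd h.2 (not_le.2 hx1)]
      simp
  have hFG : ∫⁻ x, ‖cv F (gker (1 - s)) x‖ₑ ^ 2 ≤ C₂ * (C₁ + C₁) * S := by
    refine (h₂ F F1 F2).trans ?_
    rw [hV, mul_assoc, add_mul]
    gcongr
    rw [lintegral_sq_indicator]
    refine le_trans (setLIntegral_mono' measurableSet_Ioc fun x hx => ?_) HL
    rw [enorm_mul]
    gcongr
    refine mul_le_of_le_one_left zero_le ?_
    have := enorm_exp_le (b := 0) (x := -x) (by linarith [hx.1])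
    simpa using this
  have split : ∀ᵐ x, x ∈ Ioc (0:ℝ) 1 → fracInt s w x =
      (Real.exp x : ℂ) * (cv F (gker (1 - s)) x + v 1 * cv e₁ (gker (1 - s)) x) := by
    have x1 := F1.ae_convolution_exists (ContinuousLinearMap.mul ℂ ℂ) (ker_integrable s1)
    have x2 := e1.ae_convolution_exists (ContinuousLinearMap.mul ℂ ℂ) (ker_integrable s1)
    filter_upwards [x1, x2] with x hx1 hx2 hx
    rw [fracInt_eq' (by linarith) w hx]
    congr 1
    have : cv (damp w) (gker s) = cv p (gker (1 - s)) := by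
      rw [hp, cv_ker_ker (damp_integrable hw) (damp_memLp hw) hα s1 (by linarith)]
      congr 2; linarith
    have i1 : Integrable fun t => F t * gker (1 - s) (x - t) := hx1
    have i2 : Integrable fun t => e₁ t * gker (1 - s) (x - t) := hx2
    rw [this, ← cv_truncate p0 _ hx.2, cv_apply, cv_apply, cv_apply, ← integral_const_mul,
      ← integral_add i1 (i2.const_mul _)]
    congr 1 with t
    simp only [hF]
    ring
  calc ∫⁻ x in Ioc (0:ℝ) 1, ‖fracInt s w x‖ₑ ^ 2
      ≤ ∫⁻ x in Ioc (0:ℝ) 1, E ^ 2 * (2 * ‖cv F (gker (1 - s)) x‖ₑ ^ 2 +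
        2 * (‖v 1‖ₑ ^ 2 * ‖cv e₁ (gker (1 - s)) x‖ₑ ^ 2)) := by
        refine lintegral_mono_ae ?_
        filter_upwards [ae_restrict_mem measurableSet_Ioc, ae_restrict_of_ae split] with x hx hsx
        rw [hsx hx, enorm_mul, mul_pow, ← mul_pow ‖v 1‖ₑ]
        gcongr
        · exact enorm_exp_le hx.2
        · refine (enorm_add_sq_le _ _).trans_eq ?_
          rw [enorm_mul]
    _ ≤ ∫⁻ x, E ^ 2 * (2 * ‖cv F (gker (1 - s)) x‖ₑ ^ 2 +
        2 * (‖v 1‖ₑ ^ 2 * ‖cv e₁ (gker (1 - s)) x‖ₑ ^ 2)) := setLIntegral_le_lintegral _ _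
    _ = E ^ 2 * (2 * (∫⁻ x, ‖cv F (gker (1 - s)) x‖ₑ ^ 2) + 2 * (‖v 1‖ₑ ^ 2 * Q)) := by
        rw [lintegral_const_mul' _ _ (by finiteness), lintegral_add_left',
          lintegral_const_mul' _ _ (by finiteness), lintegral_const_mul' _ _ (by finiteness),
          lintegral_const_mul' _ _ (by finiteness)]
        exact (((cv_integrable F1 (ker_integrable s1)).aestronglyMeasurable.enorm).pow_const
          2).const_mul _
    _ ≤ E ^ 2 * (2 * (C₂ * (C₁ + C₁) * S) + 2 * (C₁ * S * Q)) := by gcongr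
    _ = _ := by ring

theorem L2normSq_eq {f : ℝ → ℂ} (hf : AEStronglyMeasurable f (volume.restrict (Ioc 0 1))) :
    L2normSq f = (∫⁻ x in Ioc (0:ℝ) 1, ‖f x‖ₑ ^ 2).toReal := by
  have hm : AEStronglyMeasurable (fun x => ‖f x‖ ^ 2) (volume.restrict (Ioc 0 1)) :=
    hf.norm.pow 2
  rw [L2normSq, intervalIntegral.integral_of_le zero_le_one,
    integral_eq_lintegral_of_nonneg_ae (ae_of_all _ fun x => by positivity) hm]
  congr 2 with x
  rw [ENNReal.ofReal_pow (norm_nonneg _), ofReal_norm]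

/-- The iterated Bochner integral defining `sobSeminormSq` agrees with the `ℝ≥0∞`-valued one.
Finiteness of the latter excludes the junk value `0` of a non-integrable function. -/
theorem sobSeminormSq_eq {s : ℝ} {f : ℝ → ℂ} (hf : Continuous f)
    (hfin : gagOn s (Ioc 0 1) (Ioc 0 1) f ≠ ∞) :
    sobSeminormSq s f = (gagOn s (Ioc 0 1) (Ioc 0 1) f).toReal := by
  have m : Measurable fun q : ℝ × ℝ =>
      ‖f q.1 - f q.2‖ₑ ^ 2 * ENNReal.ofReal (|q.1 - q.2| ^ (-(1 + 2 * s))) := by fun_prop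
  have mi : Measurable fun x => ∫⁻ y in Ioc (0:ℝ) 1,
      ‖f x - f y‖ₑ ^ 2 * ENNReal.ofReal (|x - y| ^ (-(1 + 2 * s))) := m.lintegral_prod_right'
  rw [sobSeminormSq, intervalIntegral.integral_of_le zero_le_one, gagOn,
    ← integral_toReal mi.aemeasurable (ae_lt_top mi hfin)]
  congr 1 with x
  rw [intervalIntegral.integral_of_le zero_le_one,
    integral_eq_lintegral_of_nonneg_ae (ae_of_all _ fun y => by positivity)
      (Measurable.aestronglyMeasurable (by fun_prop))]
  congr 2 with y
  rw [Real.rpow_neg (abs_nonneg _), div_eq_mul_inv, ENNReal.ofReal_mul (by positivity),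
    ENNReal.ofReal_pow (norm_nonneg _), ofReal_norm]

/-- On the interval `u` equals `v - v 1` with `v` the primitive of `I^α w`, because `u 1 = 0`. -/
theorem sobNormSq_eq {α s : ℝ} (hα : 0 < α) {u w : ℝ → ℂ} (h : InGraphA α u w)
    (hfin : gagOn s (Ioc 0 1) (Ioc 0 1) (prim α w) ≠ ∞) :
    sobNormSq s u = (∫⁻ x in Ioc (0:ℝ) 1, ‖prim α w x - prim α w 1‖ₑ ^ 2).toReal +
      (gagOn s (Ioc 0 1) (Ioc 0 1) (prim α w)).toReal := by
  have c := prim_continuous hα h.2.1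
  have hu0 : u 0 = - prim α w 1 := by
    have := h.eq_prim hα (x := 1) (by simp)
    rw [h.1] at this
    exact eq_neg_of_add_eq_zero_left this.symm
  have hu : ∀ x ∈ Icc (0:ℝ) 1, u x = prim α w x - prim α w 1 := fun x hx => by
    rw [h.eq_prim hα hx, hu0]; ring
  rw [sobNormSq]
  congr 1
  · rw [← L2normSq_eq (by fun_prop)]
    refine intervalIntegral.integral_congr fun x hx => ?_
    rw [uIcc_of_le zero_le_one] at hx
    simp only [hu x hx]
  · rw [← sobSeminormSq_eq c hfin]
    refine intervalIntegral.integral_congr fun x hx => ?_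
    refine intervalIntegral.integral_congr fun y hy => ?_
    rw [uIcc_of_le zero_le_one] at hx hy
    simp only [hu x hx, hu y hy, sub_sub_sub_cancel_right]

/-- on the domain of A, the L2 norm of D^{(1+a)/2}u = I^{(1+a)/2}w and
the H^{(1+a)/2}(0,1) norm of u are equivalent. -/
theorem statement_3 (α : ℝ) (hα : α ∈ Set.Ioo (0:ℝ) 1) :
    ∃ c > (0:ℝ), ∀ u w : ℝ → ℂ, InGraphA α u w →
      c⁻¹ * Real.sqrt (sobNormSq ((1 + α) / 2) u) ≤
          Real.sqrt (L2normSq (fracInt ((1 + α) / 2) w)) ∧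
      Real.sqrt (L2normSq (fracInt ((1 + α) / 2) w)) ≤
          c * Real.sqrt (sobNormSq ((1 + α) / 2) u) := by
  set s := (1 + α) / 2 with hs
  have s0 : 1 / 2 < s := by linarith [hα.1]
  have s1 : s < 1 := by linarith [hα.2]
  have ss : s + s = α + 1 := by rw [hs]; ring
  obtain ⟨C₁, hC₁, h₁⟩ := direct_estimate hα.1 s1 ss
  obtain ⟨C₂, hC₂, h₂⟩ := inverse_estimate hα.1 s1 ss
  obtain ⟨C₃, hC₃, h₃⟩ := gag_correct s0 s1
  set K := (4 * C₃ * C₁).toReal + C₁.toReal + C₂.toReal + 1 with hK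
  have K0 : 0 < K := by positivity
  refine ⟨Real.sqrt K, Real.sqrt_pos.2 K0, fun u w h => ?_⟩
  have hw := h.2.1
  obtain ⟨M, hM⟩ := prim_holder hα.1 hw
  obtain ⟨HL, -, Hv⟩ := h₃ _ M (prim_continuous hα.1 hw) hM prim_zero
  have D := h₁ w hw
  have I := h₂ w hw
  set v := prim α w with hv
  set S := gagOn s (Ioc 0 1) (Ioc 0 1) v
  have gm : MemLp (derivExt s w) 2 := derivExt_memLp (by linarith) hw
  have ge : ∫⁻ x in Ioc (0:ℝ) 1, ‖fracInt s w x‖ₑ ^ 2 = ∫⁻ x, ‖derivExt s w x‖ₑ ^ 2 := by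
    rw [derivExt, lintegral_sq_indicator]
    exact setLIntegral_congr_fun measurableSet_Ioc fun x hx => by
      simp only [fracInt_eq' (by linarith : 0 < s) w hx]
  have gfin : ∫⁻ x in Ioc (0:ℝ) 1, ‖fracInt s w x‖ₑ ^ 2 ≠ ∞ := by
    rw [ge, lintegral_sq_eq_eLpNorm]
    exact (ENNReal.pow_lt_top gm.2).ne
  have gL : L2normSq (fracInt s w) = (∫⁻ x in Ioc (0:ℝ) 1, ‖fracInt s w x‖ₑ ^ 2).toReal := by
    refine L2normSq_eq (gm.1.restrict.congr ?_)
    filter_upwards [ae_restrict_mem measurableSet_Ioc] with x hx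
    exact derivExt_eq (by linarith) hx
  set G := ∫⁻ x in Ioc (0:ℝ) 1, ‖fracInt s w x‖ₑ ^ 2
  have Sfin : S ≠ ∞ := ne_top_of_le_ne_top (by finiteness) D
  have L : ∫⁻ x in Ioc (0:ℝ) 1, ‖v x - v 1‖ₑ ^ 2 ≤ 4 * C₃ * S := by
    calc _ ≤ ∫⁻ x in Ioc (0:ℝ) 1, (2 * ‖v x - v 1 * x‖ₑ ^ 2 + 2 * ‖v 1‖ₑ ^ 2) := by
          refine setLIntegral_mono' measurableSet_Ioc fun x hx => ?_
          rw [show v x - v 1 = (v x - v 1 * x) + v 1 * ((x - 1 : ℝ) : ℂ) by push_cast; ring]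
          refine (enorm_add_sq_le _ _).trans ?_
          gcongr
          rw [enorm_mul]
          refine mul_le_of_le_one_right zero_le ?_
          rw [← ofReal_norm, Complex.norm_real]
          refine ENNReal.ofReal_le_one.2 ?_
          rw [Real.norm_eq_abs, abs_le]
          exact ⟨by linarith [hx.1], by linarith [hx.2]⟩
      _ = 2 * (∫⁻ x in Ioc (0:ℝ) 1, ‖v x - v 1 * x‖ₑ ^ 2) + 2 * ‖v 1‖ₑ ^ 2 := by
          rw [lintegral_add_right _ measurable_const, lintegral_const_mul' _ _ (by finiteness)]
          simp
      _ ≤ 2 * (C₃ * S) + 2 * (C₃ * S) := by gcongr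
      _ = _ := by ring
  rw [gL, sobNormSq_eq hα.1 h Sfin]
  set N := (∫⁻ x in Ioc (0:ℝ) 1, ‖v x - v 1‖ₑ ^ 2).toReal + S.toReal with hN
  have D' : S.toReal ≤ C₁.toReal * G.toReal := by
    rw [← ENNReal.toReal_mul]; exact ENNReal.toReal_mono (by finiteness) D
  have L' : (∫⁻ x in Ioc (0:ℝ) 1, ‖v x - v 1‖ₑ ^ 2).toReal ≤ (4 * C₃ * C₁).toReal * G.toReal := by
    rw [← ENNReal.toReal_mul]
    refine ENNReal.toReal_mono (by finiteness) (L.trans ?_)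
    rw [mul_assoc (4 * C₃)]
    gcongr
  have I' : G.toReal ≤ C₂.toReal * S.toReal := by
    rw [← ENNReal.toReal_mul]; exact ENNReal.toReal_mono (by finiteness) I
  have a1 : 0 ≤ (4 * C₃ * C₁).toReal := ENNReal.toReal_nonneg
  have a2 : 0 ≤ C₁.toReal := ENNReal.toReal_nonneg
  have a3 : 0 ≤ C₂.toReal := ENNReal.toReal_nonneg
  have a4 : 0 ≤ G.toReal := ENNReal.toReal_nonneg
  have a5 : 0 ≤ S.toReal := ENNReal.toReal_nonneg
  have a6 : 0 ≤ (∫⁻ x in Ioc (0:ℝ) 1, ‖v x - v 1‖ₑ ^ 2).toReal := ENNReal.toReal_nonneg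
  constructor
  · rw [inv_mul_le_iff₀ (Real.sqrt_pos.2 K0), ← Real.sqrt_mul K0.le]
    refine Real.sqrt_le_sqrt ?_
    rw [hN, hK]
    nlinarith
  · rw [← Real.sqrt_mul K0.le]
    refine Real.sqrt_le_sqrt ?_
    have h5 : C₂.toReal * S.toReal ≤ K * N := by
      apply mul_le_mul <;> first | positivity | (rw [hK]; linarith) | (rw [hN]; linarith)
    linarith
end

section
/- Let α ∈ (0,1) and let λ ∈ ℂ satisfy either λ = 0 or |arg λ| ≤ π(α+1)/2. Then for every g ∈ L²(0,1) there exist an absolutely continuous function u : [0,1] → ℂ and a function w ∈ L²(0,1) such that u(1) = 0, u′(x) = (I^α w)(x) for a.e. x ∈ (0,1), and λu(x) − w(x) = g(x) for a.e. x ∈ (0,1). In other words, the range of λI − (d/dx)D^α on its domain is all of L²(0,1) for each λ in the sector {z ∈ ℂ : |arg z| ≤ π(α+1)/2} ∪ {0}. -/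
/-!
Integrating `u' = I^α w` and substituting `w = λu - g` turns the problem into the Volterra equation
`u = c + I^{α+1}(λu - g)`, where `c = u(0)` is free. Volterra equations are always solvable
(`exists_volterra`), so with `φ = 1 + λ I^{α+1} φ` and `ψ = I^{α+1} g + λ I^{α+1} ψ` the candidates
are `u = cφ - ψ`, and the condition `u(1) = 0` can be met as soon as `φ(1) ≠ 0`.

Nonvanishing of `φ(1)` is where the sector enters (`solution_ne_zero`). Suppose `φ(1) = 0` and put
`v = φ' = λ I^α φ`. By the semigroup law `I^{1-α} v = λ ∫₀ˣ φ`, and integration by parts gives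
`∫ (I^{1-α} v) conj v = -λ ∫ |φ|²`. For `0 ≤ arg λ ≤ π(α+1)/2` the number `e^{-iπα/2} λ` lies in the
closed right half plane, so `Re (e^{-iπα/2} ∫ (I^{1-α} v) conj v) ≤ 0`. On the other hand, up to a
positive factor, this real part is the quadratic form of the kernel `(i(x-p))^{-α}` at `v`
(`kernel_split`), and that kernel is the limit as `ε → 0⁺` of
`(ε + it)^{-α} = Γ(α)⁻¹ ∫₀^∞ s^{α-1} e^{-(ε+it)s} ds`, whose form is
`Γ(α)⁻¹ ∫₀^∞ s^{α-1} e^{-εs} |v̂(s)|² ds` (`regularized_energy`, `tendsto_regularized`). Hence the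
Fourier transform `v̂` of `v` on `[0,1]` vanishes on the positive half line, so everywhere because it
is entire, and `v = 0` (`fourierI_eq_zero`, `eq_zero_of_fourier_eq_zero`). Then `φ` is constantly
`1`, contradicting `φ(1) = 0`. Negative arguments reduce to this case by complex conjugation.
-/

open MeasureTheory Set Filter

/-! ### Riemann–Liouville integrals as convolutions -/

open scoped Convolution

/-- The Riemann–Liouville integral without its normalization: `RL a f = Γ(a) I^a f`. -/
noncomputable def RL (a : ℝ) (f : ℝ → ℂ) (x : ℝ) : ℂ :=
  ∫ p in (0:ℝ)..x, (((x - p) ^ (a - 1) : ℝ) : ℂ) * f p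

/-- The kernel `t^(a-1)` cut off to `(0,1]`. Since only `0 < x - p ≤ 1` matters for `x, p ∈ (0,1]`,
`RL a f` is the convolution of `kern a` with `f` cut off to `(0,1]`, and both are integrable on `ℝ`. -/
noncomputable def kern (a : ℝ) : ℝ → ℂ :=
  (Ioc (0:ℝ) 1).indicator (fun t => ((t ^ (a - 1) : ℝ) : ℂ))

/-- `f` on `(0,1]`, extended by zero. -/
noncomputable def cut (f : ℝ → ℂ) : ℝ → ℂ := (Ioc (0:ℝ) 1).indicator f

lemma integrable_kern {a : ℝ} (ha : 0 < a) : Integrable (kern a) := by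
  unfold kern
  rw [integrable_indicator_iff measurableSet_Ioc]
  have h : IntervalIntegrable (fun t : ℝ => t ^ (a - 1)) volume 0 1 :=
    intervalIntegral.intervalIntegrable_rpow' (by linarith)
  rw [intervalIntegrable_iff_integrableOn_Ioc_of_le zero_le_one] at h
  exact h.ofReal

lemma integrable_cut {f : ℝ → ℂ} (hf : IntegrableOn f (Ioc 0 1)) : Integrable (cut f) := by
  unfold cut
  rwa [integrable_indicator_iff measurableSet_Ioc]

lemma conv_eq_RL (a : ℝ) (f : ℝ → ℂ) {x : ℝ} (hx : x ∈ Icc (0:ℝ) 1) :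
    (cut f ⋆[ContinuousLinearMap.mul ℝ ℂ] kern a) x = RL a f x := by
  unfold RL
  rw [intervalIntegral.integral_of_le hx.1, integral_Ioc_eq_integral_Ioo,
    ← integral_indicator measurableSet_Ioo, convolution_def]
  congr 1
  ext p
  simp only [cut, kern, ContinuousLinearMap.mul_apply', indicator_apply, mem_Ioc, mem_Ioo]
  by_cases h : 0 < p ∧ p < x
  · rw [if_pos h, if_pos ⟨h.1, by linarith [h.2, hx.2]⟩,
      if_pos ⟨by linarith, by linarith [hx.2]⟩, mul_comm]
  · rw [if_neg h]
    by_cases h0 : 0 < p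
    · rw [if_neg (c := 0 < x - p ∧ _) (fun h' => h ⟨h0, by linarith [h'.1]⟩), mul_zero]
    · rw [if_neg (fun h' => h0 h'.1), zero_mul]

lemma conv_of_nonpos (a : ℝ) (f : ℝ → ℂ) {x : ℝ} (hx : x ≤ 0) :
    (cut f ⋆[ContinuousLinearMap.mul ℝ ℂ] kern a) x = 0 := by
  rw [convolution_def]
  refine (integral_congr_ae (Eventually.of_forall fun p => ?_)).trans (integral_zero' ℝ ℂ)
  simp only [cut, kern, ContinuousLinearMap.mul_apply', indicator_apply, mem_Ioc, Pi.zero_apply]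
  by_cases h0 : 0 < p
  · rw [if_neg (c := 0 < x - p ∧ _) (fun h' => by linarith [h'.1]), mul_zero]
  · rw [if_neg (fun h' => h0 h'.1), zero_mul]

/-- `I^b` of a power, which is the beta integral. -/
lemma RL_rpow {a b : ℝ} (ha : 0 < a) (hb : 0 < b) {x : ℝ} (hx : 0 < x) :
    RL b (fun t => ((t ^ (a - 1) : ℝ) : ℂ)) x =
      ((Real.Gamma a * Real.Gamma b / Real.Gamma (a + b) : ℝ) : ℂ) * ((x ^ (a + b - 1) : ℝ) : ℂ) := by
  have hG : Complex.betaIntegral a b =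
      ((Real.Gamma a * Real.Gamma b / Real.Gamma (a + b) : ℝ) : ℂ) := by
    have h := Complex.Gamma_mul_Gamma_eq_betaIntegral (s := (a : ℂ)) (t := (b : ℂ))
      (by simpa using ha) (by simpa using hb)
    have h2 : Complex.Gamma ((a : ℂ) + b) = ((Real.Gamma (a + b) : ℝ) : ℂ) := by
      rw [← Complex.ofReal_add, Complex.Gamma_ofReal]
    rw [h2, Complex.Gamma_ofReal, Complex.Gamma_ofReal] at h
    have h3 : ((Real.Gamma (a + b) : ℝ) : ℂ) ≠ 0 := by
      exact_mod_cast (Real.Gamma_pos_of_pos (add_pos ha hb)).ne'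
    push_cast
    rw [h]
    field_simp
  rw [← hG]
  have h := Complex.betaIntegral_scaled (a : ℂ) (b : ℂ) hx
  rw [mul_comm, Complex.ofReal_cpow hx.le]
  push_cast
  rw [← h]
  unfold RL
  rw [intervalIntegral.integral_of_le hx.le, intervalIntegral.integral_of_le hx.le]
  refine setIntegral_congr_fun measurableSet_Ioc fun t ht => ?_
  simp only
  rw [Complex.ofReal_cpow ht.1.le, Complex.ofReal_cpow (by linarith [ht.2])]
  push_cast
  ring

/-- Semigroup law `I^b I^a = I^(a+b)` for unnormalized integrals, at a point where the iterated
integral converges absolutely. It is associativity of convolution combined with `RL_rpow`. -/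
lemma RL_RL {a b : ℝ} (ha : 0 < a) (hb : 0 < b) {w : ℝ → ℂ} (hw : IntegrableOn w (Ioc 0 1))
    {x : ℝ} (hx : x ∈ Icc (0:ℝ) 1)
    (hex : ConvolutionExistsAt (fun t => ‖cut w t‖)
      ((fun t => ‖kern a t‖) ⋆[ContinuousLinearMap.mul ℝ ℝ] (fun t => ‖kern b t‖)) x
      (ContinuousLinearMap.mul ℝ ℝ) volume) :
    RL b (RL a w) x =
      ((Real.Gamma a * Real.Gamma b / Real.Gamma (a + b) : ℝ) : ℂ) * RL (a + b) w x := by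
  have hka := integrable_kern ha
  have hkb := integrable_kern hb
  have hcw := integrable_cut hw
  have key := convolution_assoc (ContinuousLinearMap.mul ℝ ℂ) (ContinuousLinearMap.mul ℝ ℂ)
    (ContinuousLinearMap.mul ℝ ℂ) (ContinuousLinearMap.mul ℝ ℂ)
    (fun x y z => by simp [mul_assoc]) (x₀ := x) hcw.aestronglyMeasurable hka.aestronglyMeasurable
    hkb.aestronglyMeasurable
    (hcw.ae_convolution_exists (ContinuousLinearMap.mul ℝ ℂ) hka)
    (hka.norm.ae_convolution_exists (ContinuousLinearMap.mul ℝ ℝ) hkb.norm) hex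
  have h1 : RL b (RL a w) x =
      ((cut w ⋆[ContinuousLinearMap.mul ℝ ℂ] kern a) ⋆[ContinuousLinearMap.mul ℝ ℂ] kern b) x := by
    rw [← conv_eq_RL b _ hx, convolution_def, convolution_def]
    congr 1
    ext p
    simp only [ContinuousLinearMap.mul_apply']
    by_cases h0 : 0 < p
    · by_cases h1 : p ≤ 1
      · rw [conv_eq_RL a w ⟨h0.le, h1⟩, cut, indicator_of_mem (by exact ⟨h0, h1⟩)]
      · have : kern b (x - p) = 0 := by
          rw [kern, indicator_of_notMem]
          intro h
          linarith [h.1, hx.2]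
        rw [this, mul_zero, mul_zero]
    · rw [conv_of_nonpos a w (not_lt.1 h0), cut, indicator_of_notMem (fun h => h0 h.1)]
  rw [h1, key, ← conv_eq_RL (a + b) _ hx, convolution_def,
    convolution_def, ← integral_const_mul]
  congr 1
  ext p
  simp only [ContinuousLinearMap.mul_apply']
  by_cases h0 : p ∈ Ioc (0:ℝ) 1
  · by_cases h1 : 0 < x - p
    · have h2 : x - p ≤ 1 := by linarith [hx.2, h0.1]
      have : (kern a ⋆[ContinuousLinearMap.mul ℝ ℂ] kern b) (x - p) =
          RL b (fun t => ((t ^ (a - 1) : ℝ) : ℂ)) (x - p) :=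
        conv_eq_RL b _ ⟨h1.le, h2⟩
      rw [this, RL_rpow ha hb h1, kern, indicator_of_mem (by exact ⟨h1, h2⟩)]
      ring
    · have : (kern a ⋆[ContinuousLinearMap.mul ℝ ℂ] kern b) (x - p) = 0 :=
        conv_of_nonpos b _ (not_lt.1 h1)
      rw [this, kern, indicator_of_notMem (fun h => h1 h.1)]
      ring
  · rw [cut, indicator_of_notMem h0]
    ring

lemma RL_RL_ae {a b : ℝ} (ha : 0 < a) (hb : 0 < b) {w : ℝ → ℂ} (hw : IntegrableOn w (Ioc 0 1)) :
    ∀ᵐ x ∂(volume.restrict (Ioc (0:ℝ) 1)), RL b (RL a w) x =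
      ((Real.Gamma a * Real.Gamma b / Real.Gamma (a + b) : ℝ) : ℂ) * RL (a + b) w x := by
  have h := (integrable_cut hw).norm.ae_convolution_exists (ContinuousLinearMap.mul ℝ ℝ)
    ((integrable_kern ha).norm.integrable_convolution (ContinuousLinearMap.mul ℝ ℝ)
      (integrable_kern hb).norm)
  rw [ae_restrict_iff' measurableSet_Ioc]
  filter_upwards [h] with x hx hx'
  exact RL_RL ha hb hw ⟨hx'.1.le, hx'.2⟩ hx

/-- The semigroup law for `b = 1`, where it holds at every point of `[0,1]`. -/
lemma RL_one_RL {a : ℝ} (ha : 0 < a) {w : ℝ → ℂ} (hw : IntegrableOn w (Ioc 0 1))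
    {x : ℝ} (hx : x ∈ Icc (0:ℝ) 1) :
    ∫ t in (0:ℝ)..x, RL a w t = ((a⁻¹ : ℝ) : ℂ) * RL (a + 1) w x := by
  have h0 : ∫ t in (0:ℝ)..x, RL a w t = RL 1 (RL a w) x := by
    simp [RL]
  have hc : a⁻¹ = Real.Gamma a * Real.Gamma 1 / Real.Gamma (a + 1) := by
    have := (Real.Gamma_pos_of_pos ha).ne'
    rw [Real.Gamma_one, Real.Gamma_add_one ha.ne']
    field_simp
  rw [h0, hc]
  refine RL_RL ha one_pos hw hx ?_
  -- for `b = 1` the kernel is bounded, so the double integral converges at every point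
  have hka := (integrable_kern ha).norm
  have hG := hka.integrable_convolution (ContinuousLinearMap.mul ℝ ℝ)
    (integrable_kern one_pos).norm
  unfold ConvolutionExistsAt
  simp only [ContinuousLinearMap.mul_apply']
  refine (integrable_cut hw).norm.mul_bdd (c := ∫ t, ‖kern a t‖)
    ((hG.comp_sub_left x).aestronglyMeasurable) (Eventually.of_forall fun p => ?_)
  rw [convolution_def]
  refine norm_integral_le_of_norm_le hka (Eventually.of_forall fun t => ?_)
  simp only [ContinuousLinearMap.mul_apply', norm_mul, norm_norm]
  refine mul_le_of_le_one_right (norm_nonneg _) ?_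
  rw [kern, indicator_apply]
  split_ifs <;> simp

lemma intervalIntegrable_RL {a : ℝ} (ha : 0 < a) {w : ℝ → ℂ} (hw : IntegrableOn w (Ioc 0 1)) :
    IntervalIntegrable (RL a w) volume 0 1 := by
  rw [intervalIntegrable_iff_integrableOn_Ioc_of_le zero_le_one]
  refine (((integrable_cut hw).integrable_convolution (ContinuousLinearMap.mul ℝ ℂ)
    (integrable_kern ha)).integrableOn).congr_fun (fun x hx => ?_) measurableSet_Ioc
  exact conv_eq_RL a w ⟨hx.1.le, hx.2⟩

/-! ### Laplace and Fourier transforms -/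

/-- A two-sided Laplace transform is complex differentiable at `z₀` as soon as it converges
absolutely with a little exponential room around `z₀`. -/
lemma differentiableAt_laplace {μ : Measure ℝ} {f : ℝ → ℂ} {z₀ : ℂ} {η : ℝ} (hη : 0 < η)
    (hf : AEStronglyMeasurable f μ)
    (h_int : Integrable (fun s : ℝ => Real.exp (z₀.re * s + η * |s|) * ‖f s‖) μ) :
    DifferentiableAt ℂ (fun z : ℂ => ∫ s : ℝ, Complex.exp (z * s) * f s ∂μ) z₀ := by
  have hm : ∀ z : ℂ, AEStronglyMeasurable (fun s : ℝ => Complex.exp (z * s) * f s) μ := fun z =>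
    (Continuous.aestronglyMeasurable (by fun_prop)).mul hf
  refine (hasDerivAt_integral_of_dominated_loc_of_deriv_le
    (F' := fun z s => (s : ℂ) * Complex.exp (z * s) * f s)
    (bound := fun s => (2 / η) * (Real.exp (z₀.re * s + η * |s|) * ‖f s‖))
    (Metric.ball_mem_nhds z₀ (half_pos hη)) (Eventually.of_forall hm) ?_ ?_ ?_
    (h_int.const_mul _) ?_).2.differentiableAt
  · refine h_int.mono' (hm z₀) (Eventually.of_forall fun s => ?_)
    rw [norm_mul, Complex.norm_exp]
    gcongr
    simp
    positivity
  · exact (Continuous.aestronglyMeasurable (by fun_prop)).mul hf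
  · refine Eventually.of_forall fun s z hz => ?_
    rw [norm_mul, norm_mul, Complex.norm_exp, Complex.norm_real, Real.norm_eq_abs, ← mul_assoc]
    refine mul_le_mul_of_nonneg_right ?_ (norm_nonneg _)
    have h1 : (z * s).re ≤ z₀.re * s + η / 2 * |s| := by
      have h2 : |(z - z₀).re * s| ≤ η / 2 * |s| := by
        rw [abs_mul]
        gcongr
        exact (Complex.abs_re_le_norm _).trans (by simpa [dist_eq_norm] using (Metric.mem_ball.1 hz).le)
      have h3 := (le_abs_self _).trans h2
      have h4 : (z * s).re = z.re * s := by simp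
      rw [h4]
      rw [Complex.sub_re, sub_mul] at h3
      linarith
    have h5 : |s| ≤ 2 / η * Real.exp (η / 2 * |s|) := by
      have h6 := Real.add_one_le_exp (η / 2 * |s|)
      calc |s| = 2 / η * (η / 2 * |s|) := by field_simp
        _ ≤ _ := by gcongr; linarith
    calc |s| * Real.exp (z * s).re
        ≤ (2 / η * Real.exp (η / 2 * |s|)) * Real.exp (z₀.re * s + η / 2 * |s|) := by gcongr
      _ = 2 / η * Real.exp (z₀.re * s + η * |s|) := by
        rw [mul_assoc, ← Real.exp_add]
        ring_nf
  · refine Eventually.of_forall fun s z _ => ?_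
    have := ((hasDerivAt_mul_const (s : ℂ) (x := z)).cexp).mul_const (f s)
    convert! this using 1
    ring

/-- Identity theorem: holomorphic functions that agree on the positive reals agree on every
connected open set containing `1`. -/
lemma eqOn_of_eq_real {f g : ℂ → ℂ} {U : Set ℂ} (hU : IsOpen U) (hc : IsPreconnected U)
    (hf : DifferentiableOn ℂ f U) (hg : DifferentiableOn ℂ g U) (h1 : (1 : ℂ) ∈ U)
    (h : ∀ r : ℝ, 0 < r → f r = g r) : EqOn f g U := by
  refine (hf.analyticOnNhd hU).eqOn_of_preconnected_of_frequently_eq (hg.analyticOnNhd hU) hc h1 ?_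
  have ht : Tendsto (fun r : ℝ => (r : ℂ)) (nhdsWithin 1 {1}ᶜ) (nhdsWithin 1 {1}ᶜ) := by
    refine tendsto_nhdsWithin_of_tendsto_nhds_of_eventually_within _ ?_ ?_
    · exact (Complex.continuous_ofReal.tendsto' 1 1 (by simp)).mono_left nhdsWithin_le_nhds
    · filter_upwards [self_mem_nhdsWithin] with r hr
      simpa using hr
  refine ht.frequently (Eventually.frequently ?_)
  filter_upwards [mem_nhdsWithin_of_mem_nhds (Ioi_mem_nhds (zero_lt_one' ℝ))] with r hr
  exact h r hr

lemma integrableOn_rpow_exp {a b : ℝ} (ha : 0 < a) (hb : 0 < b) :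
    IntegrableOn (fun s : ℝ => s ^ (a - 1) * Real.exp (-b * s)) (Ioi 0) := by
  have := integrableOn_rpow_mul_exp_neg_mul_rpow (p := 1) (s := a - 1) (b := b)
    (by linarith) one_pos hb
  simpa using this

/-- The Gamma integral `∫₀^∞ s^(a-1) e^(-rs) ds = Γ(a) r^(-a)` on the right half plane, continued
from positive real `r`. -/
lemma integral_rpow_cexp {a : ℝ} (ha : 0 < a) {r : ℂ} (hr : 0 < r.re) :
    ∫ s in Ioi (0:ℝ), Complex.exp (-r * s) * ((s ^ (a - 1) : ℝ) : ℂ) =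
      (Real.Gamma a : ℂ) * r ^ (-(a : ℂ)) := by
  have hopen : IsOpen {z : ℂ | 0 < z.re} := isOpen_lt continuous_const Complex.continuous_re
  have hconv : Convex ℝ {z : ℂ | 0 < z.re} := convex_halfSpace_re_gt 0
  refine eqOn_of_eq_real (U := {z : ℂ | 0 < z.re}) hopen
    hconv.isPreconnected
    (f := fun r : ℂ => ∫ s in Ioi (0:ℝ), Complex.exp (-r * s) * ((s ^ (a - 1) : ℝ) : ℂ))
    (g := fun r : ℂ => (Real.Gamma a : ℂ) * r ^ (-(a : ℂ))) ?_ ?_ (by simp) ?_ hr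
  · intro z hz
    have hz : 0 < z.re := hz
    have h := differentiableAt_laplace (μ := volume.restrict (Ioi (0:ℝ)))
      (f := fun s => ((s ^ (a - 1) : ℝ) : ℂ)) (z₀ := -z) (η := z.re / 2) (by linarith)
      (by fun_prop) ?_
    · exact (h.comp z differentiableAt_id.neg).differentiableWithinAt
    · refine (integrableOn_rpow_exp ha (half_pos hz)).congr_fun (fun s hs => ?_) measurableSet_Ioi
      have hs : 0 < s := hs
      simp only [Complex.norm_real, Real.norm_eq_abs, abs_of_pos hs,
        abs_of_nonneg (Real.rpow_nonneg hs.le _), Complex.neg_re]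
      rw [mul_comm]
      ring_nf
  · intro z hz
    have : z ∈ Complex.slitPlane := Or.inl hz
    exact ((differentiableAt_id.cpow_const this).const_mul _).differentiableWithinAt
  · intro r hr
    have h := Complex.integral_cpow_mul_exp_neg_mul_Ioi (a := a) (by simpa using ha) hr
    rw [Complex.Gamma_ofReal, one_div, Complex.inv_cpow, ← Complex.cpow_neg, mul_comm] at h
    · rw [← h]
      refine setIntegral_congr_fun measurableSet_Ioi fun s hs => ?_
      rw [Complex.ofReal_cpow (le_of_lt hs), mul_comm]
      push_cast
      ring_nf
    · rw [Complex.arg_ofReal_of_nonneg hr.le]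
      exact Real.pi_pos.ne

/-- The Fourier transform of a function on `[0,1]` is entire, so its vanishing on the positive half
line forces it to vanish identically, and Fourier inversion gives `v = 0`. -/
lemma eq_zero_of_fourier_eq_zero {v : ℝ → ℂ} (hv : Continuous v)
    (h : ∀ s : ℝ, 0 < s → ∫ y in Ioc (0:ℝ) 1, Complex.exp (Complex.I * s * y) * v y = 0) :
    ∀ x ∈ Ioo (0:ℝ) 1, v x = 0 := by
  have hd : Differentiable ℂ (fun z : ℂ => ∫ y in Ioc (0:ℝ) 1, Complex.exp (z * y) * v y) := by
    intro z
    refine differentiableAt_laplace one_pos hv.aestronglyMeasurable ?_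
    exact (Continuous.integrableOn_Ioc (by fun_prop))
  have hd2 : Differentiable ℂ
      (fun z : ℂ => ∫ y in Ioc (0:ℝ) 1, Complex.exp (Complex.I * z * y) * v y) :=
    hd.comp (differentiable_id.const_mul Complex.I)
  have hz := eqOn_of_eq_real isOpen_univ isPreconnected_univ hd2.differentiableOn
    (differentiableOn_const (0 : ℂ)) (mem_univ _) (by simpa using h)
  have hF : FourierTransform.fourier (cut v) = 0 := by
    ext ξ
    rw [Real.fourier_eq']
    have h1 := hz (mem_univ (((-2 * Real.pi * ξ : ℝ)) : ℂ))
    simp only at h1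
    rw [Pi.zero_apply, ← h1, ← integral_indicator measurableSet_Ioc]
    congr 1
    ext y
    rw [cut, indicator_apply, indicator_apply]
    split_ifs
    · simp only [smul_eq_mul, RCLike.inner_apply, conj_trivial]
      congr 2
      push_cast
      ring
    · simp
  intro x hx
  have h_int : Integrable (cut v) := integrable_cut hv.integrableOn_Ioc
  have heq : cut v =ᶠ[nhds x] v := by
    filter_upwards [Ioo_mem_nhds hx.1 hx.2] with y hy
    rw [cut, indicator_of_mem (by exact ⟨hy.1, hy.2.le⟩)]
  have := h_int.fourierInv_fourier_eq (by rw [hF]; exact integrable_zero _ _ _)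
    (v := x) (hv.continuousAt.congr heq.symm)
  rw [hF] at this
  rw [← heq.eq_of_nhds, ← this]
  simp [Real.fourierInv_eq]

/-! ### The energy identity -/

lemma ofReal_mul_cpow {t : ℝ} (ht : 0 < t) {z : ℂ} (hz : z ≠ 0) (a : ℝ) :
    ((t : ℂ) * z) ^ (a : ℂ) = ((t ^ a : ℝ) : ℂ) * Complex.exp (Complex.log z * a) := by
  have h0 : (t : ℂ) ≠ 0 := by exact_mod_cast ht.ne'
  rw [Complex.cpow_def_of_ne_zero (mul_ne_zero h0 hz), Complex.log_ofReal_mul ht hz, add_mul,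
    Complex.exp_add, Complex.ofReal_cpow ht.le, Complex.cpow_def_of_ne_zero h0, Complex.ofReal_log ht.le]

lemma cpow_I_of_pos (α : ℝ) {t : ℝ} (ht : 0 < t) :
    (Complex.I * t) ^ (-(α : ℂ)) =
      Complex.exp (-(Real.pi * α / 2 : ℝ) * Complex.I) * ((t ^ (-α) : ℝ) : ℂ) := by
  rw [mul_comm Complex.I, ← Complex.ofReal_neg, ofReal_mul_cpow ht Complex.I_ne_zero, mul_comm,
    Complex.log_I]
  congr 2
  push_cast
  ring

lemma cpow_I_of_neg (α : ℝ) {t : ℝ} (ht : t < 0) :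
    (Complex.I * t) ^ (-(α : ℂ)) =
      Complex.exp ((Real.pi * α / 2 : ℝ) * Complex.I) * (((-t) ^ (-α) : ℝ) : ℂ) := by
  rw [show Complex.I * (t : ℂ) = ((-t : ℝ) : ℂ) * (-Complex.I) by push_cast; ring,
    ← Complex.ofReal_neg, ofReal_mul_cpow (neg_pos.2 ht) (neg_ne_zero.2 Complex.I_ne_zero), mul_comm,
    Complex.log_neg_I]
  congr 2
  push_cast
  ring

local notation "μ₁" => (volume.restrict (Ioc (0:ℝ) 1))

/-- Fourier transform of `v` restricted to `(0,1]`, with the sign convention `e^{isy}`. -/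
noncomputable def fourierI (v : ℝ → ℂ) (s : ℝ) : ℂ :=
  ∫ y in Ioc (0:ℝ) 1, Complex.exp (Complex.I * s * y) * v y

lemma continuous_fourierI {v : ℝ → ℂ} (hv : Continuous v) : Continuous (fourierI v) := by
  unfold fourierI
  simp_rw [← intervalIntegral.integral_of_le (zero_le_one' ℝ)]
  exact intervalIntegral.continuous_parametric_intervalIntegral_of_continuous' (by fun_prop) _ _

lemma norm_fourierI_le {v : ℝ → ℂ} (hv : Continuous v) (s : ℝ) :
    ‖fourierI v s‖ ≤ ∫ y in Ioc (0:ℝ) 1, ‖v y‖ := by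
  refine norm_integral_le_of_norm_le (hv.norm.integrableOn_Ioc) (Eventually.of_forall fun y => ?_)
  rw [norm_mul, Complex.norm_exp]
  simp

lemma integrableOn_energy {α ε : ℝ} (hα : 0 < α) (hε : 0 < ε) {v : ℝ → ℂ} (hv : Continuous v) :
    IntegrableOn (fun s : ℝ => s ^ (α - 1) * Real.exp (-ε * s) * ‖fourierI v s‖ ^ 2) (Ioi 0) := by
  refine (integrableOn_rpow_exp hα hε).mul_bdd (c := (∫ y in Ioc (0:ℝ) 1, ‖v y‖) ^ 2)
    ((continuous_fourierI hv).norm.pow 2).aestronglyMeasurable (Eventually.of_forall fun s => ?_)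
  rw [norm_pow, norm_norm]
  gcongr
  exact norm_fourierI_le hv s

/-- Positive definiteness of `(ε + it)^(-α)`: writing it as the Laplace transform of
`s^(α-1) e^(-εs) / Γ(α)` turns its quadratic form at `v` into a weighted integral of
`‖fourierI v s‖²` over `s > 0`. -/
lemma regularized_energy {α ε : ℝ} (hα : 0 < α) (hε : 0 < ε) {v : ℝ → ℂ} (hv : Continuous v) :
    (Real.Gamma α : ℂ) * ∫ z, ((ε : ℂ) + Complex.I * ((z.1 - z.2 : ℝ) : ℂ)) ^ (-(α : ℂ)) *
        (v z.2 * star (v z.1)) ∂(Measure.prod μ₁ μ₁) =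
      ((∫ s in Ioi (0:ℝ), s ^ (α - 1) * Real.exp (-ε * s) * ‖fourierI v s‖ ^ 2 : ℝ) : ℂ) := by
  have hv1 : Integrable v μ₁ := hv.integrableOn_Ioc
  have hvv : Integrable (fun z : ℝ × ℝ => v z.2 * star (v z.1)) (Measure.prod μ₁ μ₁) := by
    have := Integrable.mul_prod (f := fun x => star (v x)) (g := v) (μ := μ₁) (ν := μ₁)
      ((continuous_star.comp hv).integrableOn_Ioc) hv1
    simpa only [mul_comm] using this
  rw [← integral_const_mul]
  have h1 : ∀ z : ℝ × ℝ, (Real.Gamma α : ℂ) * (((ε : ℂ) + Complex.I * ((z.1 - z.2 : ℝ) : ℂ)) ^ (-(α : ℂ)) *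
        (v z.2 * star (v z.1))) = ∫ s in Ioi (0:ℝ),
          Complex.exp (-((ε : ℂ) + Complex.I * ((z.1 - z.2 : ℝ) : ℂ)) * s) * ((s ^ (α - 1) : ℝ) : ℂ) *
            (v z.2 * star (v z.1)) := fun z => by
    rw [integral_mul_const, integral_rpow_cexp hα (by simpa using hε), mul_assoc]
  simp_rw [h1]
  rw [integral_integral_swap, ← integral_complex_ofReal]
  · refine setIntegral_congr_fun measurableSet_Ioi fun s hs => ?_
    have h2 : ∀ z : ℝ × ℝ, Complex.exp (-((ε : ℂ) + Complex.I * ((z.1 - z.2 : ℝ) : ℂ)) * s) *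
        ((s ^ (α - 1) : ℝ) : ℂ) * (v z.2 * star (v z.1)) =
        ((s ^ (α - 1) * Real.exp (-ε * s) : ℝ) : ℂ) *
        (star (Complex.exp (Complex.I * s * z.1) * v z.1) *
          (Complex.exp (Complex.I * s * z.2) * v z.2)) := fun z => by
      have h3 : Complex.exp (-((ε : ℂ) + Complex.I * ((z.1 - z.2 : ℝ) : ℂ)) * s) =
          ((Real.exp (-ε * s) : ℝ) : ℂ) * (star (Complex.exp (Complex.I * s * z.1)) *
            Complex.exp (Complex.I * s * z.2)) := by
        rw [Complex.star_def, ← Complex.exp_conj, Complex.ofReal_exp, ← Complex.exp_add,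
          ← Complex.exp_add]
        congr 1
        simp only [map_mul, Complex.conj_I, Complex.conj_ofReal]
        push_cast
        ring
      rw [h3, star_mul']
      push_cast
      ring
    simp_rw [h2]
    rw [integral_const_mul, integral_prod_mul (μ := μ₁) (ν := μ₁)
      (fun x : ℝ => star (Complex.exp (Complex.I * s * x) * v x))
      (fun x : ℝ => Complex.exp (Complex.I * s * x) * v x)]
    have h4 : ∫ x in Ioc (0:ℝ) 1, star (Complex.exp (Complex.I * s * x) * v x) =
        star (fourierI v s) := integral_conj
    rw [h4]
    push_cast
    congr 1
    exact Complex.conj_mul' _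
  · have hb := hvv.norm.mul_prod (integrableOn_rpow_exp hα hε)
    refine hb.mono' ?_ ?_
    · refine AEStronglyMeasurable.mul (AEStronglyMeasurable.mul
        (Continuous.aestronglyMeasurable (by fun_prop)) ?_)
        (Continuous.aestronglyMeasurable (by fun_prop))
      have : Measurable (fun s : ℝ => ((s ^ (α - 1) : ℝ) : ℂ)) := by fun_prop
      exact (this.comp measurable_snd).aestronglyMeasurable
    · have : ∀ᵐ p : (ℝ × ℝ) × ℝ ∂(Measure.prod (Measure.prod μ₁ μ₁) (volume.restrict (Ioi 0))),
          0 < p.2 := by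
        refine Measure.quasiMeasurePreserving_snd.ae ?_
        exact ae_restrict_mem measurableSet_Ioi
      filter_upwards [this] with p hp
      simp only [Function.uncurry, norm_mul, Complex.norm_exp, Complex.norm_real]
      rw [Real.norm_of_nonneg (Real.rpow_nonneg hp.le _)]
      simp
      ring_nf
      rfl

/-! ### Passage to the singular kernel -/

/-- Integrand of the form `∫₀¹ RL (1-α) v · conj v` as a function on the square: the kernel
`(x-p)^(-α)` for `p < x`, and zero for `p ≥ x`. -/
noncomputable def causal (α : ℝ) (v : ℝ → ℂ) (z : ℝ × ℝ) : ℂ :=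
  v z.2 * kern (1 - α) (z.1 - z.2) * star (v z.1)

lemma integrable_causal {α : ℝ} (hα : α < 1) {v : ℝ → ℂ} (hv : Continuous v) :
    Integrable (causal α v) (Measure.prod μ₁ μ₁) := by
  obtain ⟨M, hM⟩ := isCompact_Icc.exists_bound_of_continuousOn (s := Icc (0:ℝ) 1) hv.continuousOn
  have h := ((integrable_cut hv.integrableOn_Ioc).convolution_integrand (ContinuousLinearMap.mul ℝ ℂ)
    (integrable_kern (a := 1 - α) (by linarith)) (μ := volume) (ν := volume)).integrableOn
    (s := Ioc (0:ℝ) 1 ×ˢ Ioc (0:ℝ) 1)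
  rw [IntegrableOn, ← Measure.prod_restrict] at h
  have hmem : ∀ᵐ z ∂(Measure.prod μ₁ μ₁), z ∈ Ioc (0:ℝ) 1 ×ˢ Ioc (0:ℝ) 1 := by
    rw [Measure.prod_restrict]
    exact ae_restrict_mem (measurableSet_Ioc.prod measurableSet_Ioc)
  have h2 : Integrable (fun z : ℝ × ℝ => v z.2 * kern (1 - α) (z.1 - z.2)) (Measure.prod μ₁ μ₁) := by
    refine h.congr ?_
    filter_upwards [hmem] with z hz
    simp only [ContinuousLinearMap.mul_apply']
    rw [cut, indicator_of_mem hz.2]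
  refine h2.mul_bdd (c := M) (Continuous.aestronglyMeasurable (by fun_prop)) ?_
  filter_upwards [hmem] with z hz
  rw [norm_star]
  exact hM _ ⟨hz.1.1.le, hz.1.2⟩

lemma integral_causal (α : ℝ) (hα : α < 1) {v : ℝ → ℂ} (hv : Continuous v) :
    ∫ z, causal α v z ∂(Measure.prod μ₁ μ₁) =
      ∫ x in (0:ℝ)..1, RL (1 - α) v x * star (v x) := by
  rw [integral_prod _ (integrable_causal hα hv), intervalIntegral.integral_of_le zero_le_one]
  refine setIntegral_congr_fun measurableSet_Ioc fun x hx => ?_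
  simp only [causal]
  rw [integral_mul_const, ← conv_eq_RL (1 - α) v ⟨hx.1.le, hx.2⟩, convolution_def,
    ← integral_indicator measurableSet_Ioc]
  congr 2
  ext p
  simp only [ContinuousLinearMap.mul_apply', cut, indicator_apply]
  split_ifs <;> simp

/-- Off the diagonal, `(i(x-p))^(-α)` is `e^{-iπα/2} (x-p)^(-α)` below it and the complex conjugate
of the reflected expression above it. The form with kernel `(i(x-p))^(-α)` is therefore twice the
real part of the causal one, rotated by `e^{-iπα/2}`. -/
lemma kernel_split (α : ℝ) (v : ℝ → ℂ) {z : ℝ × ℝ} (hz : z ∈ Ioc (0:ℝ) 1 ×ˢ Ioc (0:ℝ) 1)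
    (hne : z.1 ≠ z.2) :
    (Complex.I * ((z.1 - z.2 : ℝ) : ℂ)) ^ (-(α : ℂ)) * (v z.2 * star (v z.1)) =
      Complex.exp (-(Real.pi * α / 2 : ℝ) * Complex.I) * causal α v z +
        star (Complex.exp (-(Real.pi * α / 2 : ℝ) * Complex.I) * causal α v z.swap) := by
  obtain ⟨⟨h1, h2⟩, h3, h4⟩ := hz
  have hα : 1 - α - 1 = -α := by ring
  rcases lt_or_gt_of_ne hne with h | h
  · have hk1 : kern (1 - α) (z.1 - z.2) = 0 := by
      rw [kern, indicator_of_notMem]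
      intro h'
      linarith [h'.1]
    have hk2 : kern (1 - α) (z.2 - z.1) = (((z.2 - z.1) ^ (-α) : ℝ) : ℂ) := by
      rw [kern, indicator_of_mem (by constructor <;> linarith), hα]
    rw [cpow_I_of_neg α (by linarith)]
    simp only [causal, Prod.fst_swap, Prod.snd_swap, hk1, hk2, star_mul', star_star]
    simp only [Complex.star_def, ← Complex.exp_conj, map_mul, map_neg, Complex.conj_I,
      Complex.conj_ofReal, neg_sub]
    ring_nf
  · have hk1 : kern (1 - α) (z.2 - z.1) = 0 := by
      rw [kern, indicator_of_notMem]
      intro h'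
      linarith [h'.1]
    have hk2 : kern (1 - α) (z.1 - z.2) = (((z.1 - z.2) ^ (-α) : ℝ) : ℂ) := by
      rw [kern, indicator_of_mem (by constructor <;> linarith), hα]
    rw [cpow_I_of_pos α (by linarith)]
    simp only [causal, Prod.fst_swap, Prod.snd_swap, hk1, hk2]
    simp
    ring

lemma ae_square : ∀ᵐ z ∂(Measure.prod μ₁ μ₁), z ∈ Ioc (0:ℝ) 1 ×ˢ Ioc (0:ℝ) 1 ∧ z.1 ≠ z.2 := by
  refine Eventually.and ?_ ?_
  · rw [Measure.prod_restrict]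
    exact ae_restrict_mem (measurableSet_Ioc.prod measurableSet_Ioc)
  · refine (Measure.ae_prod_iff_ae_ae (p := fun z : ℝ × ℝ => z.1 ≠ z.2)
      (measurableSet_eq_fun measurable_fst measurable_snd).compl).2 ?_
    refine Eventually.of_forall fun x => ?_
    have : ∀ᵐ y ∂μ₁, y ≠ x := Measure.ae_ne _ x
    filter_upwards [this] with y hy using hy.symm

/-- The regularized form converges as `ε → 0⁺`: adding the real number `ε` to the base can only
increase its modulus, so the limit integrand dominates. -/
lemma tendsto_regularized {α : ℝ} (hα : α ∈ Ioo (0:ℝ) 1) {v : ℝ → ℂ} (hv : Continuous v) :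
    Tendsto (fun ε : ℝ => ∫ z, ((ε : ℂ) + Complex.I * ((z.1 - z.2 : ℝ) : ℂ)) ^ (-(α : ℂ)) *
        (v z.2 * star (v z.1)) ∂(Measure.prod μ₁ μ₁)) (nhdsWithin 0 (Ioi 0))
      (nhds (Complex.exp (-(Real.pi * α / 2 : ℝ) * Complex.I) *
          (∫ x in (0:ℝ)..1, RL (1 - α) v x * star (v x)) +
        star (Complex.exp (-(Real.pi * α / 2 : ℝ) * Complex.I) *
          (∫ x in (0:ℝ)..1, RL (1 - α) v x * star (v x))))) := by
  set c := Complex.exp (-(Real.pi * α / 2 : ℝ) * Complex.I) with hc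
  have hq := integrable_causal hα.2 hv
  have hqs : Integrable (fun z => causal α v z.swap) (Measure.prod μ₁ μ₁) := hq.swap
  have hnc : ‖c‖ = 1 := by
    rw [hc, Complex.norm_exp]
    simp
  have hlim : c * (∫ x in (0:ℝ)..1, RL (1 - α) v x * star (v x)) +
        star (c * (∫ x in (0:ℝ)..1, RL (1 - α) v x * star (v x))) =
      ∫ z, (Complex.I * ((z.1 - z.2 : ℝ) : ℂ)) ^ (-(α : ℂ)) *
        (v z.2 * star (v z.1)) ∂(Measure.prod μ₁ μ₁) := by
    have h1 : ∫ z, (Complex.I * ((z.1 - z.2 : ℝ) : ℂ)) ^ (-(α : ℂ)) *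
        (v z.2 * star (v z.1)) ∂(Measure.prod μ₁ μ₁) =
        ∫ z, (c * causal α v z + star (c * causal α v z.swap)) ∂(Measure.prod μ₁ μ₁) := by
      refine integral_congr_ae ?_
      filter_upwards [ae_square] with z hz
      exact kernel_split α v hz.1 hz.2
    have h3 : Integrable (fun z => star (c * causal α v z.swap)) (Measure.prod μ₁ μ₁) :=
      (Complex.conjCLE.toContinuousLinearMap).integrable_comp (hqs.const_mul c)
    rw [h1, integral_add (hq.const_mul c) h3]
    have h2 : ∫ z, star (c * causal α v z.swap) ∂(Measure.prod μ₁ μ₁) =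
        star (∫ z, c * causal α v z.swap ∂(Measure.prod μ₁ μ₁)) := integral_conj
    rw [h2, integral_const_mul, integral_const_mul, integral_prod_swap (causal α v),
      integral_causal α hα.2 hv]
  rw [hlim]
  refine tendsto_integral_filter_of_dominated_convergence
    (fun z => ‖causal α v z‖ + ‖causal α v z.swap‖) ?_ ?_ (hq.norm.add hqs.norm) ?_
  · refine Eventually.of_forall fun ε => ?_
    have : Measurable fun z : ℝ × ℝ => ((ε : ℂ) + Complex.I * ((z.1 - z.2 : ℝ) : ℂ)) ^ (-(α : ℂ)) := by
      fun_prop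
    exact this.aestronglyMeasurable.mul (Continuous.aestronglyMeasurable (by fun_prop))
  · filter_upwards [self_mem_nhdsWithin] with ε hε
    have hε : 0 < ε := hε
    filter_upwards [ae_square] with z hz
    have hpos : 0 < |z.1 - z.2| := abs_pos.2 (sub_ne_zero.2 hz.2)
    calc ‖((ε : ℂ) + Complex.I * ((z.1 - z.2 : ℝ) : ℂ)) ^ (-(α : ℂ)) * (v z.2 * star (v z.1))‖
        ≤ ‖(Complex.I * ((z.1 - z.2 : ℝ) : ℂ)) ^ (-(α : ℂ)) * (v z.2 * star (v z.1))‖ := by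
          rw [norm_mul, norm_mul _ (v z.2 * star (v z.1))]
          refine mul_le_mul_of_nonneg_right ?_ (norm_nonneg _)
          rw [← Complex.ofReal_neg, Complex.norm_cpow_real, Complex.norm_cpow_real]
          refine Real.rpow_le_rpow_of_nonpos ?_ ?_ (by linarith [hα.1])
          · simpa [sub_eq_zero] using hz.2
          · have := Complex.abs_im_le_norm ((ε : ℂ) + Complex.I * ((z.1 - z.2 : ℝ) : ℂ))
            rw [norm_mul, Complex.norm_I, one_mul, Complex.norm_real, Real.norm_eq_abs]
            simpa using this
      _ ≤ ‖c * causal α v z‖ + ‖star (c * causal α v z.swap)‖ := by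
          rw [kernel_split α v hz.1 hz.2]
          exact norm_add_le _ _
      _ = _ := by rw [norm_star, norm_mul, norm_mul, hnc, one_mul, one_mul]
  · filter_upwards [ae_square] with z hz
    refine Tendsto.mul_const _ ?_
    have hsl : Complex.I * ((z.1 - z.2 : ℝ) : ℂ) ∈ Complex.slitPlane := by
      right
      simpa [sub_eq_zero] using hz.2
    have hcont : ContinuousAt (fun w : ℂ => w ^ (-(α : ℂ))) (Complex.I * ((z.1 - z.2 : ℝ) : ℂ)) :=
      continuousAt_cpow_const hsl
    refine hcont.tendsto.comp (Tendsto.mono_left ?_ nhdsWithin_le_nhds)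
    exact Continuous.tendsto' (by fun_prop) _ _ (by simp)

/-- If the real part of the rotated form is nonpositive, the energy in `regularized_energy`, which is
nonnegative and decreasing in `ε`, has nonpositive limit, hence is zero already at `ε = 1`. -/
lemma fourierI_eq_zero {α : ℝ} (hα : α ∈ Ioo (0:ℝ) 1) {v : ℝ → ℂ} (hv : Continuous v)
    (hQ : (Complex.exp (-(Real.pi * α / 2 : ℝ) * Complex.I) *
      ∫ x in (0:ℝ)..1, RL (1 - α) v x * star (v x)).re ≤ 0) :
    ∀ s : ℝ, 0 < s → fourierI v s = 0 := by
  have hΓ := Real.Gamma_pos_of_pos hα.1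
  set P := ∫ s in Ioi (0:ℝ), s ^ (α - 1) * Real.exp (-1 * s) * ‖fourierI v s‖ ^ 2 with hP
  have h_int := integrableOn_energy hα.1 one_pos hv
  have hnn : ∀ s ∈ Ioi (0:ℝ), 0 ≤ s ^ (α - 1) * Real.exp (-1 * s) * ‖fourierI v s‖ ^ 2 :=
    fun s hs => mul_nonneg (mul_nonneg (Real.rpow_nonneg (le_of_lt hs) _) (Real.exp_nonneg _))
      (sq_nonneg _)
  have hP0 : P ≤ 0 := by
    have ht := (Complex.continuous_re.tendsto _).comp
      ((tendsto_regularized hα hv).const_mul (Real.Gamma α : ℂ))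
    refine (ge_of_tendsto ht ?_).trans ?_
    · filter_upwards [Ioc_mem_nhdsGT (zero_lt_one' ℝ)] with ε hε
      simp only [Function.comp]
      rw [regularized_energy hα.1 hε.1 hv, Complex.ofReal_re]
      refine setIntegral_mono_on h_int (integrableOn_energy hα.1 hε.1 hv) measurableSet_Ioi
        fun s hs => ?_
      have hs : 0 < s := hs
      gcongr
      exact hε.2
    · have hre : ∀ z : ℂ, (z + star z).re = 2 * z.re := fun z => by
        simp [two_mul]
      rw [Complex.re_ofReal_mul, hre]
      exact mul_nonpos_of_nonneg_of_nonpos hΓ.le (by linarith)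
  have hP1 : P = 0 := le_antisymm hP0 (setIntegral_nonneg measurableSet_Ioi hnn)
  rw [hP, setIntegral_eq_zero_iff_of_nonneg_ae
    ((ae_restrict_iff' measurableSet_Ioi).2 (Eventually.of_forall hnn)) h_int] at hP1
  have hae : fourierI v =ᵐ[volume.restrict (Ioi (0:ℝ))] fun _ => 0 := by
    filter_upwards [hP1, ae_restrict_mem measurableSet_Ioi] with s hs hs0
    have hs0 : 0 < s := hs0
    have h1 : s ^ (α - 1) ≠ 0 := (Real.rpow_pos_of_pos hs0 _).ne'
    simpa [h1] using hs
  exact fun s hs => Measure.eqOn_open_of_ae_eq hae isOpen_Ioi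
    (continuous_fourierI hv).continuousOn continuousOn_const hs

/-! ### Volterra equations -/

lemma norm_rpow_sub_le {a : ℝ} (ha : 0 < a) {x p : ℝ} (hx : x ≤ 1) (hp : 0 ≤ p) (hpx : p ≤ x) :
    ‖(((x - p) ^ a : ℝ) : ℂ)‖ ≤ 1 := by
  rw [Complex.norm_real, Real.norm_of_nonneg (Real.rpow_nonneg (by linarith) _)]
  exact Real.rpow_le_one (by linarith) (by linarith) ha.le

lemma continuous_rpow_sub {a : ℝ} (ha : 0 < a) :
    Continuous (fun z : ℝ × ℝ => (((z.1 - z.2) ^ a : ℝ) : ℂ)) :=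
  Complex.continuous_ofReal.comp
    ((continuous_fst.sub continuous_snd).rpow_const fun _ => Or.inr ha.le)

/-- The Volterra equation `u = h + lam · RL (a+1) u` on `[0,1]` has a continuous solution. After the
substitution `u(x) = e^{mx} f(x)` with `m = ‖lam‖ + 1` the right-hand side is a contraction in the
sup norm. -/
lemma exists_volterra {a : ℝ} (ha : 0 < a) (lam : ℂ) {h : ℝ → ℂ} (hh : ContinuousOn h (Icc 0 1)) :
    ∃ u : ℝ → ℂ, Continuous u ∧ (∃ M, ∀ x, ‖u x‖ ≤ M) ∧
      ∀ x ∈ Icc (0:ℝ) 1, u x = h x + lam * RL (a + 1) u x := by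
  set m : ℝ := ‖lam‖ + 1 with hm
  have hm0 : 0 < m := by positivity
  let ext : C(Icc (0:ℝ) 1, ℂ) → ℝ → ℂ := fun f => IccExtend zero_le_one f
  have hext : ∀ f, Continuous (ext f) := fun f => f.continuous.Icc_extend'
  let J : C(Icc (0:ℝ) 1, ℂ) → ℝ → ℂ := fun f x =>
    ∫ p in (0:ℝ)..x, (Real.exp (-m * (x - p)) : ℂ) * (((x - p) ^ a : ℝ) : ℂ) * ext f p
  have hJi : ∀ f x, Continuous fun p : ℝ =>
      (Real.exp (-m * (x - p)) : ℂ) * (((x - p) ^ a : ℝ) : ℂ) * ext f p := fun f x => by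
    have h1 := hext f
    have h2 : Continuous fun p : ℝ => (((x - p) ^ a : ℝ) : ℂ) :=
      (continuous_rpow_sub ha).comp (by fun_prop : Continuous fun p : ℝ => (x, p))
    fun_prop
  have hJ : ∀ f, Continuous (J f) := fun f => by
    refine intervalIntegral.continuous_parametric_intervalIntegral_of_continuous ?_ continuous_id
    have h1 := (hext f).comp (continuous_snd (X := ℝ))
    have h2 := continuous_rpow_sub ha
    simp only [Function.uncurry_def]
    refine (Continuous.mul (by fun_prop) h2).mul h1
  let Φ : C(Icc (0:ℝ) 1, ℂ) → C(Icc (0:ℝ) 1, ℂ) := fun f =>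
    ⟨fun x => (Real.exp (-m * x) : ℂ) * h x + lam * J f x, by
      have h1 := (hJ f).comp (continuous_subtype_val (p := fun x => x ∈ Icc (0:ℝ) 1))
      have h2 : Continuous fun x : Icc (0:ℝ) 1 => h x := hh.domRestrict
      have h3 : Continuous fun x : Icc (0:ℝ) 1 => J f x := h1
      exact ((by fun_prop : Continuous fun x : Icc (0:ℝ) 1 => (Real.exp (-m * x) : ℂ)).mul h2).add
        (continuous_const.mul h3)⟩
  have hK : ‖lam‖ / m < 1 := by rw [div_lt_one hm0]; linarith
  have hcontr : ContractingWith (‖lam‖ / m).toNNReal Φ := by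
    refine ⟨by simpa [← NNReal.coe_lt_coe, Real.coe_toNNReal _ (show 0 ≤ ‖lam‖ / m by positivity)] using hK, ?_⟩
    refine LipschitzWith.of_dist_le_mul fun f g => ?_
    rw [Real.coe_toNNReal _ (show 0 ≤ ‖lam‖ / m by positivity),
      ContinuousMap.dist_le (by positivity)]
    intro x
    obtain ⟨x, hx⟩ := x
    have hsub : Φ f ⟨x, hx⟩ - Φ g ⟨x, hx⟩ = lam * ∫ p in (0:ℝ)..x,
        (Real.exp (-m * (x - p)) : ℂ) * (((x - p) ^ a : ℝ) : ℂ) * (ext f p - ext g p) := by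
      have hd : ∀ p, (Real.exp (-m * (x - p)) : ℂ) * (((x - p) ^ a : ℝ) : ℂ) *
          (ext f p - ext g p) = (Real.exp (-m * (x - p)) : ℂ) * (((x - p) ^ a : ℝ) : ℂ) * ext f p -
          (Real.exp (-m * (x - p)) : ℂ) * (((x - p) ^ a : ℝ) : ℂ) * ext g p :=
        fun p => mul_sub _ _ _
      simp_rw [hd]
      rw [intervalIntegral.integral_sub ((hJi f x).intervalIntegrable _ _)
        ((hJi g x).intervalIntegrable _ _)]
      simp only [Φ, J, ContinuousMap.coe_mk]
      ring
    rw [dist_eq_norm, hsub, norm_mul]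
    have hle : ‖∫ p in (0:ℝ)..x, (Real.exp (-m * (x - p)) : ℂ) * (((x - p) ^ a : ℝ) : ℂ) *
        (ext f p - ext g p)‖ ≤ ∫ p in (0:ℝ)..x, Real.exp (-m * (x - p)) * dist f g := by
      refine intervalIntegral.norm_integral_le_of_norm_le hx.1 (Eventually.of_forall fun p hp => ?_)
        (Continuous.intervalIntegrable (by fun_prop) _ _)
      rw [norm_mul, norm_mul, Complex.norm_real, Real.norm_of_nonneg (Real.exp_nonneg _)]
      have h1 := norm_rpow_sub_le ha hx.2 hp.1.le hp.2
      have h2 : ‖ext f p - ext g p‖ ≤ dist f g := by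
        rw [← dist_eq_norm]
        exact ContinuousMap.dist_apply_le_dist _
      calc _ ≤ Real.exp (-m * (x - p)) * 1 * dist f g := by gcongr
        _ = _ := by ring
    have hval : ∫ p in (0:ℝ)..x, Real.exp (-m * (x - p)) ≤ 1 / m := by
      have hd : ∀ p ∈ uIcc 0 x, HasDerivAt (fun p : ℝ => Real.exp (-m * (x - p)) / m)
          (Real.exp (-m * (x - p))) p := fun p _ => by
        have := ((((hasDerivAt_id p).const_sub x).const_mul (-m)).exp).div_const m
        convert! this using 1
        simp only [id]
        field_simp
      rw [intervalIntegral.integral_eq_sub_of_hasDerivAt hd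
        (Continuous.intervalIntegrable (by fun_prop) _ _)]
      simp only [sub_self, mul_zero, Real.exp_zero]
      have : 0 ≤ Real.exp (-m * (x - 0)) / m := by positivity
      linarith
    rw [intervalIntegral.integral_mul_const] at hle
    calc _ ≤ ‖lam‖ * ((1 / m) * dist f g) := by
          gcongr
          exact hle.trans (by gcongr)
      _ = _ := by ring
  have hfix : Φ (hcontr.fixedPoint Φ) = hcontr.fixedPoint Φ := hcontr.fixedPoint_isFixedPt
  set f := hcontr.fixedPoint Φ with hf
  let U : C(Icc (0:ℝ) 1, ℂ) := ⟨fun x => (Real.exp (m * x) : ℂ) * f x, by fun_prop⟩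
  refine ⟨ext U, hext U, ⟨‖U‖, fun x => U.norm_coe_le_norm _⟩, fun x hx => ?_⟩
  have hU : ∀ p ∈ Icc (0:ℝ) 1, ext U p = (Real.exp (m * p) : ℂ) * ext f p := fun p hp => by
    simp only [ext, IccExtend_of_mem _ _ hp]
    rfl
  have hfx : ext f x = (Real.exp (-m * x) : ℂ) * h x + lam * J f x := by
    simp only [ext, IccExtend_of_mem _ _ hx]
    conv_lhs => rw [← hfix]
    rfl
  have hJx : (Real.exp (m * x) : ℂ) * J f x = RL (a + 1) (ext U) x := by
    simp only [J, RL]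
    rw [← intervalIntegral.integral_const_mul]
    refine intervalIntegral.integral_congr fun p hp => ?_
    rw [uIcc_of_le hx.1] at hp
    rw [hU p ⟨hp.1, hp.2.trans hx.2⟩, add_sub_cancel_right]
    have : (Real.exp (m * x) : ℂ) * (Real.exp (-m * (x - p)) : ℂ) = (Real.exp (m * p) : ℂ) := by
      rw [← Complex.ofReal_mul, ← Real.exp_add]
      ring_nf
    rw [← this]
    ring
  have he : (Real.exp (m * x) : ℂ) * (Real.exp (-m * x) : ℂ) = 1 := by
    rw [← Complex.ofReal_mul, ← Real.exp_add]
    simp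
  rw [hU x hx, hfx, ← hJx]
  linear_combination h x * he

/-- `RL α φ` is continuous on `[0,1]`: the substitution `p = xs` turns it into
`x^α ∫₀¹ (1-s)^(α-1) φ(xs) ds`. -/
lemma exists_continuous_RL {α : ℝ} (hα : 0 < α) {φ : ℝ → ℂ} (hφ : Continuous φ)
    (hb : ∃ M, ∀ x, ‖φ x‖ ≤ M) :
    ∃ V : ℝ → ℂ, Continuous V ∧ ∀ x ∈ Icc (0:ℝ) 1, V x = RL α φ x := by
  obtain ⟨M, hM⟩ := hb
  have hi : IntervalIntegrable (fun s : ℝ => (1 - s) ^ (α - 1)) volume 0 1 := by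
    have := (intervalIntegral.intervalIntegrable_rpow' (a := 1) (b := 0) (r := α - 1)
      (by linarith)).comp_sub_left 1
    simpa using this
  refine ⟨fun x => ((x ^ α : ℝ) : ℂ) * ∫ s in (0:ℝ)..1, (((1 - s) ^ (α - 1) : ℝ) : ℂ) * φ (x * s),
    ?_, fun x hx => ?_⟩
  · refine (Complex.continuous_ofReal.comp (continuous_id.rpow_const fun _ => Or.inr hα.le)).mul ?_
    refine intervalIntegral.continuous_of_dominated_interval
      (bound := fun s => |(1 - s) ^ (α - 1)| * M) (fun x => ?_)
      (fun x => Eventually.of_forall fun s _ => ?_) (hi.abs.mul_const M)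
      (Eventually.of_forall fun s _ => by fun_prop)
    · have : Measurable fun s : ℝ => (((1 - s) ^ (α - 1) : ℝ) : ℂ) := by fun_prop
      exact this.aestronglyMeasurable.mul (Continuous.aestronglyMeasurable (by fun_prop))
    · rw [norm_mul, Complex.norm_real, Real.norm_eq_abs]
      gcongr
      exact hM _
  · rcases hx.1.eq_or_lt with h0 | h0
    · simp [← h0, RL, Real.zero_rpow hα.ne']
    · have h := intervalIntegral.smul_integral_comp_mul_left (a := 0) (b := 1)
        (fun p => (((x - p) ^ (α - 1) : ℝ) : ℂ) * φ p) x
      rw [mul_zero, mul_one] at h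
      simp only
      rw [RL, ← h, Complex.real_smul, ← intervalIntegral.integral_const_mul,
        ← intervalIntegral.integral_const_mul]
      refine intervalIntegral.integral_congr fun s hs => ?_
      rw [uIcc_of_le zero_le_one] at hs
      rw [show x - x * s = x * (1 - s) by ring, Real.mul_rpow h0.le (by linarith [hs.2]),
        show x ^ α = x * x ^ (α - 1) by
          rw [Real.rpow_sub_one h0.ne']; field_simp]
      push_cast
      ring

/-! ### Nonvanishing of the homogeneous solution at the right endpoint -/

/-- The sector with `arg ≥ 0`, rotated by `-πα/2`, lies in the right half plane. The upper bound on
the argument is used exactly here. -/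
lemma re_phase_nonneg {α : ℝ} (hα : α ∈ Ioo (0:ℝ) 1) {L : ℂ} (h0 : 0 ≤ L.arg)
    (h1 : L.arg ≤ Real.pi * (α + 1) / 2) :
    0 ≤ (Complex.exp (-(Real.pi * α / 2 : ℝ) * Complex.I) * L).re := by
  have h : Complex.exp (-(Real.pi * α / 2 : ℝ) * Complex.I) * L =
      (‖L‖ : ℂ) * Complex.exp ((L.arg - Real.pi * α / 2 : ℝ) * Complex.I) := by
    conv_lhs => rw [← Complex.norm_mul_exp_arg_mul_I L]
    rw [mul_left_comm, ← Complex.exp_add]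
    congr 2
    push_cast
    ring
  rw [h, Complex.re_ofReal_mul, Complex.exp_ofReal_mul_I_re]
  refine mul_nonneg (norm_nonneg _) (Real.cos_nonneg_of_mem_Icc ⟨?_, ?_⟩)
  · nlinarith [Real.pi_pos, hα.2]
  · linarith

/-- If `φ 1 = 0`, integrating by parts shows that the form at `v = φ'` is a negative multiple of
`L ∫ |φ|²`; after the rotation by `e^{-iπα/2}` it has nonpositive real part, so `v = 0` and `φ` is
constantly `1`, a contradiction. -/
lemma solution_ne_zero_of_arg_nonneg {α : ℝ} (hα : α ∈ Ioo (0:ℝ) 1) {L : ℂ} (h0 : 0 ≤ L.arg)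
    (h1 : L.arg ≤ Real.pi * (α + 1) / 2) {φ : ℝ → ℂ} (hc : Continuous φ)
    (hb : ∃ M, ∀ x, ‖φ x‖ ≤ M)
    (hφ : ∀ x ∈ Icc (0:ℝ) 1, φ x = 1 + L * ((α⁻¹ : ℝ) : ℂ) * RL (α + 1) φ x) : φ 1 ≠ 0 := by
  intro hφ1
  have hφi : IntegrableOn φ (Ioc 0 1) :=
    (hc.integrableOn_Icc (a := 0) (b := 1)).mono_set Ioc_subset_Icc_self
  obtain ⟨V, hV, hVR⟩ := exists_continuous_RL hα.1 hc hb
  set v : ℝ → ℂ := fun x => L * V x with hv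
  have hvc : Continuous v := continuous_const.mul hV
  have h_int : ∀ x ∈ Icc (0:ℝ) 1, φ x = 1 + ∫ t in (0:ℝ)..x, v t := fun x hx => by
    rw [hφ x hx, mul_assoc, ← RL_one_RL hα.1 hφi hx, ← intervalIntegral.integral_const_mul]
    congr 1
    refine intervalIntegral.integral_congr fun t ht => ?_
    rw [uIcc_of_le hx.1] at ht
    simp only [hv]
    rw [hVR t ⟨ht.1, ht.2.trans hx.2⟩]
  have hderiv : ∀ x ∈ Ioo (0:ℝ) 1, HasDerivAt φ (v x) x := fun x hx => by
    have hd : HasDerivAt (fun x => 1 + ∫ t in (0:ℝ)..x, v t) (v x) x :=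
      (intervalIntegral.integral_hasDerivAt_right (hvc.intervalIntegrable _ _)
        hvc.stronglyMeasurable.stronglyMeasurableAtFilter hvc.continuousAt).const_add 1
    refine hd.congr_of_eventuallyEq ?_
    filter_upwards [Icc_mem_nhds hx.1 hx.2] with y hy using h_int y hy
  set W : ℝ → ℂ := fun x => ∫ t in (0:ℝ)..x, φ t with hW
  have hWd : ∀ x, HasDerivAt W (φ x) x := fun x =>
    intervalIntegral.integral_hasDerivAt_right (hc.intervalIntegrable _ _)
        hc.stronglyMeasurable.stronglyMeasurableAtFilter hc.continuousAt
  set C : ℝ := Real.Gamma α * Real.Gamma (1 - α) / Real.Gamma (α + (1 - α)) with hC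
  have hC0 : 0 < C := by
    have := Real.Gamma_pos_of_pos hα.1
    have := Real.Gamma_pos_of_pos (sub_pos.2 hα.2)
    have := Real.Gamma_pos_of_pos (show 0 < α + (1 - α) by linarith [hα.1])
    positivity
  -- the semigroup law turns `I^{1-α} v` into a multiple of the primitive `W` of `φ`
  have hRL : ∀ᵐ x ∂μ₁, RL (1 - α) v x = L * C * W x := by
    rw [ae_restrict_iff' measurableSet_Ioc]
    have h := RL_RL_ae hα.1 (sub_pos.2 hα.2) hφi
    rw [ae_restrict_iff' measurableSet_Ioc] at h
    filter_upwards [h] with x hx hx'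
    have e1 : RL (1 - α) v x = L * RL (1 - α) (RL α φ) x := by
      rw [RL, RL, ← intervalIntegral.integral_const_mul]
      refine intervalIntegral.integral_congr fun t ht => ?_
      rw [uIcc_of_le hx'.1.le] at ht
      simp only [hv]
      rw [hVR t ⟨ht.1, ht.2.trans hx'.2⟩]
      ring
    have e2 : RL (α + (1 - α)) φ x = W x := by
      simp [RL, hW]
    rw [e1, hx hx', e2, mul_assoc]
  set N : ℝ := ∫ x in (0:ℝ)..1, ‖φ x‖ ^ 2 with hN
  have hN0 : 0 ≤ N := intervalIntegral.integral_nonneg zero_le_one fun x _ => by positivity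
  -- the boundary terms vanish because `W 0 = 0` and `φ 1 = 0`
  have hparts : ∫ x in (0:ℝ)..1, W x * star (v x) = -(N : ℂ) := by
    have h := intervalIntegral.integral_mul_deriv_eq_deriv_mul_of_hasDerivAt (a := 0) (b := 1)
      (u := W) (v := fun x => star (φ x)) (u' := φ) (v' := fun x => star (v x))
      (fun x _ => (hWd x).continuousAt.continuousWithinAt)
      (continuous_star.comp hc).continuousOn (fun x _ => hWd x)
      (fun x hx => (hderiv x (by simpa using hx)).star)
      (hc.intervalIntegrable _ _) ((continuous_star.comp hvc).intervalIntegrable _ _)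
    rw [h, hφ1, star_zero, mul_zero, show W 0 = 0 by simp [hW], zero_mul, sub_zero, zero_sub, hN,
      ← intervalIntegral.integral_ofReal]
    congr 1
    refine intervalIntegral.integral_congr fun x _ => ?_
    rw [Complex.star_def, Complex.mul_conj, Complex.normSq_eq_norm_sq]
  have hQ : ∫ x in (0:ℝ)..1, RL (1 - α) v x * star (v x) = L * C * (-(N : ℂ)) := by
    rw [← hparts, ← intervalIntegral.integral_const_mul,
      intervalIntegral.integral_of_le zero_le_one, intervalIntegral.integral_of_le zero_le_one]
    refine integral_congr_ae ?_
    filter_upwards [hRL] with x hx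
    rw [hx, mul_assoc]
  have hF := fourierI_eq_zero hα hvc (by
    rw [hQ, show Complex.exp (-(Real.pi * α / 2 : ℝ) * Complex.I) * (L * C * (-(N : ℂ))) =
      ((-(C * N) : ℝ) : ℂ) * (Complex.exp (-(Real.pi * α / 2 : ℝ) * Complex.I) * L) by
        push_cast; ring, Complex.re_ofReal_mul]
    exact mul_nonpos_of_nonpos_of_nonneg (by simpa using by positivity)
      (re_phase_nonneg hα h0 h1))
  have hv0 := eq_zero_of_fourier_eq_zero hvc hF
  have h2 := h_int 1 ⟨zero_le_one, le_rfl⟩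
  have h3 : ∫ t in (0:ℝ)..1, v t = 0 := by
    rw [intervalIntegral.integral_of_le zero_le_one, integral_Ioc_eq_integral_Ioo]
    exact setIntegral_eq_zero_of_forall_eq_zero hv0
  rw [h3, hφ1] at h2
  simp at h2

/-- The homogeneous solution (the Mittag-Leffler function `E_{α+1}`) does not vanish at `1` for
parameters in the sector. -/
lemma solution_ne_zero {α : ℝ} (hα : α ∈ Ioo (0:ℝ) 1) {L : ℂ}
    (h1 : |L.arg| ≤ Real.pi * (α + 1) / 2) {φ : ℝ → ℂ} (hc : Continuous φ)
    (hb : ∃ M, ∀ x, ‖φ x‖ ≤ M)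
    (hφ : ∀ x ∈ Icc (0:ℝ) 1, φ x = 1 + L * ((α⁻¹ : ℝ) : ℂ) * RL (α + 1) φ x) : φ 1 ≠ 0 := by
  rcases le_total 0 L.arg with h | h
  · exact solution_ne_zero_of_arg_nonneg hα h ((le_abs_self _).trans h1) hc hb hφ
  · -- complex conjugation reflects the sector in the real axis
    have harg : (star L).arg = -L.arg := by
      rw [Complex.star_def, Complex.arg_conj, if_neg]
      intro h2
      linarith [Real.pi_pos]
    have := solution_ne_zero_of_arg_nonneg hα (L := star L) (φ := fun x => star (φ x))
      (by rw [harg]; linarith) (by rw [harg]; exact (neg_le_abs _).trans h1)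
      (continuous_star.comp hc) (by simpa using hb) (fun x hx => by
        rw [hφ x hx, star_add, star_mul', star_mul', star_one, RL, RL]
        simp only [Complex.star_def, Complex.conj_ofReal]
        congr 2
        rw [← intervalIntegral.intervalIntegral_conj]
        simp)
    simpa using this

lemma RL_sub_smul {b : ℝ} (hb : 0 < b) (lam : ℂ) {f g : ℝ → ℂ} (hf : IntegrableOn f (Ioc 0 1))
    (hg : IntegrableOn g (Ioc 0 1)) {x : ℝ} (hx : x ∈ Icc (0:ℝ) 1) :
    RL (b + 1) (fun t => lam * f t - g t) x = lam * RL (b + 1) f x - RL (b + 1) g x := by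
  have key : ∀ f : ℝ → ℂ, IntegrableOn f (Ioc 0 1) →
      IntervalIntegrable (fun p => (((x - p) ^ (b + 1 - 1) : ℝ) : ℂ) * f p) volume 0 x := by
    intro f hf
    have h1 : IntervalIntegrable f volume 0 x := by
      rw [intervalIntegrable_iff_integrableOn_Ioc_of_le hx.1]
      exact hf.mono_set (Ioc_subset_Ioc_right hx.2)
    refine h1.continuousOn_mul (Continuous.continuousOn ?_)
    rw [add_sub_cancel_right]
    exact (continuous_rpow_sub hb).comp (by fun_prop : Continuous fun p : ℝ => (x, p))
  rw [RL, RL, RL, ← intervalIntegral.integral_const_mul,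
    ← intervalIntegral.integral_sub ((key f hf).const_mul lam) (key g hg)]
  refine intervalIntegral.integral_congr fun p _ => ?_
  ring

lemma SqIntOn.memLp_s4 {g : ℝ → ℂ} (hg : SqIntOn g) : MemLp g 2 μ₁ :=
  (memLp_two_iff_integrable_sq_norm hg.1).2 hg.2

lemma SqIntOn.of_memLp {g : ℝ → ℂ} (hg : MemLp g 2 μ₁) : SqIntOn g :=
  ⟨hg.1, (memLp_two_iff_integrable_sq_norm hg.1).1 hg⟩

/-! ### Surjectivity -/

/-- surjectivity of (lam I - (d/dx)D^a) for lam in the sector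
where lam = 0 or |arg lam| <= pi (a+1)/2. -/
theorem statement_4 (α : ℝ) (hα : α ∈ Set.Ioo (0:ℝ) 1) (lam : ℂ)
    (hlam : lam = 0 ∨ |lam.arg| ≤ Real.pi * (α + 1) / 2) :
    ∀ g : ℝ → ℂ, SqIntOn g →
      ∃ u w : ℝ → ℂ, InGraphA α u w ∧
        ∀ᵐ x ∂(MeasureTheory.volume.restrict (Set.Ioc (0:ℝ) 1)),
          lam * u x - w x = g x := by
  intro g hg
  have hΓ := Real.Gamma_pos_of_pos hα.1
  set G : ℝ := (Real.Gamma α)⁻¹ with hG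
  have hG0 : 0 < G := inv_pos.2 hΓ
  have hgi : IntegrableOn g (Ioc 0 1) := hg.memLp_s4.integrable one_le_two
  set L : ℂ := (G : ℂ) * lam with hL
  have hLarg : |L.arg| ≤ Real.pi * (α + 1) / 2 := by
    rw [hL, Complex.arg_real_mul _ hG0]
    rcases hlam with h | h
    · rw [h, Complex.arg_zero, abs_zero]
      nlinarith [Real.pi_pos, hα.1]
    · exact h
  -- `φ` solves the homogeneous problem with value `1` at `0`; `-ψ` is the particular solution
  -- with value `0` at `0`
  obtain ⟨φ, hφc, hφb, hφ⟩ := exists_volterra hα.1 (L * ((α⁻¹ : ℝ) : ℂ))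
    (h := fun _ => 1) continuousOn_const
  have hprim : ContinuousOn (fun x => (G : ℂ) * ∫ t in (0:ℝ)..x, RL α g t) (Icc 0 1) := by
    refine continuousOn_const.mul ?_
    have := intervalIntegral.continuousOn_primitive_interval' (intervalIntegrable_RL hα.1 hgi)
      left_mem_uIcc
    rwa [uIcc_of_le zero_le_one] at this
  obtain ⟨ψ, hψc, hψb, hψ⟩ := exists_volterra hα.1 (L * ((α⁻¹ : ℝ) : ℂ)) hprim
  have hφ1 : φ 1 ≠ 0 := solution_ne_zero hα hLarg hφc hφb hφ
  -- this choice of the initial value `u 0 = c` makes `u 1 = 0`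
  set c : ℂ := ψ 1 / φ 1 with hc
  set u : ℝ → ℂ := fun x => c * φ x - ψ x with hu
  set w : ℝ → ℂ := fun x => lam * u x - g x with hw
  have huc : Continuous u := (continuous_const.mul hφc).sub hψc
  have h_int : ∀ {f : ℝ → ℂ}, Continuous f → IntegrableOn f (Ioc 0 1) := fun hf =>
    (hf.integrableOn_Icc (a := 0) (b := 1)).mono_set Ioc_subset_Icc_self
  have hub : ∃ M, ∀ x, ‖u x‖ ≤ M := by
    obtain ⟨A, hA⟩ := hφb
    obtain ⟨B, hB⟩ := hψb
    refine ⟨‖c‖ * A + B, fun x => (norm_sub_le _ _).trans ?_⟩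
    rw [norm_mul]
    gcongr
    exacts [hA x, hB x]
  have huL : MemLp u 2 μ₁ := by
    obtain ⟨M, hM⟩ := hub
    exact MemLp.of_bound huc.aestronglyMeasurable M (Eventually.of_forall hM)
  have hwL : MemLp w 2 μ₁ := (huL.const_mul lam).sub hg.memLp_s4
  have hwi : IntegrableOn w (Ioc 0 1) := hwL.integrable one_le_two
  have hfrac : fracInt α w = fun x => (G : ℂ) * RL α w x := by
    ext x
    rw [fracInt, if_neg hα.1.ne', Complex.real_smul]
    rfl
  have hrep : ∀ x ∈ Icc (0:ℝ) 1, u x = c + ∫ t in (0:ℝ)..x, fracInt α w t := fun x hx => by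
    have e1 : RL (α + 1) u x = c * RL (α + 1) φ x - RL (α + 1) ψ x :=
      RL_sub_smul hα.1 c (h_int hφc) (h_int hψc) hx
    have e2 : RL (α + 1) w x = lam * RL (α + 1) u x - RL (α + 1) g x :=
      RL_sub_smul hα.1 lam (h_int huc) hgi hx
    have e3 : ∫ t in (0:ℝ)..x, fracInt α w t = (G : ℂ) * (((α⁻¹ : ℝ) : ℂ) * RL (α + 1) w x) := by
      rw [hfrac, intervalIntegral.integral_const_mul, RL_one_RL hα.1 hwi hx]
    have e4 := hψ x hx
    rw [RL_one_RL hα.1 hgi hx] at e4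
    rw [e3, e2, e1]
    simp only [hu]
    rw [hφ x hx, e4, hL]
    ring
  have hu0 : u 0 = c := by
    rw [hrep 0 ⟨le_rfl, zero_le_one⟩, intervalIntegral.integral_same, add_zero]
  refine ⟨u, w, ⟨?_, SqIntOn.of_memLp hwL, ?_, ?_⟩, Eventually.of_forall fun x => ?_⟩
  · simp only [hu, hc]
    rw [div_mul_cancel₀ _ hφ1, sub_self]
  · rw [hfrac]
    exact (intervalIntegrable_RL hα.1 hwi).const_mul _
  · rw [hu0]
    exact hrep
  · simp only [hw]
    ring
end
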